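/- arXiv:2509.05055 — 4 statements merged into one kernel-verified Lean document; each statement's English description precedes it below -/
import Mathlib

section
/- Let Δ ≥ 1 and w ≥ 1 be integers and let G be a digraph with maximum degree at most Δ and graded bandwidth at most w. Then r⃗(G) ≤ 3^(57Δw) · |V(G)|. -/
/-- A tournament: a digraph in which every pair of distinct vertices is joined
by an edge in exactly one direction, and there are no loops. -/
def Digraph.IsTournament {V : Type*} (T : Digraph V) : Prop :=
  (∀ v : V, ¬ T.Adj v v) ∧ ∀ u v : V, u ≠ v → (T.Adj u v ↔ ¬ T.Adj v u)

/-- `T` contains a copy of `G`: an injective map preserving directed edges. -/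
def Digraph.ContainsCopy {V W : Type*} (T : Digraph W) (G : Digraph V) : Prop :=
  ∃ φ : V → W, Function.Injective φ ∧ ∀ u v : V, G.Adj u v → T.Adj (φ u) (φ v)

/-- The oriented Ramsey number of `G`: the least `N` such that every tournament on `N`
vertices contains a copy of `G`. -/
noncomputable def orientedRamsey {V : Type*} (G : Digraph V) : ℕ :=
  sInf {N : ℕ | ∀ T : Digraph (Fin N), T.IsTournament → T.ContainsCopy G}

/-- The degree of a vertex in the underlying undirected graph of a digraph. -/
noncomputable def Digraph.degree {V : Type*} (G : Digraph V) (v : V) : ℕ :=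
  Nat.card {u : V | G.Adj v u ∨ G.Adj u v}

/-- `G` has graded bandwidth at most `w`: its vertices can be assigned levels so that
every edge goes from a level `i` to a level `j` with `1 ≤ j - i ≤ w`. -/
def Digraph.GradedBandwidthAtMost {V : Type*} (G : Digraph V) (w : ℕ) : Prop :=
  ∃ f : V → ℕ, ∀ u v : V, G.Adj u v → f u + 1 ≤ f v ∧ f v ≤ f u + w

/-!
Order the tournament by a median order, so that every vertex dominates at least half of each
interval following it. If `P` is dense in an interval, then one of the next few intervals, `Y`,
receives a third of the pairs in `P × Y`. By dependent random choice, a large subset of `P` has few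
`2Δw`-tuples with few common out-neighbours in `Y`. Passing `w` times to the common
out-neighbourhood of a suitable `2Δ`-tuple then yields `E 0 ⊇ ⋯ ⊇ E w` in `P` and a dense `Q ⊆ Y`
such that few partial `Δ`-tuples from `E (j + 1) ∪ Q` have few common in-neighbours in `E j`.
Iterating from `P` to `Q` along the order provides `w` host sets for each block of `w` consecutive
levels of `G`; an edge of `G` stays in its block or ends in the next one. The intervals must be
long compared with the number of vertices in their block, but their lengths may at most halve from
one block to the next, which is achieved by smoothing these numbers. All densities are powers of
`b = 3 ^ (Δ * w)`.

Finally, embed `G` greedily from the top level downwards. For each vertex `u` that is not yet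
embedded, the proportion of poor images of its out-neighbourhood is at most `β` initially, and
Markov's inequality allows every new image to multiply it by at most `M`. As `β * M ^ Δ < 1`, the
out-neighbourhood is not poor when the turn of `u` comes, and `u` has many possible images.
-/

namespace OrientedRamsey

open Finset

section Counting

variable {α β ι : Type*}

open scoped Classical in
/-- The neighbourhood of `a` in `D` with respect to the relation `R`. Out-neighbourhoods are
`nbrs R` and in-neighbourhoods `nbrs (flip R)`. -/
noncomputable def nbrs (R : α → β → Prop) (a : α) (D : Finset β) : Finset β :=
  {b ∈ D | R a b}

open scoped Classical in
/-- The common neighbourhood in `D` of a family `S`, with respect to the relation `R`. -/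
noncomputable def commonNbrs (R : α → β → Prop) (S : ι → α) (D : Finset β) : Finset β :=
  {b ∈ D | ∀ i, R (S i) b}

/-- The `q`-tuples of elements of `D`. -/
abbrev tuples (D : Finset α) (q : ℕ) : Finset (Fin q → α) :=
  Fintype.piFinset fun _ => D

@[simp]
theorem mem_nbrs {R : α → β → Prop} {a : α} {D : Finset β} {b : β} :
    b ∈ nbrs R a D ↔ b ∈ D ∧ R a b := by
  simp [nbrs]

theorem card_nbrs_univ [Fintype β] (R : α → β → Prop) (a : α) :
    #(nbrs R a univ) = Nat.card {b | R a b} := by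
  classical
  rw [Set.coe_ofPred, Nat.card_eq_fintype_card, Fintype.card_subtype]
  exact congrArg card (ext fun b => by simp)

@[simp]
theorem mem_commonNbrs {R : α → β → Prop} {S : ι → α} {D : Finset β} {b : β} :
    b ∈ commonNbrs R S D ↔ b ∈ D ∧ ∀ i, R (S i) b := by
  simp [commonNbrs]

theorem commonNbrs_subset (R : α → β → Prop) (S : ι → α) (D : Finset β) :
    commonNbrs R S D ⊆ D := fun _ hb => (mem_commonNbrs.1 hb).1

theorem commonNbrs_mono (R : α → β → Prop) (S : ι → α) {D D' : Finset β} (h : D ⊆ D') :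
    commonNbrs R S D ⊆ commonNbrs R S D' := fun _ hb =>
  mem_commonNbrs.2 ⟨h (mem_commonNbrs.1 hb).1, (mem_commonNbrs.1 hb).2⟩

theorem sum_tuples_sum_commonNbrs (R : β → α → Prop) (D : Finset β) (A : Finset α) (q : ℕ)
    (f : α → ℝ) :
    ∑ S ∈ tuples D q, ∑ a ∈ commonNbrs R S A, f a =
      ∑ a ∈ A, (#(nbrs (flip R) a D) : ℝ) ^ q * f a := by
  rw [sum_comm' (t' := A) (s' := fun a => tuples (nbrs (flip R) a D) q)]
  · simp
  · simp only [Fintype.mem_piFinset, mem_commonNbrs, mem_nbrs, flip, forall_and]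
    tauto

theorem sum_tuples_card_commonNbrs (R : β → α → Prop) (D : Finset β) (A : Finset α) (q : ℕ) :
    ∑ S ∈ tuples D q, (#(commonNbrs R S A) : ℝ) = ∑ a ∈ A, (#(nbrs (flip R) a D) : ℝ) ^ q := by
  simpa using sum_tuples_sum_commonNbrs R D A q fun _ => 1

theorem pow_mul_card_le_sum_pow {s : Finset α} {f : α → ℝ} (hf : ∀ a ∈ s, 0 ≤ f a) {c : ℝ}
    (hc : 0 ≤ c) (h : c * #s ≤ ∑ a ∈ s, f a) (n : ℕ) : c ^ n * #s ≤ ∑ a ∈ s, f a ^ n := by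
  obtain rfl | hs := s.eq_empty_or_nonempty
  · simp
  cases n with
  | zero => simp
  | succ n =>
    have : (0 : ℝ) < #s := mod_cast hs.card_pos
    refine le_trans ?_ (pow_sum_div_card_le_sum_pow hf n)
    rw [le_div_iff₀ (by positivity)]
    calc c ^ (n + 1) * #s * (#s : ℝ) ^ n = (c * #s) ^ (n + 1) := by ring
      _ ≤ _ := by gcongr

end Counting

section DependentRandomChoice

variable {α β : Type*} {P : Finset α} {Y : Finset β}

/-- The `m`-tuples of elements of `P` with fewer than `θ` common neighbours in `Y`. -/
noncomputable def poorTuples (R : α → β → Prop) (P : Finset α) (Y : Finset β) (θ : ℝ) (m : ℕ) :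
    Finset (Fin m → α) :=
  {S ∈ tuples P m | (#(commonNbrs R S Y) : ℝ) < θ}

theorem poorTuples_commonNbrs (R : α → β → Prop) (P : Finset α) (Y : Finset β) (θ : ℝ) (m : ℕ)
    {q : ℕ} (z : Fin q → β) :
    poorTuples R (commonNbrs (flip R) z P) Y θ m =
      commonNbrs (fun v (S : Fin m → α) => ∀ i, R (S i) v) z (poorTuples R P Y θ m) := by
  ext S
  simp only [poorTuples, mem_filter, Fintype.mem_piFinset, mem_commonNbrs, flip, forall_and]
  rw [forall_comm (p := fun i j => R (S i) (z j))]
  tauto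

theorem sum_sum_poorTuples_le (R : α → β → Prop) (P : Finset α) (Y : Finset β) {θ : ℝ}
    (hθ : 0 ≤ θ) (m q : ℕ) {g : α → ℝ} (hg : ∀ a, 0 ≤ g a) :
    ∑ z ∈ tuples Y q, ∑ S ∈ poorTuples R (commonNbrs (flip R) z P) Y θ m, ∏ i, g (S i) ≤
      θ ^ q * (∑ a ∈ P, g a) ^ m := by
  have nbrs_eq (S : Fin m → α) :
      nbrs (flip fun v (S : Fin m → α) => ∀ i, R (S i) v) S Y = commonNbrs R S Y := by
    ext
    simp [flip]
  simp_rw [poorTuples_commonNbrs, sum_tuples_sum_commonNbrs, nbrs_eq]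
  calc ∑ S ∈ poorTuples R P Y θ m, (#(commonNbrs R S Y) : ℝ) ^ q * ∏ i, g (S i)
      ≤ ∑ S ∈ poorTuples R P Y θ m, θ ^ q * ∏ i, g (S i) := by
        gcongr with S hS
        · exact prod_nonneg fun i _ => hg _
        · exact (mem_filter.1 hS).2.le
    _ ≤ ∑ S ∈ tuples P m, θ ^ q * ∏ i, g (S i) :=
        sum_le_sum_of_subset_of_nonneg (filter_subset _ _) fun S _ _ =>
          mul_nonneg (by positivity) (prod_nonneg fun i _ => hg _)
    _ = θ ^ q * (∑ a ∈ P, g a) ^ m := by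
        rw [← mul_sum, sum_prod_piFinset, prod_const, card_univ, Fintype.card_fin]

theorem sum_card_poorTuples_le (R : α → β → Prop) (P : Finset α) (Y : Finset β) {θ : ℝ}
    (hθ : 0 ≤ θ) (m q : ℕ) :
    ∑ z ∈ tuples Y q, (#(poorTuples R (commonNbrs (flip R) z P) Y θ m) : ℝ) ≤
      θ ^ q * #P ^ m := by
  simpa using sum_sum_poorTuples_le R P Y hθ m q (g := fun _ => 1) fun _ => zero_le_one

theorem le_sum_card_commonNbrs_pow (R : α → β → Prop) {d : ℝ} (hd : 0 ≤ d)
    (hdens : d * #P * #Y ≤ ∑ x ∈ P, (#(nbrs R x Y) : ℝ)) (q m : ℕ) :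
    d ^ (q * m) * #P ^ m * #Y ^ q ≤
      ∑ z ∈ tuples Y q, (#(commonNbrs (flip R) z P) : ℝ) ^ m := by
  have card_tuples : (#(tuples Y q) : ℝ) = #Y ^ q := by simp
  have mean_card : d ^ q * #P * #(tuples Y q) ≤
      ∑ z ∈ tuples Y q, (#(commonNbrs (flip R) z P) : ℝ) := by
    rw [sum_tuples_card_commonNbrs, card_tuples]
    calc d ^ q * #P * #Y ^ q = (d * #Y) ^ q * #P := by ring
      _ ≤ _ := pow_mul_card_le_sum_pow (fun _ _ => by positivity) (by positivity)
        (by rw [flip_flip]; linarith) q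
  calc d ^ (q * m) * #P ^ m * #Y ^ q = (d ^ q * #P) ^ m * #(tuples Y q) := by
        rw [card_tuples]; ring
    _ ≤ _ := pow_mul_card_le_sum_pow (fun _ _ => by positivity) (by positivity) mean_card m

theorem exists_subset_card_poorTuples_le (R : α → β → Prop) (hY : Y.Nonempty) {d y K : ℝ}
    (hd : 0 ≤ d) (hy : 0 ≤ y) (hK : 0 ≤ K)
    (hdens : d * #P * #Y ≤ ∑ x ∈ P, (#(nbrs R x Y) : ℝ)) {q m : ℕ} (hm : m ≠ 0)
    (hKy : 2 * K * y ^ q ≤ d ^ (q * m)) :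
    ∃ P' ⊆ P, d ^ q * #P ≤ 2 * #P' ∧
      K * #(poorTuples R P' Y (y * #Y) m) ≤ (#P' : ℝ) ^ m := by
  set common : (Fin q → β) → Finset α := fun z => commonNbrs (flip R) z P
  obtain ⟨z, -, hz⟩ : ∃ z ∈ tuples Y q, d ^ (q * m) * #P ^ m / 2 +
      K * #(poorTuples R (common z) Y (y * #Y) m) ≤ (#(common z) : ℝ) ^ m := by
    refine exists_le_of_sum_le (Fintype.piFinset_nonempty.2 fun _ => hY) ?_
    rw [sum_add_distrib, ← mul_sum, sum_const, Fintype.card_piFinset_const, nsmul_eq_mul,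
      Nat.cast_pow]
    have poor := mul_le_mul_of_nonneg_left
      (sum_card_poorTuples_le R P Y (θ := y * #Y) (by positivity) m q) hK
    have rich := le_sum_card_commonNbrs_pow R hd hdens q m
    have few := mul_le_mul_of_nonneg_right hKy (by positivity : (0 : ℝ) ≤ #P ^ m * #Y ^ q)
    linear_combination poor + rich + few / 2
  refine ⟨common z, commonNbrs_subset _ _ _, ?_, ?_⟩
  · have hpow : (d ^ q * #P / 2) ^ m ≤ (#(common z) : ℝ) ^ m := by
      calc (d ^ q * #P / 2) ^ m = d ^ (q * m) * #P ^ m * (1 / 2) ^ m := by ring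
        _ ≤ d ^ (q * m) * #P ^ m * (1 / 2) := by
          gcongr
          exact pow_le_of_le_one (by norm_num) (by norm_num) hm
        _ ≤ (#(common z) : ℝ) ^ m := by
          have : 0 ≤ K * #(poorTuples R (common z) Y (y * #Y) m) := by positivity
          linarith
    linarith [le_of_pow_le_pow_left₀ hm (by positivity) hpow]
  · have : 0 ≤ d ^ (q * m) * #P ^ m / 2 := by positivity
    linarith

end DependentRandomChoice

section BadWeight

variable {W : Type*} {R : W → W → Prop} {μ : W → ℝ}

/-- `y` is an in-neighbour of the entry `o` of a partial tuple; an absent entry imposes no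
condition. -/
def IsInNbr (R : W → W → Prop) (o : Option W) (y : W) : Prop :=
  ∀ a ∈ o, R y a

/-- The total weight of the partial `Δ`-tuples of elements of `A` having fewer than `x * #D` common
in-neighbours in `D`. Partial tuples are tuples with entries in `Option W`, and their weight is the
product of the weights `μ` of their entries. -/
noncomputable def badWeight (R : W → W → Prop) (μ : W → ℝ) (Δ : ℕ) (x : ℝ) (D A : Finset W) : ℝ :=
  ∑ ψ ∈ poorTuples (IsInNbr R) (insertNone A) D (x * #D) Δ, ∏ i, (ψ i).elim 1 μ

theorem prod_elim_nonneg (hμ : ∀ a, 0 ≤ μ a) {ι : Type*} [Fintype ι] (ψ : ι → Option W) :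
    0 ≤ ∏ i, (ψ i).elim 1 μ :=
  prod_nonneg fun i _ => by cases ψ i <;> simp [hμ]

theorem badWeight_nonneg (hμ : ∀ a, 0 ≤ μ a) (Δ : ℕ) (x : ℝ) (D A : Finset W) :
    0 ≤ badWeight R μ Δ x D A :=
  sum_nonneg fun ψ _ => prod_elim_nonneg hμ ψ

theorem badWeight_mono (hμ : ∀ a, 0 ≤ μ a) (Δ : ℕ) (x : ℝ) (D : Finset W) {A A' : Finset W}
    (h : A ⊆ A') : badWeight R μ Δ x D A ≤ badWeight R μ Δ x D A' := by
  refine sum_le_sum_of_subset_of_nonneg (filter_subset_filter _ ?_) fun ψ _ _ =>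
    prod_elim_nonneg hμ ψ
  exact Fintype.piFinset_subset _ _ fun _ => insertNone.monotone h

theorem insertNone_commonNbrs (R : W → W → Prop) {p : ℕ} (S : Fin p → W) (U : Finset W) :
    insertNone (commonNbrs R S U) = commonNbrs (flip (IsInNbr R)) S (insertNone U) := by
  ext (_ | a) <;> simp [IsInNbr, flip]

theorem sum_badWeight_le (R : W → W → Prop) (hμ : ∀ a, 0 ≤ μ a) {x : ℝ} (hx : 0 ≤ x)
    (D U : Finset W) (Δ p : ℕ) :
    ∑ S ∈ tuples D p, badWeight R μ Δ x D (commonNbrs R S U) ≤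
      (x * #D) ^ p * (1 + ∑ a ∈ U, μ a) ^ Δ := by
  simp_rw [badWeight, insertNone_commonNbrs]
  refine (sum_sum_poorTuples_le (IsInNbr R) (insertNone U) D (by positivity) Δ p
    (g := fun o => o.elim 1 μ) ?_).trans_eq ?_
  · rintro (_ | a) <;> simp [hμ]
  · simp [sum_insertNone]

end BadWeight

section Chain

variable {W : Type*} {R : W → W → Prop} {μ : W → ℝ} {D P Y : Finset W} {θ x lam : ℝ}
  {Δ p : ℕ}

theorem commonNbrs_append (R : W → W → Prop) {s t : ℕ} (S : Fin s → W) (T : Fin t → W)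
    (Y : Finset W) :
    commonNbrs R (Fin.append S T) Y = commonNbrs R S (commonNbrs R T Y) := by
  ext
  simp only [mem_commonNbrs, Fin.forall_fin_add, Fin.append_left, Fin.append_right]
  tauto

theorem sum_card_poorTuples_commonNbrs_le (R : W → W → Prop) (hD : D ⊆ P) (Y : Finset W) (θ : ℝ)
    (t p : ℕ) :
    ∑ S ∈ tuples D p, #(poorTuples R P (commonNbrs R S Y) θ t) ≤
      #(poorTuples R P Y θ (t + p)) := by
  rw [← card_sigma]
  refine card_le_card_of_injOn (fun S => Fin.append S.2 S.1) ?_ ?_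
  · rintro ⟨S, T⟩ h
    simp only [poorTuples, coe_sigma, Set.mem_sigma_iff, mem_coe, mem_filter,
      Fintype.mem_piFinset, commonNbrs_append, Fin.forall_fin_add, Fin.append_left,
      Fin.append_right] at h ⊢
    exact ⟨⟨h.2.1, fun i => hD (h.1 i)⟩, h.2.2⟩
  · rintro ⟨S, T⟩ - ⟨S', T'⟩ - h
    obtain ⟨rfl, rfl⟩ := Prod.ext_iff.1 <|
      (Fin.appendEquiv t p).injective (a₁ := (T, S)) (a₂ := (T', S')) h
    rfl

theorem sum_card_nbrs_flip (R : W → W → Prop) (D : Finset W) :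
    ∑ y ∈ D, #(nbrs (flip R) y D) = ∑ y ∈ D, #(nbrs R y D) := by
  simp only [card_eq_sum_ones]
  refine sum_comm' ?_
  simp only [mem_nbrs, flip]
  tauto

theorem card_sq_le_three_mul_sum_card_nbrs (hD : 3 ≤ #D)
    (htot : (D : Set W).Pairwise fun y z => R y z ∨ R z y) :
    #D * #D ≤ 3 * ∑ y ∈ D, #(nbrs (flip R) y D) := by
  classical
  have card_le : ∀ y ∈ D, #D ≤ #(nbrs (flip R) y D) + #(nbrs R y D) + 1 := fun y hy => by
    refine (card_le_card fun z hz => ?_).trans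
      ((card_insert_le y _).trans (Nat.succ_le_succ (card_union_le _ _)))
    by_cases hzy : z = y
    · simp [hzy]
    · have := htot hz hy hzy
      simp [flip, hz, this]
  have sum_le := sum_le_sum card_le
  rw [sum_const, smul_eq_mul, sum_add_distrib, sum_add_distrib, sum_card_nbrs_flip, sum_const,
    smul_eq_mul, mul_one] at sum_le
  have : 3 * #D ≤ #D * #D := Nat.mul_le_mul_right _ hD
  rw [sum_card_nbrs_flip]
  lia

theorem exists_tuple_le_card_commonNbrs (hD : 3 ≤ #D)
    (htot : (D : Set W).Pairwise fun y z => R y z ∨ R z y) {h : (Fin p → W) → ℝ}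
    (hh : 2 * 3 ^ p * ∑ S ∈ tuples D p, h S ≤ #D ^ p) :
    ∃ S ∈ tuples D p, (1 / (2 * 3 ^ p) + h S) * #D ≤ #(commonNbrs R S D) := by
  have card_sq : (#D * #D : ℝ) ≤ 3 * ∑ y ∈ D, #(nbrs (flip R) y D) :=
    mod_cast card_sq_le_three_mul_sum_card_nbrs hD htot
  have power_mean := pow_mul_card_le_sum_pow (s := D)
    (fun y _ => Nat.cast_nonneg' #(nbrs (flip R) y D)) (c := #D / 3) (by positivity)
    (by push_cast at card_sq; linarith) p
  refine exists_le_of_sum_le (Fintype.piFinset_nonempty.2 fun _ => card_pos.1 (by lia)) ?_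
  rw [sum_tuples_card_commonNbrs, ← sum_mul, sum_add_distrib, sum_const,
    Fintype.card_piFinset_const, nsmul_eq_mul, Nat.cast_pow]
  refine le_trans ?_ power_mean
  gcongr
  rw [div_pow, le_div_iff₀ (by positivity)]
  field_simp
  linarith

theorem sum_card_poorTuples_mul_le (hD : D.Nonempty) (hDP : D ⊆ P) {t : ℕ} {Γ g : ℝ}
    (hΓ : 0 < Γ) (hg : 0 ≤ g) (hPD : 4 * 3 ^ p * (#P : ℝ) ^ p ≤ Γ * #D ^ p)
    (hpoor : #(poorTuples R P Y θ (t + p)) * (g * Γ) ≤ (#P : ℝ) ^ (t + p)) :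
    4 * 3 ^ p * ∑ S ∈ tuples D p, #(poorTuples R P (commonNbrs R S Y) θ t) * (g / #P ^ t) ≤
      (#D : ℝ) ^ p := by
  have hP : (0 : ℝ) < #P := mod_cast (hD.mono hDP).card_pos
  have sum_card : (∑ S ∈ tuples D p, #(poorTuples R P (commonNbrs R S Y) θ t) : ℝ) ≤
      #(poorTuples R P Y θ (t + p)) :=
    mod_cast sum_card_poorTuples_commonNbrs_le R hDP Y θ t p
  refine le_of_mul_le_mul_right ?_ (by positivity : (0 : ℝ) < Γ * #P ^ t)
  rw [← sum_mul]
  calc 4 * 3 ^ p * ((∑ S ∈ tuples D p, #(poorTuples R P (commonNbrs R S Y) θ t) : ℝ) *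
        (g / #P ^ t)) * (Γ * #P ^ t)
      = 4 * 3 ^ p * ((∑ S ∈ tuples D p, #(poorTuples R P (commonNbrs R S Y) θ t) : ℝ) *
        (g * Γ)) := by field_simp
    _ ≤ 4 * 3 ^ p * #P ^ (t + p) := by
      gcongr
      exact (mul_le_mul_of_nonneg_right sum_card (by positivity)).trans hpoor
    _ = 4 * 3 ^ p * #P ^ p * #P ^ t := by ring
    _ ≤ Γ * #D ^ p * #P ^ t := by gcongr
    _ = #D ^ p * (Γ * #P ^ t) := by ring

variable [DecidableEq W]

theorem sum_badWeight_div_le (hμ : ∀ a, 0 ≤ μ a) (hμ_sum : ∑ a ∈ D ∪ Y, μ a ≤ 2) (hx : 0 ≤ x)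
    (hlam : 0 < lam) (hxlam : 4 * 3 ^ p * (x ^ p * 3 ^ Δ) ≤ lam) :
    4 * 3 ^ p * ∑ S ∈ tuples D p, badWeight R μ Δ x D (commonNbrs R S (D ∪ Y)) / lam ≤ #D ^ p := by
  rw [← sum_div, mul_div_assoc', div_le_iff₀ hlam]
  calc 4 * 3 ^ p * ∑ S ∈ tuples D p, badWeight R μ Δ x D (commonNbrs R S (D ∪ Y))
      ≤ 4 * 3 ^ p * ((x * #D) ^ p * 3 ^ Δ) := by
        gcongr
        refine (sum_badWeight_le R hμ hx D (D ∪ Y) Δ p).trans ?_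
        have := sum_nonneg fun a (_ : a ∈ D ∪ Y) => hμ a
        gcongr
        linarith
    _ = #D ^ p * (4 * 3 ^ p * (x ^ p * 3 ^ Δ)) := by ring
    _ ≤ #D ^ p * lam := by gcongr

theorem exists_tuple_badWeight_le (hD : 3 ≤ #D)
    (htot : (D : Set W).Pairwise fun y z => R y z ∨ R z y) (hDP : D ⊆ P) (hμ : ∀ a, 0 ≤ μ a)
    (hμ_sum : ∑ a ∈ D ∪ Y, μ a ≤ 2) (hx : 0 ≤ x) (hlam : 0 < lam)
    (hxlam : 4 * 3 ^ p * (x ^ p * 3 ^ Δ) ≤ lam) {t : ℕ} {Γ g : ℝ} (hΓ : 0 < Γ) (hg : 0 < g)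
    (hPD : 4 * 3 ^ p * (#P : ℝ) ^ p ≤ Γ * #D ^ p)
    (hpoor : #(poorTuples R P Y θ (t + p)) * (g * Γ) < (#P : ℝ) ^ (t + p)) :
    ∃ S ∈ tuples D p, #D ≤ 2 * 3 ^ p * (#(commonNbrs R S D) : ℝ) ∧
      badWeight R μ Δ x D (commonNbrs R S (D ∪ Y)) ≤ lam ∧
      #(poorTuples R P (commonNbrs R S Y) θ t) * g < (#P : ℝ) ^ t := by
  have hD0 : (0 : ℝ) < #D := by exact_mod_cast (by lia : 0 < #D)
  have hP0 : (0 : ℝ) < #P := hD0.trans_le (mod_cast card_le_card hDP)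
  set bad : (Fin p → W) → ℝ := fun S => badWeight R μ Δ x D (commonNbrs R S (D ∪ Y)) / lam
  set poor : (Fin p → W) → ℝ :=
    fun S => #(poorTuples R P (commonNbrs R S Y) θ t) * (g / #P ^ t)
  have sum_bad : 4 * 3 ^ p * ∑ S ∈ tuples D p, bad S ≤ #D ^ p :=
    sum_badWeight_div_le hμ hμ_sum hx hlam hxlam
  have sum_poor : 4 * 3 ^ p * ∑ S ∈ tuples D p, poor S ≤ #D ^ p :=
    sum_card_poorTuples_mul_le (card_pos.1 (by lia)) hDP hΓ hg.le hPD hpoor.le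
  obtain ⟨S, hS, hcard⟩ := exists_tuple_le_card_commonNbrs hD htot (h := fun S => bad S + poor S)
    (by rw [sum_add_distrib]; linarith)
  have bad_nonneg : 0 ≤ bad S := div_nonneg (badWeight_nonneg hμ _ _ _ _) hlam.le
  have poor_nonneg : 0 ≤ poor S := by positivity
  have lt_one : bad S + poor S < 1 := by
    have : 1 / (2 * 3 ^ p) + (bad S + poor S) ≤ 1 :=
      le_of_mul_le_mul_right (hcard.trans (by
        rw [one_mul]
        exact_mod_cast card_le_card (commonNbrs_subset _ _ _))) hD0
    have : (0 : ℝ) < 1 / (2 * 3 ^ p) := by positivity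
    linarith
  refine ⟨S, hS, ?_, ?_, ?_⟩
  · rw [← div_le_iff₀' (by positivity)]
    refine le_trans ?_ hcard
    rw [div_eq_mul_one_div, mul_comm]
    gcongr
    linarith
  · exact ((div_lt_one hlam).1 (by linarith : bad S < 1)).le
  · rw [← div_lt_one (by positivity), ← mul_div_assoc']
    exact (by linarith : poor S < 1)

/-- A nest of vertex sets, decreasing and of size at least `m`, in which the partial tuples of
members of `E (j + 1) ∪ Q` with few common in-neighbours in `E j` have total weight at most `lam`,
for every `j < t`. -/
structure IsNest (R : W → W → Prop) (μ : W → ℝ) (Δ : ℕ) (x lam : ℝ) (t : ℕ) (m : ℝ)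
    (E : ℕ → Finset W) (Q : Finset W) : Prop where
  antitone : Antitone E
  le_card (j : ℕ) : m ≤ #(E j)
  badWeight_le (j : ℕ) (hj : j < t) : badWeight R μ Δ x (E j) (E (j + 1) ∪ Q) ≤ lam

theorem IsNest.cons {t : ℕ} {m : ℝ} {E : ℕ → Finset W} {Q : Finset W}
    (hE : IsNest R μ Δ x lam t m E Q) (hED : E 0 ⊆ D) (hD : m ≤ #D)
    (hlam : badWeight R μ Δ x D (E 0 ∪ Q) ≤ lam) :
    IsNest R μ Δ x lam (t + 1) m (fun j => Nat.casesOn j D E) Q where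
  antitone := antitone_nat_of_succ_le fun j => by
    cases j with
    | zero => exact hED
    | succ j => exact hE.antitone j.le_succ
  le_card j := by
    cases j with
    | zero => exact hD
    | succ j => exact hE.le_card j
  badWeight_le j hj := by
    cases j with
    | zero => exact hlam
    | succ j => exact hE.badWeight_le j (by lia)

theorem exists_isNest (htot : (P : Set W).Pairwise fun y z => R y z ∨ R z y)
    (hμ : ∀ a, 0 ≤ μ a) (hμ_sum : ∀ A : Finset W, ∑ a ∈ A, μ a ≤ 2) (hx : 0 ≤ x) (hlam : 0 < lam)
    (hxlam : 4 * 3 ^ p * (x ^ p * 3 ^ Δ) ≤ lam) {Γ m : ℝ} (hΓ : 0 < Γ) (hm : 3 ≤ m)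
    (hPm : 4 * 3 ^ p * (#P : ℝ) ^ p ≤ Γ * m ^ p) (t : ℕ) :
    ∀ D Y : Finset W, D ⊆ P → (2 * 3 ^ p) ^ t * m ≤ #D →
      #(poorTuples R P Y θ (p * t)) * Γ ^ t < (#P : ℝ) ^ (p * t) →
      ∃ E Q, E 0 = D ∧ Q ⊆ Y ∧ θ ≤ #Q ∧ IsNest R μ Δ x lam t m E Q := by
  induction t with
  | zero =>
    intro D Y _ hmD hpoor
    refine ⟨fun _ => D, Y, rfl, subset_rfl, ?_, fun _ _ _ => subset_rfl, ?_, by lia⟩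
    · contrapose! hpoor
      simp [poorTuples, commonNbrs, hpoor]
    · simpa using hmD
  | succ t ih =>
    intro D Y hDP hmD hpoor
    have hmD' : m ≤ #D := by
      refine le_trans (le_mul_of_one_le_left (by linarith) (one_le_pow₀ ?_)) hmD
      linarith [one_le_pow₀ (by norm_num : (1 : ℝ) ≤ 3) (n := p)]
    have hD3 : 3 ≤ #D := mod_cast hm.trans hmD'
    obtain ⟨S, -, hSD, hSbad, hSpoor⟩ := exists_tuple_badWeight_le (t := p * t) hD3
      (htot.mono (mod_cast hDP)) hDP hμ (hμ_sum _) hx hlam hxlam hΓ (pow_pos hΓ t)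
      (hPm.trans (by gcongr)) hpoor
    have common_sub : commonNbrs R S D ⊆ D := commonNbrs_subset R S D
    have hSD' : (2 * 3 ^ p) ^ t * m ≤ #(commonNbrs R S D) := by
      refine le_of_mul_le_mul_left ?_ (by positivity : (0 : ℝ) < 2 * 3 ^ p)
      rw [← mul_assoc, ← pow_succ']
      exact hmD.trans hSD
    obtain ⟨E, Q, hE0, hQ, hθ, hE⟩ := ih (commonNbrs R S D) (commonNbrs R S Y)
      (common_sub.trans hDP) hSD' hSpoor
    refine ⟨_, Q, rfl, hQ.trans (commonNbrs_subset R S Y), hθ,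
      hE.cons (hE0.trans_subset common_sub) hmD' ((badWeight_mono hμ _ _ _ ?_).trans hSbad)⟩
    rw [hE0]
    exact union_subset (commonNbrs_mono R S subset_union_left)
      (hQ.trans (commonNbrs_mono R S subset_union_right))

end Chain

section PartialTuples

variable {W ι : Type*} {R : W → W → Prop} {μ : W → ℝ} {Δ : ℕ}

/-- The partial tuple with entries `ψ` at the positions in the range of `e`. -/
noncomputable def partialTuple (e : ι ↪ Fin Δ) (ψ : ι → W) : Fin Δ → Option W :=
  Function.extend e (some ∘ ψ) fun _ => none

theorem partialTuple_apply (e : ι ↪ Fin Δ) (ψ : ι → W) (c : ι) :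
    partialTuple e ψ (e c) = some (ψ c) :=
  e.injective.extend_apply _ _ _

theorem partialTuple_of_notMem_range (e : ι ↪ Fin Δ) (ψ : ι → W) {i : Fin Δ}
    (hi : i ∉ Set.range e) : partialTuple e ψ i = none :=
  Function.extend_apply' _ _ _ hi

theorem partialTuple_injective (e : ι ↪ Fin Δ) :
    Function.Injective (partialTuple e : (ι → W) → Fin Δ → Option W) := fun ψ ψ' h =>
  funext fun c => Option.some_injective _ <| by
    simpa only [partialTuple_apply] using congrFun h (e c)

theorem forall_mem_partialTuple_iff (e : ι ↪ Fin Δ) {ψ : ι → W} {q : W → Prop} :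
    (∀ i, ∀ a ∈ partialTuple e ψ i, q a) ↔ ∀ c, q (ψ c) := by
  refine ⟨fun h c => h (e c) _ (partialTuple_apply e ψ c), fun h i a ha => ?_⟩
  by_cases hi : i ∈ Set.range e
  · obtain ⟨c, rfl⟩ := hi
    rw [partialTuple_apply, Option.mem_some_iff] at ha
    exact ha ▸ h c
  · simp [partialTuple_of_notMem_range e ψ hi] at ha

theorem commonNbrs_partialTuple (R : W → W → Prop) (e : ι ↪ Fin Δ) (ψ : ι → W) (D : Finset W) :
    commonNbrs (IsInNbr R) (partialTuple e ψ) D = commonNbrs (flip R) ψ D := by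
  ext y
  simp only [mem_commonNbrs, IsInNbr, forall_mem_partialTuple_iff e (q := R y), flip]

theorem partialTuple_mem_tuples (e : ι ↪ Fin Δ) {ψ : ι → W} {A : Finset W} (h : ∀ c, ψ c ∈ A) :
    partialTuple e ψ ∈ tuples (insertNone A) Δ :=
  Fintype.mem_piFinset.2 fun i => mem_insertNone.2 ((forall_mem_partialTuple_iff e).2 h i)

variable [Fintype ι]

theorem prod_partialTuple (e : ι ↪ Fin Δ) (ψ : ι → W) :
    ∏ i, (partialTuple e ψ i).elim 1 μ = ∏ c, μ (ψ c) :=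
  (Fintype.prod_of_injective e e.injective _ _
    (fun i hi => by simp [partialTuple_of_notMem_range e ψ hi])
    fun c => by simp [partialTuple_apply]).symm

theorem sum_prod_le_badWeight [DecidableEq ι] (hμ : ∀ a, 0 ≤ μ a) (e : ι ↪ Fin Δ)
    {X : ι → Finset W} {D A : Finset W} (hX : ∀ c, X c ⊆ A) (x : ℝ) :
    ∑ ψ ∈ Fintype.piFinset X with (#(commonNbrs (flip R) ψ D) : ℝ) < x * #D, ∏ c, μ (ψ c) ≤
      badWeight R μ Δ x D A := by
  classical
  simp_rw [← prod_partialTuple e]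
  rw [← sum_image (f := fun Ψ : Fin Δ → Option W => ∏ i, (Ψ i).elim 1 μ)
    (partialTuple_injective e).injOn]
  refine sum_le_sum_of_subset_of_nonneg ?_ fun ψ _ _ => prod_elim_nonneg hμ ψ
  simp only [image_subset_iff, poorTuples, mem_filter, Fintype.mem_piFinset,
    commonNbrs_partialTuple]
  exact fun ψ hψ => ⟨Fintype.mem_piFinset.1 <|
    partialTuple_mem_tuples e fun c => hX c (hψ.1 c), hψ.2⟩

theorem card_filter_le_badWeight [DecidableEq ι] (hμ : ∀ a, 0 ≤ μ a) (hι : Fintype.card ι ≤ Δ)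
    {X : ι → Finset W} {D A : Finset W} (hXA : ∀ c, X c ⊆ A) {ρ : ℝ} (hρ : 1 ≤ ρ)
    (hμX : ∀ c, ∀ a ∈ X c, 1 ≤ ρ * #(X c) * μ a) (x : ℝ) :
    (#{ψ ∈ Fintype.piFinset X | (#(commonNbrs (flip R) ψ D) : ℝ) < x * #D} : ℝ) ≤
      badWeight R μ Δ x D A * ρ ^ Δ * ∏ c, (#(X c) : ℝ) := by
  obtain ⟨e⟩ : Nonempty (ι ↪ Fin Δ) :=
    Function.Embedding.nonempty_of_card_le (hι.trans_eq (Fintype.card_fin Δ).symm)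
  set B := {ψ ∈ Fintype.piFinset X | (#(commonNbrs (flip R) ψ D) : ℝ) < x * #D}
  calc (#B : ℝ) = ∑ ψ ∈ B, 1 := by simp
    _ ≤ ∑ ψ ∈ B, ∏ c, (ρ * #(X c) * μ (ψ c)) := by
      gcongr with ψ hψ
      exact one_le_prod fun c _ => hμX c _ (Fintype.mem_piFinset.1 (mem_filter.1 hψ).1 c)
    _ = (∑ ψ ∈ B, ∏ c, μ (ψ c)) * ρ ^ Fintype.card ι * ∏ c, (#(X c) : ℝ) := by
      simp_rw [prod_mul_distrib, ← mul_sum, prod_const, card_univ]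
      ring
    _ ≤ badWeight R μ Δ x D A * ρ ^ Δ * ∏ c, (#(X c) : ℝ) := by
      gcongr
      · exact badWeight_nonneg hμ _ _ _ _
      · exact sum_prod_le_badWeight hμ e hXA x

end PartialTuples

section Link

variable {W : Type*} {R : W → W → Prop} {P Y : Finset W} {Δ w : ℕ} {b : ℝ}

theorem four_mul_pow_le (hΔ : 1 ≤ Δ) (hw : 1 ≤ w) (hb : b = 3 ^ (Δ * w)) :
    4 * (4 * 3 ^ (2 * Δ) * (b ^ 3) ^ (2 * Δ)) ^ w * b ^ (4 * (Δ * w)) ≤ b ^ (16 * (Δ * w)) := by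
  have hwe : w ≤ Δ * w := Nat.le_mul_of_pos_left _ hΔ
  have hb1 : 1 ≤ b := hb ▸ one_le_pow₀ (by norm_num)
  have four_pow_le : (4 : ℝ) * 4 ^ w ≤ b ^ 3 := by
    calc (4 : ℝ) * 4 ^ w ≤ 4 ^ w * 4 ^ w := by
          gcongr
          exact le_self_pow₀ (by norm_num) (by lia)
      _ = 16 ^ w := by rw [← mul_pow]; norm_num
      _ ≤ 16 ^ (Δ * w) := pow_le_pow_right₀ (by norm_num) hwe
      _ ≤ 27 ^ (Δ * w) := pow_le_pow_left₀ (by norm_num) (by norm_num) _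
      _ = b ^ 3 := by rw [hb, pow_right_comm]; norm_num
  calc 4 * (4 * 3 ^ (2 * Δ) * (b ^ 3) ^ (2 * Δ)) ^ w * b ^ (4 * (Δ * w))
      = 4 * 4 ^ w * (b ^ 2 * b ^ (6 * (Δ * w)) * b ^ (4 * (Δ * w))) := by
        rw [hb]; ring
    _ ≤ b ^ 3 * (b ^ 2 * b ^ (6 * (Δ * w)) * b ^ (4 * (Δ * w))) := by gcongr
    _ = b ^ (5 + 10 * (Δ * w)) := by ring
    _ ≤ b ^ (16 * (Δ * w)) := pow_le_pow_right₀ hb1 (by lia)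

theorem exists_rich_subset (hΔ : 1 ≤ Δ) (hw : 1 ≤ w) (hb : b = 3 ^ (Δ * w)) (hY : Y.Nonempty)
    (hdens : 1 / 3 * #P * #Y ≤ ∑ y ∈ P, (#(nbrs R y Y) : ℝ)) :
    ∃ P' ⊆ P, #P ≤ b ^ 3 * #P' ∧ 2 * (4 * 3 ^ (2 * Δ) * (b ^ 3) ^ (2 * Δ)) ^ w *
      #(poorTuples R P' Y ((b ^ 8)⁻¹ * #Y) (2 * Δ * w)) ≤ (#P' : ℝ) ^ (2 * Δ * w) := by
  have hb0 : 0 < b := hb ▸ by positivity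
  have hb3 : 3 ≤ b := hb ▸ le_self_pow₀ (by norm_num) (Nat.mul_ne_zero (by lia) (by lia))
  obtain ⟨P', hP'P, hcard, hpoor⟩ := exists_subset_card_poorTuples_le R hY (d := 1 / 3)
    (y := (b ^ 8)⁻¹) (K := 2 * (4 * 3 ^ (2 * Δ) * (b ^ 3) ^ (2 * Δ)) ^ w) (q := 2 * (Δ * w))
    (m := 2 * Δ * w) (by norm_num) (by positivity) (by positivity) hdens
    (Nat.mul_ne_zero (by lia) (by lia)) (by
      have pow_exp : (3 : ℝ) ^ (2 * (Δ * w) * (2 * Δ * w)) = b ^ (4 * (Δ * w)) := by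
        rw [hb, ← pow_mul]
        ring_nf
      rw [inv_pow, ← div_eq_mul_inv, div_pow, one_pow, div_le_div_iff₀ (by positivity)
        (by positivity), pow_exp, one_mul, ← mul_assoc,
        ← pow_mul b 8]
      refine le_of_eq_of_le ?_ ((four_mul_pow_le hΔ hw hb).trans_eq ?_) <;> ring)
  refine ⟨P', hP'P, ?_, hpoor⟩
  have sq_mul : b ^ 2 * (1 / 3) ^ (2 * (Δ * w)) = 1 := by
    rw [hb, mul_comm 2, pow_mul (1 / 3 : ℝ), ← mul_pow, ← mul_pow]
    norm_num
  calc (#P : ℝ) = b ^ 2 * ((1 / 3) ^ (2 * (Δ * w)) * #P) := by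
        rw [← mul_assoc, sq_mul, one_mul]
    _ ≤ b ^ 2 * (2 * #P') := by gcongr
    _ ≤ b ^ 2 * (b * #P') := by gcongr; exact le_trans (by norm_num) hb3
    _ = b ^ 3 * #P' := by ring

theorem two_mul_pow_le (hΔ : 1 ≤ Δ) (hb : b = 3 ^ (Δ * w)) :
    (2 * 3 ^ (2 * Δ)) ^ w ≤ b ^ 3 := by
  calc (2 * 3 ^ (2 * Δ) : ℝ) ^ w ≤ (3 ^ Δ * 3 ^ (2 * Δ)) ^ w := by
        gcongr
        exact (by norm_num : (2 : ℝ) ≤ 3).trans (le_self_pow₀ (by norm_num) (by lia))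
    _ = b ^ 3 := by rw [hb]; ring

variable [DecidableEq W]

theorem exists_isNest_of_rich (hΔ : 1 ≤ Δ) (hw : 1 ≤ w) (hb : b = 3 ^ (Δ * w)) (hP : b ^ 4 ≤ #P)
    (htot : (P : Set W).Pairwise fun y z => R y z ∨ R z y) {μ : W → ℝ} (hμ : ∀ a, 0 ≤ μ a)
    (hμ_sum : ∀ A : Finset W, ∑ a ∈ A, μ a ≤ 2)
    (hpoor : 2 * (4 * 3 ^ (2 * Δ) * (b ^ 3) ^ (2 * Δ)) ^ w *
      #(poorTuples R P Y ((b ^ 8)⁻¹ * #Y) (2 * Δ * w)) ≤ (#P : ℝ) ^ (2 * Δ * w)) :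
    ∃ E Q, E 0 = P ∧ Q ⊆ Y ∧ (b ^ 8)⁻¹ * #Y ≤ #Q ∧ IsNest R μ Δ (b ^ 20)⁻¹
      (4 * 3 ^ (2 * Δ) * (((b ^ 20)⁻¹) ^ (2 * Δ) * 3 ^ Δ)) w (#P / b ^ 3) E Q := by
  have hb0 : 0 < b := hb ▸ by positivity
  have hb3 : 3 ≤ b := hb ▸ le_self_pow₀ (by norm_num) (Nat.mul_ne_zero (by lia) (by lia))
  have hP0 : (0 : ℝ) < #P := lt_of_lt_of_le (by positivity) hP
  refine exists_isNest htot hμ hμ_sum (p := 2 * Δ) (Γ := 4 * 3 ^ (2 * Δ) * (b ^ 3) ^ (2 * Δ))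
    (by positivity) (by positivity) le_rfl (by positivity) ?_ ?_ w P Y subset_rfl ?_ ?_
  · rw [le_div_iff₀ (by positivity)]
    exact le_trans (by rw [pow_succ' b 3]; gcongr) hP
  · rw [div_pow, mul_assoc _ ((b ^ 3) ^ _), mul_div_cancel₀ _ (by positivity)]
  · rw [mul_div_assoc', div_le_iff₀' (by positivity)]
    exact mul_le_mul_of_nonneg_right (two_mul_pow_le hΔ hb) (Nat.cast_nonneg _)
  · have : 0 < (#P : ℝ) ^ (2 * Δ * w) := by positivity
    linarith

/-- The uniform probability distribution on a finite set (zero if the set is empty). -/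
noncomputable def uniformWeight (P : Finset W) (a : W) : ℝ :=
  if a ∈ P then (#P : ℝ)⁻¹ else 0

theorem uniformWeight_nonneg (P : Finset W) (a : W) : 0 ≤ uniformWeight P a := by
  unfold uniformWeight
  positivity

theorem sum_uniformWeight_le_one (P A : Finset W) : ∑ a ∈ A, uniformWeight P a ≤ 1 := by
  simp only [uniformWeight, sum_ite_mem, sum_const, nsmul_eq_mul, ← div_eq_mul_inv]
  exact div_le_one_of_le₀ (mod_cast card_le_card inter_subset_right) (Nat.cast_nonneg _)

theorem card_mul_uniformWeight {P : Finset W} {a : W} (ha : a ∈ P) :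
    #P * uniformWeight P a = 1 := by
  rw [uniformWeight, if_pos ha, mul_inv_cancel₀]
  exact mod_cast card_ne_zero_of_mem ha

/-- The nest `E` lies in `P` and links `P` to `Q`: every `E j` is a `b⁻⁶` fraction of `P`, and
few partial `Δ`-tuples of members of `E (j + 1) ∪ Q` have less than a `b⁻²⁰` fraction of `E j` as
common in-neighbours. The weight `μ` is comparable to the uniform ones on `P` and on `Q`. -/
structure IsLink (R : W → W → Prop) (Δ w : ℕ) (b : ℝ) (P Q : Finset W) (μ : W → ℝ)
    (E : ℕ → Finset W) : Prop where
  weight_nonneg (a : W) : 0 ≤ μ a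
  one_le_left (a : W) (ha : a ∈ P) : 1 ≤ #P * μ a
  one_le_right (a : W) (ha : a ∈ Q) : 1 ≤ b ^ 8 * #Q * μ a
  subset : E 0 ⊆ P
  isNest : IsNest R μ Δ (b ^ 20)⁻¹ (4 * 3 ^ (2 * Δ) * (((b ^ 20)⁻¹) ^ (2 * Δ) * 3 ^ Δ)) w
    (#P / b ^ 6) E Q

theorem exists_isLink (hΔ : 1 ≤ Δ) (hw : 1 ≤ w) (hb : b = 3 ^ (Δ * w)) (hY : Y.Nonempty)
    (hP : b ^ 7 ≤ #P) (htot : (P : Set W).Pairwise fun y z => R y z ∨ R z y)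
    (hdens : 1 / 3 * #P * #Y ≤ ∑ y ∈ P, (#(nbrs R y Y) : ℝ)) :
    ∃ Q ⊆ Y, #Y ≤ b ^ 8 * #Q ∧ ∃ μ E, IsLink R Δ w b P Q μ E := by
  have hb0 : 0 < b := hb ▸ by positivity
  obtain ⟨P', hP'P, hPP', hpoor⟩ := exists_rich_subset hΔ hw hb hY hdens
  have hP' : b ^ 4 ≤ #P' := by
    refine le_of_mul_le_mul_left ?_ (by positivity : 0 < b ^ 3)
    rw [← pow_add]
    exact hP.trans hPP'
  set μ : W → ℝ := fun a => uniformWeight P a + uniformWeight Y a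
  have hμ (a : W) : 0 ≤ μ a := add_nonneg (uniformWeight_nonneg P a) (uniformWeight_nonneg Y a)
  obtain ⟨E, Q, rfl, hQY, hQ, hE⟩ := exists_isNest_of_rich hΔ hw hb hP'
    (htot.mono (mod_cast hP'P)) hμ (fun A => by
      rw [sum_add_distrib]
      linarith [sum_uniformWeight_le_one P A, sum_uniformWeight_le_one Y A]) hpoor
  have hYQ : #Y ≤ b ^ 8 * #Q := by rwa [inv_mul_le_iff₀ (by positivity)] at hQ
  refine ⟨Q, hQY, hYQ, μ, E, ⟨hμ, fun a ha => ?_, fun a ha => ?_, hP'P, ?_⟩⟩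
  · rw [← card_mul_uniformWeight ha]
    gcongr
    exact le_add_of_nonneg_right (uniformWeight_nonneg Y a)
  · rw [← card_mul_uniformWeight (hQY ha)]
    gcongr
    · exact uniformWeight_nonneg Y a
    · exact le_add_of_nonneg_left (uniformWeight_nonneg P a)
  · exact ⟨hE.antitone, fun j => le_trans (by
      rw [div_le_div_iff₀ (by positivity) (by positivity)]
      calc (#P : ℝ) * b ^ 3 ≤ b ^ 3 * #(E 0) * b ^ 3 := by gcongr
        _ = #(E 0) * b ^ 6 := by ring) (hE.le_card j), hE.badWeight_le⟩

end Link

section BoxDensity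

variable {ι W : Type*} [Fintype ι] [DecidableEq ι] {X : ι → Finset W} {B : (ι → W) → Prop}

open Classical in
/-- The proportion of tuples satisfying `B` in the box `∏ c, X c` (zero if the box is empty). -/
noncomputable def boxDensity (X : ι → Finset W) (B : (ι → W) → Prop) : ℝ :=
  #{ψ ∈ Fintype.piFinset X | B ψ} / ∏ c, (#(X c) : ℝ)

theorem boxDensity_nonneg (X : ι → Finset W) (B : (ι → W) → Prop) : 0 ≤ boxDensity X B := by
  unfold boxDensity
  positivity

open Classical in
theorem boxDensity_le_of_card_le {β : ℝ} (hβ : 0 ≤ β)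
    (h : (#{ψ ∈ Fintype.piFinset X | B ψ} : ℝ) ≤ β * ∏ c, (#(X c) : ℝ)) :
    boxDensity X B ≤ β :=
  div_le_of_le_mul₀ (by positivity) hβ h

theorem not_of_boxDensity_singleton_lt_one {ψ : ι → W}
    (h : boxDensity (fun c => {ψ c}) B < 1) : ¬ B ψ := by
  classical
  intro hψ
  rw [boxDensity, Fintype.piFinset_singleton, filter_singleton, if_pos hψ] at h
  simp at h

open Classical in
theorem sum_card_filter_piFinset_update (X : ι → Finset W) (B : (ι → W) → Prop) (c : ι) :
    ∑ x ∈ X c, #{ψ ∈ Fintype.piFinset (Function.update X c {x}) | B ψ} =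
      #{ψ ∈ Fintype.piFinset X | B ψ} := by
  rw [card_eq_sum_card_fiberwise (f := fun ψ => ψ c) (t := X c)
    fun ψ hψ => Fintype.mem_piFinset.1 (mem_filter.1 hψ).1 c]
  refine sum_congr rfl fun x hx => ?_
  rw [filter_filter]
  congr 1
  ext ψ
  simp only [mem_filter, Fintype.mem_piFinset]
  refine ⟨fun ⟨hψ, hB⟩ => ?_, fun ⟨hψ, hB, hc⟩ => ⟨fun i => ?_, hB⟩⟩
  · have hc : ψ c = x := by simpa using hψ c
    refine ⟨fun i => ?_, hB, hc⟩
    obtain rfl | hi := eq_or_ne i c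
    · rwa [hc]
    · simpa [hi] using hψ i
  · obtain rfl | hi := eq_or_ne i c
    · simp [hc]
    · simpa [hi] using hψ i

theorem sum_boxDensity_update (X : ι → Finset W) (B : (ι → W) → Prop) (c : ι) :
    ∑ x ∈ X c, boxDensity (Function.update X c {x}) B = #(X c) * boxDensity X B := by
  classical
  obtain hc | hc := (X c).eq_empty_or_nonempty
  · simp [hc]
  have prod_update (x : W) :
      ∏ i, (#(Function.update X c {x} i) : ℝ) = ∏ i ∈ {c}ᶜ, (#(X i) : ℝ) := by
    rw [Fintype.prod_eq_mul_prod_compl c, Function.update_self, card_singleton, Nat.cast_one,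
      one_mul]
    exact prod_congr rfl fun i hi => by rw [Function.update_of_ne (by simpa using hi)]
  have hX : (#(X c) : ℝ) ≠ 0 := mod_cast hc.card_ne_zero
  simp only [boxDensity, prod_update, ← sum_div]
  rw [← Nat.cast_sum, sum_card_filter_piFinset_update, Fintype.prod_eq_mul_prod_compl c,
    mul_div_assoc', mul_div_mul_left _ _ hX]

theorem card_filter_lt_le_card_div {α : Type*} {s : Finset α} {F : α → ℝ} {a M : ℝ} (hM : 0 < M)
    (hF : ∀ x ∈ s, 0 ≤ F x) (hsum : ∑ x ∈ s, F x = #s * a) :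
    (#{x ∈ s | M * a < F x} : ℝ) ≤ #s / M := by
  obtain rfl | hs := s.eq_empty_or_nonempty
  · simp
  have hs : (0 : ℝ) < #s := mod_cast hs.card_pos
  have ha : 0 ≤ a := nonneg_of_mul_nonneg_right ((sum_nonneg hF).trans_eq hsum) hs
  obtain rfl | ha := ha.eq_or_lt
  · rw [mul_zero, sum_eq_zero_iff_of_nonneg hF] at hsum
    rw [filter_false_of_mem fun x hx => by simp [hsum x hx], card_empty, Nat.cast_zero]
    positivity
  rw [le_div_iff₀ hM]
  refine le_of_mul_le_mul_right ?_ ha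
  calc (#{x ∈ s | M * a < F x} : ℝ) * M * a = ∑ x ∈ s with M * a < F x, M * a := by
        rw [sum_const, nsmul_eq_mul, mul_assoc]
    _ ≤ ∑ x ∈ s with M * a < F x, F x := sum_le_sum fun x hx => (mem_filter.1 hx).2.le
    _ ≤ ∑ x ∈ s, F x :=
        sum_le_sum_of_subset_of_nonneg (filter_subset _ _) fun x hx _ => hF x hx
    _ = #s * a := hsum

theorem card_filter_lt_boxDensity_update_le (X : ι → Finset W) (B : (ι → W) → Prop) (c : ι)
    {M : ℝ} (hM : 0 < M) :
    (#{x ∈ X c | M * boxDensity X B < boxDensity (Function.update X c {x}) B} : ℝ) ≤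
      #(X c) / M :=
  card_filter_lt_le_card_div hM (fun _ _ => boxDensity_nonneg _ _) (sum_boxDensity_update X B c)

end BoxDensity

section PartialEmbedding

variable {V W : Type*} [DecidableEq V] {g : V → V → Prop} {R : W → W → Prop}
  {D : V → Finset W} {θ : V → ℝ} {M β : ℝ} {s : Finset V} {φ : V → W} {v₀ : V} {x : W} {Δ : ℕ}

/-- The possible images of `v` once the vertices in `s` have been embedded by `φ`. -/
def candidates (D : V → Finset W) (s : Finset V) (φ : V → W) (v : V) : Finset W :=
  if v ∈ s then {φ v} else D v

theorem candidates_insert (hv₀ : v₀ ∉ s) :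
    candidates D (insert v₀ s) (Function.update φ v₀ x) =
      Function.update (candidates D s φ) v₀ {x} := by
  ext1 v
  obtain rfl | hv := eq_or_ne v v₀
  · simp [candidates]
  · simp [candidates, hv]

variable [Fintype V]

/-- The proportion, among the choices of images for the out-neighbours of `u` that are still
possible, of those with less than `θ u` common in-neighbours in `D u`. -/
noncomputable def poorDensity (g : V → V → Prop) (R : W → W → Prop) (D : V → Finset W) (θ : V → ℝ)
    (s : Finset V) (φ : V → W) (u : V) : ℝ :=
  boxDensity (fun c : nbrs g u univ => candidates D s φ c)
    fun ψ => (#(commonNbrs (flip R) ψ (D u)) : ℝ) < θ u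

/-- An embedding of the part of `g` induced on the out-closed set `s`, for which the images of the
out-neighbours of any vertex outside `s` are unlikely to have few common in-neighbours. Fixing
one image may multiply this likelihood by `M`. -/
structure IsPartialEmbedding (g : V → V → Prop) (R : W → W → Prop) (D : V → Finset W) (θ : V → ℝ)
    (M β : ℝ) (s : Finset V) (φ : V → W) : Prop where
  mem (v : V) (hv : v ∈ s) : φ v ∈ D v
  injOn : Set.InjOn φ s
  mem_of_adj (u v : V) (hu : u ∈ s) (huv : g u v) : v ∈ s
  rel (u v : V) (hu : u ∈ s) (huv : g u v) : R (φ u) (φ v)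
  poorDensity_le (u : V) (hu : u ∉ s) : poorDensity g R D θ s φ u ≤ β * M ^ #(nbrs g u s)

theorem poorDensity_insert_of_adj (hv₀ : v₀ ∉ s) {u : V} (hu : v₀ ∈ nbrs g u univ) :
    poorDensity g R D θ (insert v₀ s) (Function.update φ v₀ x) u =
      boxDensity (Function.update (fun c : nbrs g u univ => candidates D s φ c) ⟨v₀, hu⟩ {x})
        fun ψ => (#(commonNbrs (flip R) ψ (D u)) : ℝ) < θ u := by
  rw [poorDensity, candidates_insert hv₀]
  exact congrArg (boxDensity · _) (Function.update_comp_eq_of_injective (candidates D s φ)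
    Subtype.val_injective ⟨v₀, hu⟩ {x})

theorem poorDensity_insert_of_not_adj (hv₀ : v₀ ∉ s) {u : V} (hu : ¬ g u v₀) :
    poorDensity g R D θ (insert v₀ s) (Function.update φ v₀ x) u = poorDensity g R D θ s φ u := by
  rw [poorDensity, candidates_insert hv₀]
  exact congrArg (boxDensity · _) (Function.update_comp_eq_of_notMem_range (candidates D s φ)
    {x} (by simpa using hu))

theorem card_filter_lt_poorDensity_insert_le (hM : 0 < M) (hv₀ : v₀ ∉ s) {u : V} (hu : g u v₀) :
    (#{x ∈ D v₀ | M * poorDensity g R D θ s φ u <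
      poorDensity g R D θ (insert v₀ s) (Function.update φ v₀ x) u} : ℝ) ≤ #(D v₀) / M := by
  have hu : v₀ ∈ nbrs g u univ := mem_nbrs.2 ⟨mem_univ _, hu⟩
  simp_rw [poorDensity_insert_of_adj hv₀ hu]
  convert card_filter_lt_boxDensity_update_le (fun c : nbrs g u univ => candidates D s φ c)
    (fun ψ => (#(commonNbrs (flip R) ψ (D u)) : ℝ) < θ u) ⟨v₀, hu⟩ hM <;>
  simp [poorDensity, candidates, hv₀]

theorem isPartialEmbedding_empty
    (hpoor : ∀ u, boxDensity (fun c : nbrs g u univ => D c)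
      (fun ψ => (#(commonNbrs (flip R) ψ (D u)) : ℝ) < θ u) ≤ β) (φ : V → W) :
    IsPartialEmbedding g R D θ M β ∅ φ where
  mem := by simp
  injOn := by simp
  mem_of_adj := by simp
  rel := by simp
  poorDensity_le u _ := by
    have hempty : candidates D ∅ φ = D := funext fun v => if_neg (notMem_empty v)
    have nbrs_empty : nbrs g u ∅ = ∅ := by classical exact filter_empty _
    rw [poorDensity, hempty, nbrs_empty, card_empty, pow_zero, mul_one]
    exact hpoor u

namespace IsPartialEmbedding

theorem le_card_commonNbrs (h : IsPartialEmbedding g R D θ M β s φ) (hM : 1 ≤ M) (hβ : 0 ≤ β)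
    (hβM : β * M ^ Δ < 1) (hout : #(nbrs g v₀ univ) ≤ Δ) (hv₀ : v₀ ∉ s)
    (hs : ∀ v, g v₀ v → v ∈ s) :
    θ v₀ ≤ #(commonNbrs (flip R) (fun c : nbrs g v₀ univ => φ c) (D v₀)) := by
  refine not_lt.1 <| not_of_boxDensity_singleton_lt_one
    (B := fun ψ => (#(commonNbrs (flip R) ψ (D v₀)) : ℝ) < θ v₀) ?_
  have hcard : #(nbrs g v₀ s) ≤ Δ :=
    (card_le_card fun v hv => mem_nbrs.2 ⟨mem_univ v, (mem_nbrs.1 hv).2⟩).trans hout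
  calc _ = poorDensity g R D θ s φ v₀ := congrArg (boxDensity · _) <| funext fun c =>
        (if_pos (hs c (mem_nbrs.1 c.2).2)).symm
    _ ≤ β * M ^ #(nbrs g v₀ s) := h.poorDensity_le v₀ hv₀
    _ ≤ β * M ^ Δ := by gcongr
    _ < 1 := hβM

theorem exists_image [DecidableEq W] (h : IsPartialEmbedding g R D θ M β s φ) (hM : 0 < M)
    (hin : #(nbrs (flip g) v₀ univ) ≤ Δ) (hv₀ : v₀ ∉ s) {C : Finset W} (hCD : C ⊆ D v₀)
    (hC : Δ * (#(D v₀) / M) + #{v | ¬ Disjoint (D v) (D v₀)} < #C) :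
    ∃ x ∈ C, x ∉ φ '' s ∧ ∀ u, g u v₀ →
      poorDensity g R D θ (insert v₀ s) (Function.update φ v₀ x) u ≤
        M * poorDensity g R D θ s φ u := by
  classical
  set bad : V → Finset W := fun u => {x ∈ D v₀ | M * poorDensity g R D θ s φ u <
      poorDensity g R D θ (insert v₀ s) (Function.update φ v₀ x) u}
  have card_avoid_lt : #(image φ {v | ¬ Disjoint (D v) (D v₀)} ∪
      (nbrs (flip g) v₀ univ).biUnion bad) < #C := by
    rw [← Nat.cast_lt (α := ℝ)]
    refine lt_of_le_of_lt ?_ hC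
    calc _ ≤ (#{v | ¬ Disjoint (D v) (D v₀)} : ℝ) + ∑ u ∈ nbrs (flip g) v₀ univ, (#(bad u) : ℝ) :=
          mod_cast (card_union_le _ _).trans (add_le_add card_image_le card_biUnion_le)
      _ ≤ #{v | ¬ Disjoint (D v) (D v₀)} + ∑ _u ∈ nbrs (flip g) v₀ univ, #(D v₀) / M := by
          gcongr with _ hu
          exact card_filter_lt_poorDensity_insert_le hM hv₀ (mem_nbrs.1 hu).2
      _ ≤ #{v | ¬ Disjoint (D v) (D v₀)} + Δ * (#(D v₀) / M) := by
          rw [sum_const, nsmul_eq_mul]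
          gcongr
      _ = _ := add_comm _ _
  obtain ⟨x, hxC, hx⟩ := exists_mem_notMem_of_card_lt_card card_avoid_lt
  rw [mem_union, not_or] at hx
  refine ⟨x, hxC, ?_, fun u hu => not_lt.1 fun hlt => hx.2 <| mem_biUnion.2
    ⟨u, mem_nbrs.2 ⟨mem_univ u, hu⟩, mem_filter.2 ⟨hCD hxC, hlt⟩⟩⟩
  rintro ⟨v, hv, rfl⟩
  exact hx.1 (mem_image_of_mem φ (mem_filter.2
    ⟨mem_univ v, not_disjoint_iff.2 ⟨φ v, h.mem v hv, hCD hxC⟩⟩))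

theorem insert (h : IsPartialEmbedding g R D θ M β s φ) (hM : 0 ≤ M) (hv₀ : v₀ ∉ s)
    (hs : ∀ v, g v₀ v → v ∈ s) (hx : x ∈ D v₀) (hxφ : x ∉ φ '' s) (hR : ∀ v, g v₀ v → R x (φ v))
    (hpoor : ∀ u, g u v₀ → poorDensity g R D θ (insert v₀ s) (Function.update φ v₀ x) u ≤
      M * poorDensity g R D θ s φ u) :
    IsPartialEmbedding g R D θ M β (insert v₀ s) (Function.update φ v₀ x) := by
  have update_eq : ∀ v ∈ s, Function.update φ v₀ x v = φ v := fun v hv =>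
    Function.update_of_ne (ne_of_mem_of_not_mem hv hv₀) _ _
  refine ⟨?_, ?_, ?_, ?_, fun u hu => ?_⟩
  · simpa +contextual [update_eq] using ⟨hx, h.mem⟩
  · rw [coe_insert, Set.injOn_insert (mod_cast hv₀), Function.update_self,
      (Set.image_congr update_eq : _ = φ '' s)]
    exact ⟨h.injOn.congr fun v hv => (update_eq v hv).symm, hxφ⟩
  · simp only [mem_insert]
    rintro u v (rfl | hu) huv
    · exact .inr (hs v huv)
    · exact .inr (h.mem_of_adj u v hu huv)
  · simp only [mem_insert]
    rintro u v (rfl | hu) huv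
    · rw [Function.update_self, update_eq v (hs v huv)]
      exact hR v huv
    · rw [update_eq u hu, update_eq v (h.mem_of_adj u v hu huv)]
      exact h.rel u v hu huv
  · have hus : u ∉ s := fun hus => hu (mem_insert_of_mem hus)
    by_cases huv₀ : g u v₀
    · have nbrs_insert : nbrs g u (Insert.insert v₀ s) = Insert.insert v₀ (nbrs g u s) := by
        classical exact (filter_insert _ _ _).trans (if_pos huv₀)
      rw [nbrs_insert, card_insert_of_notMem (by simp [hv₀]), pow_succ', mul_left_comm]
      exact (hpoor u huv₀).trans (mul_le_mul_of_nonneg_left (h.poorDensity_le u hus) hM)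
    · have nbrs_insert : nbrs g u (Insert.insert v₀ s) = nbrs g u s := by
        classical exact (filter_insert _ _ _).trans (if_neg huv₀)
      rw [nbrs_insert, poorDensity_insert_of_not_adj hv₀ huv₀]
      exact h.poorDensity_le u hus

end IsPartialEmbedding

theorem exists_isPartialEmbedding_card_eq [DecidableEq W] (f : V → ℕ)
    (hf : ∀ u v, g u v → f u < f v) (hout : ∀ u, #(nbrs g u univ) ≤ Δ)
    (hin : ∀ v, #(nbrs (flip g) v univ) ≤ Δ) (hD : ∀ v, (D v).Nonempty) (hM : 1 ≤ M)
    (hβ : 0 ≤ β) (hβM : β * M ^ Δ < 1)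
    (hpoor : ∀ u, boxDensity (fun c : nbrs g u univ => D c)
      (fun ψ => (#(commonNbrs (flip R) ψ (D u)) : ℝ) < θ u) ≤ β)
    (hθ : ∀ u, Δ * (#(D u) / M) + #{v | ¬ Disjoint (D v) (D u)} < θ u) {k : ℕ}
    (hk : k ≤ Fintype.card V) :
    ∃ (s : Finset V) (φ : V → W), #s = k ∧ IsPartialEmbedding g R D θ M β s φ := by
  induction k with
  | zero =>
    choose φ _ using hD
    exact ⟨∅, φ, card_empty, isPartialEmbedding_empty hpoor φ⟩
  | succ k ih =>
    obtain ⟨s, φ, rfl, h⟩ := ih (by lia)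
    obtain ⟨v₀, hv₀, hmax⟩ := exists_max_image sᶜ f (by rw [← card_pos, card_compl]; lia)
    rw [mem_compl] at hv₀
    have hs : ∀ v, g v₀ v → v ∈ s := fun v hv => by
      by_contra hvs
      exact (hmax v (mem_compl.2 hvs)).not_gt (hf v₀ v hv)
    obtain ⟨x, hxC, hxφ, hx⟩ := h.exists_image (zero_lt_one.trans_le hM) (hin v₀) hv₀
      (commonNbrs_subset _ _ _)
      ((hθ v₀).trans_le (h.le_card_commonNbrs hM hβ hβM (hout v₀) hv₀ hs))
    rw [mem_commonNbrs] at hxC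
    exact ⟨insert v₀ s, Function.update φ v₀ x, card_insert_of_notMem hv₀,
      h.insert (zero_le_one.trans hM) hv₀ hs hxC.1 hxφ
        (fun v hv => hxC.2 ⟨v, mem_nbrs.2 ⟨mem_univ v, hv⟩⟩) hx⟩

theorem exists_embedding [DecidableEq W] (f : V → ℕ) (hf : ∀ u v, g u v → f u < f v)
    (hout : ∀ u, #(nbrs g u univ) ≤ Δ) (hin : ∀ v, #(nbrs (flip g) v univ) ≤ Δ)
    (hD : ∀ v, (D v).Nonempty) (hM : 1 ≤ M) (hβ : 0 ≤ β) (hβM : β * M ^ Δ < 1)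
    (hpoor : ∀ u, boxDensity (fun c : nbrs g u univ => D c)
      (fun ψ => (#(commonNbrs (flip R) ψ (D u)) : ℝ) < θ u) ≤ β)
    (hθ : ∀ u, Δ * (#(D u) / M) + #{v | ¬ Disjoint (D v) (D u)} < θ u) :
    ∃ φ : V → W, (∀ v, φ v ∈ D v) ∧ Function.Injective φ ∧ ∀ u v, g u v → R (φ u) (φ v) := by
  obtain ⟨s, φ, hs, h⟩ :=
    exists_isPartialEmbedding_card_eq f hf hout hin hD hM hβ hβM hpoor hθ le_rfl
  obtain rfl : s = univ := (card_eq_iff_eq_univ s).1 hs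
  exact ⟨φ, fun v => h.mem v (mem_univ v), Set.injOn_univ.1 (mod_cast h.injOn),
    fun u v => h.rel u v (mem_univ u)⟩

end PartialEmbedding

section MedianOrder

variable {α : Type*}

open Classical in
/-- The number of pairs of positions `i < j` of a list whose entries are related by `r`. -/
noncomputable def numForward (r : α → α → Prop) : List α → ℕ
  | [] => 0
  | x :: l => l.countP (r x) + numForward r l

theorem numForward_append_add (r : α → α → Prop) (a : List α) {l l' : List α} (h : l.Perm l') :
    numForward r (a ++ l) + numForward r l' = numForward r (a ++ l') + numForward r l := by
  induction a with
  | nil => simp [Nat.add_comm]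
  | cons x a ih =>
    simp only [List.cons_append, numForward, List.countP_append, h.countP_eq]
    lia

open Classical in
theorem numForward_append_cons (r : α → α → Prop) (x : α) (b c : List α) :
    numForward r (b ++ x :: c) = numForward r (b ++ c) + b.countP (r · x) + c.countP (r x) := by
  induction b with
  | nil => simp [numForward, Nat.add_comm]
  | cons z b ih =>
    simp only [List.cons_append, numForward, List.countP_append, List.countP_cons, ih]
    lia

theorem exists_perm_forall_numForward_le (r : α → α → Prop) (l : List α) :
    ∃ m : List α, m.Perm l ∧ ∀ l', l'.Perm l → numForward r l' ≤ numForward r m := by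
  classical
  simpa using exists_max_image l.permutations.toFinset (numForward r) ⟨l, by simp⟩

open Classical in
theorem length_le_two_mul_countP {r : α → α → Prop} {l a b c : List α} {x : α}
    (hmax : ∀ l', l'.Perm l → numForward r l' ≤ numForward r l) (hl : l = a ++ x :: (b ++ c))
    (hx : ∀ y ∈ b, r x y ∨ r y x) :
    b.length ≤ 2 * b.countP (r x) := by
  subst hl
  have hperm : (b ++ x :: c).Perm (x :: (b ++ c)) := List.perm_middle
  -- If the bound fails, moving `x` past the block `b` increases the number of forward pairs.
  have hmove := hmax _ (hperm.append_left a)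
  have hswap := numForward_append_add r a hperm
  have hbefore : numForward r (x :: (b ++ c)) =
      b.countP (r x) + c.countP (r x) + numForward r (b ++ c) := by
    rw [numForward, List.countP_append]
  have hafter := numForward_append_cons r x b c
  have hlength : b.length ≤ b.countP (r x) + b.countP (r · x) := by
    rw [List.length_eq_countP_add_countP (r x ·)]
    gcongr 1
    exact List.countP_mono_left fun y hy hxy => decide_eq_true <|
      (hx y hy).resolve_left (by simpa using hxy)
  lia

theorem range_eq_append_cons {i j n : ℕ} (hij : i < j) (hjn : j ≤ n) :
    List.range n =
      List.range i ++ i :: (List.range' (i + 1) (j - (i + 1)) ++ List.range' j (n - j)) := by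
  obtain ⟨m, rfl⟩ := Nat.exists_eq_add_of_lt hij
  obtain ⟨k, rfl⟩ := Nat.exists_eq_add_of_le hjn
  have hm : i + m + 1 - (i + 1) = m := by lia
  have happend := List.range'_append_1 (s := 0) (m := i) (n := m + k + 1)
  rw [Nat.zero_add] at happend
  rw [hm, Nat.add_sub_cancel_left, Nat.add_right_comm i m 1, List.range'_append_1,
    ← List.range'_succ, List.range_eq_range', List.range_eq_range', happend]
  congr 1
  lia

/-- The numbers `0, …, N - 1` form a median order of the digraph `R`: any two are adjacent, and
each one is joined to at least half of every interval that follows it. -/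
structure IsMedianOrder (R : ℕ → ℕ → Prop) (N : ℕ) : Prop where
  adj_or_adj : (Set.Iio N).Pairwise fun i j => R i j ∨ R j i
  card_Ico_le (i j : ℕ) (hj : j ≤ N) : #(Ico (i + 1) j) ≤ 2 * #(nbrs R i (Ico (i + 1) j))

theorem exists_isMedianOrder {W : Type*} [Fintype W] [Nonempty W] {T : W → W → Prop}
    (hT : Pairwise fun u v => T u v ∨ T v u) :
    ∃ e : ℕ → W, Set.InjOn e (Set.Iio (Fintype.card W)) ∧
      IsMedianOrder (fun i j => T (e i) (e j)) (Fintype.card W) := by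
  classical
  obtain ⟨l, hl, hmax⟩ := exists_perm_forall_numForward_le T (univ : Finset W).toList
  have hlength : l.length = Fintype.card W := by rw [hl.length_eq, length_toList, card_univ]
  have hnodup : l.Nodup := hl.nodup_iff.2 (nodup_toList _)
  set e : ℕ → W := fun i => l.getD i (Classical.arbitrary W)
  have map_range : (List.range (Fintype.card W)).map e = l :=
    List.ext_getElem (by simp [hlength]) fun i _ hi => by simp [e, hi]
  have hinj : Set.InjOn e (Set.Iio (Fintype.card W)) := fun i hi j hj hij => by
    rw [← map_range] at hnodup
    exact List.inj_on_of_nodup_map hnodup (List.mem_range.2 hi) (List.mem_range.2 hj) hij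
  have hadj : (Set.Iio (Fintype.card W)).Pairwise fun i j => T (e i) (e j) ∨ T (e j) (e i) :=
    fun i hi j hj hij => hT fun h => hij (hinj hi hj h)
  refine ⟨e, hinj, hadj, fun i j hj => ?_⟩
  obtain hij | hij := le_or_gt j i
  · simp [Ico_eq_empty_of_le (hij.trans i.le_succ)]
  have hsplit : l = (List.range i).map e ++ e i ::
      ((List.range' (i + 1) (j - (i + 1))).map e ++
        (List.range' j (Fintype.card W - j)).map e) := by
    simp [← map_range, range_eq_append_cons hij hj]
  have hle := length_le_two_mul_countP (fun l' hl' => hmax l' (hl'.trans hl)) hsplit fun y hy => by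
    obtain ⟨k, hk, rfl⟩ := List.mem_map.1 hy
    rw [List.mem_range'_1] at hk
    exact hadj (hij.trans_le hj) (show k < Fintype.card W by lia) (by lia)
  rw [List.countP_map, List.length_map, List.countP_eq_length_filter] at hle
  exact hle

theorem card_nbrs_Ico_mul_le {β : Type*} (R : β → ℕ → Prop) (x : β) (b L m : ℕ) :
    #(nbrs R x (Ico b (b + m * L))) ≤
      ∑ i ∈ range m, #(nbrs R x (Ico (b + i * L) (b + i * L + L))) := by
  classical
  induction m with
  | zero => simp [nbrs]
  | succ m ih =>
    rw [sum_range_succ, Nat.succ_mul, ← Nat.add_assoc,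
      ← Ico_union_Ico_eq_Ico (Nat.le_add_right b (m * L)) (Nat.le_add_right _ L), nbrs,
      filter_union]
    exact (card_union_le _ _).trans (Nat.add_le_add_right ih _)

namespace IsMedianOrder

variable {R : ℕ → ℕ → Prop} {N : ℕ} {P : Finset ℕ} {a b L x : ℕ}

theorem two_mul_le_card_nbrs (h : IsMedianOrder R N) (hax : a ≤ x) (hxb : x < b)
    (hL : b ≤ a + 2 * L) (hN : b + 6 * L ≤ N) :
    2 * L ≤ #(nbrs R x (Ico b (b + 6 * L))) := by
  classical
  have hhalf := h.card_Ico_le x (b + 6 * L) hN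
  have hsplit : #(nbrs R x (Ico (x + 1) (b + 6 * L))) ≤
      #(Ico (x + 1) b) + #(nbrs R x (Ico b (b + 6 * L))) := by
    rw [← Ico_union_Ico_eq_Ico (Nat.succ_le_of_lt hxb) (Nat.le_add_right b (6 * L)), nbrs,
      filter_union]
    exact (card_union_le _ _).trans (Nat.add_le_add_right (card_filter_le _ _) _)
  rw [Nat.card_Ico] at hhalf hsplit
  lia

theorem exists_dense_interval (h : IsMedianOrder R N) (hP : P ⊆ Ico a b) (hL : b ≤ a + 2 * L)
    (hN : b + 6 * L ≤ N) :
    ∃ q, b ≤ q ∧ q + L ≤ b + 6 * L ∧ #P * L ≤ 3 * ∑ x ∈ P, #(nbrs R x (Ico q (q + L))) := by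
  have sum_le : #P * (2 * L) ≤
      ∑ i ∈ range 6, ∑ x ∈ P, #(nbrs R x (Ico (b + i * L) (b + i * L + L))) := by
    rw [sum_comm, ← smul_eq_mul]
    refine card_nsmul_le_sum _ _ _ fun x hx => ?_
    obtain ⟨hax, hxb⟩ := mem_Ico.1 (hP hx)
    exact (h.two_mul_le_card_nbrs hax hxb hL hN).trans (card_nbrs_Ico_mul_le R x b L 6)
  obtain ⟨i, hi, hle⟩ := exists_le_of_sum_le (s := range 6) (f := fun _ => #P * L)
    (g := fun i => 3 * ∑ x ∈ P, #(nbrs R x (Ico (b + i * L) (b + i * L + L)))) ⟨0, by simp⟩ (by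
      simp only [sum_const, card_range, smul_eq_mul, ← mul_sum]
      linarith)
  refine ⟨b + i * L, Nat.le_add_right _ _, ?_, hle⟩
  rw [Nat.add_assoc, ← Nat.succ_mul]
  exact Nat.add_le_add_left (Nat.mul_le_mul_right L (mem_range.1 hi)) b

end IsMedianOrder

end MedianOrder

section LinkChain

theorem exists_seq_of_step {α : Type*} {valid : ℕ → α → Prop} {rel : ℕ → α → α → Prop} {n : ℕ}
    (start : ∃ a, valid 0 a)
    (step : ∀ k < n, ∀ a, valid k a → ∃ a', valid (k + 1) a' ∧ rel k a a') :
    ∃ s : ℕ → α, (∀ k ≤ n, valid k (s k)) ∧ ∀ k < n, rel k (s k) (s (k + 1)) := by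
  obtain ⟨a₀, h₀⟩ := start
  have : Nonempty α := ⟨a₀⟩
  choose! next hvalid hrel using step
  have valid_rec : ∀ k ≤ n, valid k (Nat.rec a₀ next k) := fun k hk => by
    induction k with
    | zero => exact h₀
    | succ k ih => exact hvalid k hk _ (ih (by lia))
  exact ⟨fun k => Nat.rec a₀ next k, valid_rec, fun k hk => hrel k hk _ (valid_rec k hk.le)⟩

variable {R : ℕ → ℕ → Prop} {Δ w N n : ℕ} {b : ℝ}

/-- A set that occupies at least a `b⁻⁸` fraction of the interval `[p, p + L)`. -/
structure IsBlock (b : ℝ) (p L : ℕ) (P : Finset ℕ) : Prop where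
  subset_Ico : P ⊆ Ico p (p + L)
  le_card : L ≤ b ^ 8 * #P

theorem IsMedianOrder.exists_isBlock_isLink (h : IsMedianOrder R N) (hΔ : 1 ≤ Δ) (hw : 1 ≤ w)
    (hb : b = 3 ^ (Δ * w)) {p L L' : ℕ} {P : Finset ℕ} (hP : IsBlock b p L P)
    (hbL : b ^ 15 ≤ L) (hL : L ≤ 2 * L') (hN : p + L + 6 * L' ≤ N) :
    ∃ q Q, p + L ≤ q ∧ q + L' ≤ p + L + 6 * L' ∧ IsBlock b q L' Q ∧
      ∃ μ E, IsLink R Δ w b P Q μ E := by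
  have hb0 : 0 < b := hb ▸ by positivity
  have hL0 : 0 < L := Nat.cast_pos.1 (lt_of_lt_of_le (by positivity) hbL)
  obtain ⟨q, hpq, hqN, hdense⟩ := h.exists_dense_interval hP.subset_Ico
    (Nat.add_le_add_left hL p) hN
  have hcard : b ^ 7 ≤ #P := by
    refine le_of_mul_le_mul_left ?_ (by positivity : 0 < b ^ 8)
    rw [← pow_add]
    exact hbL.trans hP.le_card
  have hPN : (P : Set ℕ) ⊆ Set.Iio N := fun a ha => by
    have := mem_Ico.1 (hP.subset_Ico ha)
    exact Set.mem_Iio.2 (by lia)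
  have hdens : 1 / 3 * #P * #(Ico q (q + L')) ≤ ∑ a ∈ P, (#(nbrs R a (Ico q (q + L'))) : ℝ) := by
    have : (#P * L' : ℝ) ≤ 3 * ∑ a ∈ P, (#(nbrs R a (Ico q (q + L'))) : ℝ) := mod_cast hdense
    rw [Nat.card_Ico, Nat.add_sub_cancel_left]
    linarith
  obtain ⟨Q, hQ, hQcard, hlink⟩ := exists_isLink hΔ hw hb (nonempty_Ico.2 (by lia)) hcard
    (h.adj_or_adj.mono hPN) hdens
  rw [Nat.card_Ico, Nat.add_sub_cancel_left] at hQcard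
  exact ⟨q, Q, hpq, hqN, ⟨hQ, hQcard⟩, hlink⟩

/-- Dense subsets `P 0, …, P n` of successive disjoint intervals `[pos k, pos k + L k)` of
`{0, …, N - 1}`, where `P k` is linked to `P (k + 1)` by the weight `μ k` and the nest `E k`. -/
structure IsLinkChain (R : ℕ → ℕ → Prop) (Δ w : ℕ) (b : ℝ) (N n : ℕ) (L pos : ℕ → ℕ)
    (P : ℕ → Finset ℕ) (μ : ℕ → ℕ → ℝ) (E : ℕ → ℕ → Finset ℕ) : Prop where
  isBlock (k : ℕ) (hk : k ≤ n) : IsBlock b (pos k) (L k) (P k)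
  add_le (k : ℕ) (hk : k ≤ n) : pos k + L k ≤ N
  add_le_succ (k : ℕ) (hk : k < n) : pos k + L k ≤ pos (k + 1)
  isLink (k : ℕ) (hk : k < n) : IsLink R Δ w b (P k) (P (k + 1)) (μ k) (E k)

theorem IsMedianOrder.exists_isLinkChain (h : IsMedianOrder R N) (hΔ : 1 ≤ Δ) (hw : 1 ≤ w)
    (hb : b = 3 ^ (Δ * w)) {L : ℕ → ℕ} (hbL : ∀ k, b ^ 15 ≤ L k)
    (hL : ∀ k, L k ≤ 2 * L (k + 1)) (hN : 6 * ∑ k ∈ range (n + 1), L k ≤ N) :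
    ∃ pos P μ E, IsLinkChain R Δ w b N n L pos P μ E := by
  have hb1 : 1 ≤ b := hb ▸ one_le_pow₀ (by norm_num)
  have six_mul_sum_le {k : ℕ} (hk : k ≤ n) : 6 * ∑ i ∈ range (k + 1), L i ≤ N := by
    refine le_trans ?_ hN
    gcongr
  obtain ⟨s, hs, hlink⟩ := exists_seq_of_step (n := n)
    (valid := fun k (s : ℕ × Finset ℕ) => IsBlock b s.1 (L k) s.2 ∧
      s.1 + L k ≤ 6 * ∑ i ∈ range (k + 1), L i)
    (rel := fun k s s' => s.1 + L k ≤ s'.1 ∧ ∃ μ E, IsLink R Δ w b s.2 s'.2 μ E)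
    ⟨(0, Ico 0 (L 0)), ⟨by simp, by
      simpa using le_mul_of_one_le_left (Nat.cast_nonneg (L 0)) (one_le_pow₀ hb1)⟩,
      by simp; lia⟩
    fun k hk s ⟨hs, _⟩ => by
      have hsum := sum_range_succ L (k + 1)
      obtain ⟨q, Q, hsq, hqN, hQ, hlink⟩ := h.exists_isBlock_isLink hΔ hw hb hs (hbL k) (hL k)
        (by have := six_mul_sum_le hk; lia)
      exact ⟨(q, Q), ⟨hQ, by rw [hsum]; lia⟩, hsq, hlink⟩
  choose! hpos μ E hlink using hlink
  exact ⟨fun k => (s k).1, fun k => (s k).2, μ, E, fun k hk => (hs k hk).1,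
    fun k hk => (hs k hk).2.trans (six_mul_sum_le hk), hpos, hlink⟩

theorem IsLinkChain.add_le_of_lt {L pos : ℕ → ℕ} {P : ℕ → Finset ℕ} {μ : ℕ → ℕ → ℝ}
    {E : ℕ → ℕ → Finset ℕ} (h : IsLinkChain R Δ w b N n L pos P μ E) {k k' : ℕ} (hkk' : k < k')
    (hk' : k' ≤ n) : pos k + L k ≤ pos k' := by
  induction k', hkk' using Nat.le_induction with
  | base => exact h.add_le_succ k hk'
  | succ m _ ih =>
    have := h.add_le_succ m hk'
    have := ih (by lia)
    lia

end LinkChain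

section LinkWeight

variable {W : Type*} [DecidableEq W] {R : W → W → Prop} {P Q D : Finset W} {μ : W → ℝ}
  {E : ℕ → Finset W} {Δ w : ℕ} {b : ℝ} {a : W}

namespace IsLink

theorem card_le (h : IsLink R Δ w b P Q μ E) (hb : 0 < b) (j : ℕ) : #P ≤ b ^ 6 * #(E j) :=
  (div_le_iff₀' (by positivity)).1 (h.isNest.le_card j)

theorem subset_left (h : IsLink R Δ w b P Q μ E) (j : ℕ) : E j ⊆ P :=
  (h.isNest.antitone (Nat.zero_le j)).trans h.subset

theorem one_le_of_mem_left (h : IsLink R Δ w b P Q μ E) (hb : 1 ≤ b) (hP : #P ≤ b ^ 6 * #D)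
    (ha : a ∈ P) : 1 ≤ b ^ 14 * #D * μ a := by
  have hμ := h.weight_nonneg a
  calc 1 ≤ #P * μ a := h.one_le_left a ha
    _ ≤ b ^ 6 * #D * μ a := by gcongr
    _ ≤ b ^ 14 * #D * μ a := by gcongr; norm_num

theorem one_le_of_mem_right (h : IsLink R Δ w b P Q μ E) (hb : 0 < b) (hQ : #Q ≤ b ^ 6 * #D)
    (ha : a ∈ Q) : 1 ≤ b ^ 14 * #D * μ a := by
  have hμ := h.weight_nonneg a
  calc 1 ≤ b ^ 8 * #Q * μ a := h.one_le_right a ha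
    _ ≤ b ^ 8 * (b ^ 6 * #D) * μ a := by gcongr
    _ = b ^ 14 * #D * μ a := by ring

end IsLink

end LinkWeight

section Host

variable {V : Type*} {g : V → V → Prop} {R : ℕ → ℕ → Prop} {Δ w N n : ℕ} {b : ℝ} {L pos : ℕ → ℕ}
  {P : ℕ → Finset ℕ} {μ : ℕ → ℕ → ℝ} {E : ℕ → ℕ → Finset ℕ} {f : V → ℕ} {u v : V}

theorem div_eq_and_mod_lt_or_div_eq_succ {w i i' : ℕ} (hii' : i < i') (hw : i' ≤ i + w) :
    i' / w = i / w ∧ i % w < i' % w ∨ i' / w = i / w + 1 := by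
  have hw0 : 0 < w := by lia
  have hle : i' / w ≤ i / w + 1 := (Nat.div_le_div_right hw).trans_eq (Nat.add_div_right i hw0)
  have := Nat.div_le_div_right (c := w) hii'.le
  have := Nat.div_add_mod i w
  have := Nat.div_add_mod i' w
  by_cases heq : i' / w = i / w
  · rw [heq] at this
    exact .inl ⟨heq, by lia⟩
  · exact .inr (by lia)

theorem poor_mul_pow_lt_one (hΔ : 1 ≤ Δ) (hw : 1 ≤ w) (hb : b = 3 ^ (Δ * w)) :
    4 * 3 ^ (2 * Δ) * (((b ^ 20)⁻¹) ^ (2 * Δ) * 3 ^ Δ) * (b ^ 14) ^ Δ *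
      (2 * Δ * b ^ 20) ^ Δ < 1 := by
  have hb0 : 0 < b := hb ▸ by positivity
  have two_mul_lt : 2 * Δ < b := by
    have bernoulli : (1 : ℝ) + Δ * 2 ≤ (1 + 2) ^ Δ := one_add_mul_le_pow (by norm_num) Δ
    calc (2 * Δ : ℝ) < (1 + 2) ^ Δ := by linarith
      _ = 3 ^ Δ := by norm_num
      _ ≤ b := hb ▸ pow_le_pow_right₀ (by norm_num) (Nat.le_mul_of_pos_right _ hw)
  have le_pow : 108 ≤ b ^ 5 := by
    calc (108 : ℝ) ≤ 3 ^ 5 := by norm_num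
      _ ≤ b ^ 5 := by
        gcongr
        exact hb ▸ le_self_pow₀ (by norm_num) (Nat.mul_ne_zero (by lia) (by lia))
  have hbase : 108 * b ^ 14 * (2 * Δ) < b ^ 20 := by
    calc 108 * b ^ 14 * (2 * Δ) ≤ b ^ 5 * b ^ 14 * (2 * Δ) := by gcongr
      _ < b ^ 5 * b ^ 14 * b := by gcongr
      _ = b ^ 20 := by ring
  calc _ ≤ 4 ^ Δ * 3 ^ (2 * Δ) * (((b ^ 20)⁻¹) ^ (2 * Δ) * 3 ^ Δ) * (b ^ 14) ^ Δ *
        (2 * Δ * b ^ 20) ^ Δ := by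
        gcongr
        exact le_self_pow₀ (by norm_num) (by lia)
    _ = (108 * b ^ 14 * (2 * Δ) / b ^ 20) ^ Δ := by
        simp only [pow_mul, ← mul_pow]
        congr 1
        field_simp
        norm_num
    _ < 1 := pow_lt_one₀ (by positivity) ((div_lt_one (by positivity)).2 hbase) (by lia)

/-- The set into which a vertex of level `i` is embedded: the levels are cut into blocks of `w`
consecutive ones, and `host E w i` is the member of the nest of the block of `i` given by the
position of `i` in this block. -/
def host (E : ℕ → ℕ → Finset ℕ) (w i : ℕ) : Finset ℕ :=
  E (i / w) (i % w)

namespace IsLinkChain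

variable {i i' : ℕ}

theorem host_subset (h : IsLinkChain R Δ w b N n L pos P μ E) (hi : i / w < n) :
    host E w i ⊆ P (i / w) :=
  (h.isLink _ hi).subset_left _

theorem host_subset_Ico (h : IsLinkChain R Δ w b N n L pos P μ E) (hi : i / w < n) :
    host E w i ⊆ Ico (pos (i / w)) (pos (i / w) + L (i / w)) :=
  (h.host_subset hi).trans (h.isBlock _ hi.le).subset_Ico

theorem card_le_card_host (h : IsLinkChain R Δ w b N n L pos P μ E) (hb : 0 < b)
    (hi : i / w < n) : #(P (i / w)) ≤ b ^ 6 * #(host E w i) :=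
  (h.isLink _ hi).card_le hb _

theorem le_card_host (h : IsLinkChain R Δ w b N n L pos P μ E) (hb : 0 < b)
    (hi : i / w < n) : L (i / w) ≤ b ^ 14 * #(host E w i) := by
  calc (L (i / w) : ℝ) ≤ b ^ 8 * #(P (i / w)) := (h.isBlock _ hi.le).le_card
    _ ≤ b ^ 8 * (b ^ 6 * #(host E w i)) := by gcongr; exact h.card_le_card_host hb hi
    _ = b ^ 14 * #(host E w i) := by ring

theorem disjoint_host (h : IsLinkChain R Δ w b N n L pos P μ E) (hi' : i' / w < n)
    (hii' : i / w < i' / w) : Disjoint (host E w i) (host E w i') := by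
  rw [disjoint_left]
  intro x hx hx'
  have := mem_Ico.1 (h.host_subset_Ico (hii'.trans hi') hx)
  have := mem_Ico.1 (h.host_subset_Ico hi' hx')
  have := h.add_le_of_lt hii' hi'.le
  lia

theorem div_eq_div_of_not_disjoint (h : IsLinkChain R Δ w b N n L pos P μ E) (hi : i / w < n)
    (hi' : i' / w < n) (hdisj : ¬ Disjoint (host E w i) (host E w i')) : i / w = i' / w := by
  obtain hlt | heq | hgt := lt_trichotomy (i / w) (i' / w)
  · exact absurd (h.disjoint_host hi' hlt) hdisj
  · exact heq
  · exact absurd (h.disjoint_host hi hgt).symm hdisj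

theorem host_subset_union (h : IsLinkChain R Δ w b N n L pos P μ E) (hi : i / w < n)
    (hi' : i' / w < n) (hii' : i < i') (hw : i' ≤ i + w) :
    host E w i' ⊆ E (i / w) (i % w + 1) ∪ P (i / w + 1) := by
  obtain ⟨hdiv, hmod⟩ | hdiv := div_eq_and_mod_lt_or_div_eq_succ hii' hw
  · rw [host, hdiv]
    exact ((h.isLink _ hi).isNest.antitone hmod).trans subset_union_left
  · exact (hdiv ▸ h.host_subset hi').trans subset_union_right

theorem one_le_of_mem_host (h : IsLinkChain R Δ w b N n L pos P μ E) (hb : 1 ≤ b) (hi : i / w < n)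
    (hi' : i' / w < n) (hii' : i < i') (hw : i' ≤ i + w) {a : ℕ} (ha : a ∈ host E w i') :
    1 ≤ b ^ 14 * #(host E w i') * μ (i / w) a := by
  have hcard := h.card_le_card_host (zero_lt_one.trans_le hb) hi'
  have haP := h.host_subset hi' ha
  obtain ⟨hdiv, -⟩ | hdiv := div_eq_and_mod_lt_or_div_eq_succ hii' hw
  · rw [hdiv] at hcard haP
    exact (h.isLink _ hi).one_le_of_mem_left hb hcard haP
  · rw [hdiv] at hcard haP
    exact (h.isLink _ hi).one_le_of_mem_right (zero_lt_one.trans_le hb) hcard haP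

theorem boxDensity_host_le [Fintype V] [DecidableEq V]
    (h : IsLinkChain R Δ w b N n L pos P μ E) (hw : 0 < w) (hb : 1 ≤ b) (hfn : ∀ v, f v / w < n)
    (hf : ∀ u v, g u v → f u < f v ∧ f v ≤ f u + w) (hout : #(nbrs g u univ) ≤ Δ) :
    boxDensity (fun c : nbrs g u univ => host E w (f c)) (fun ψ =>
      (#(commonNbrs (flip R) ψ (host E w (f u))) : ℝ) < (b ^ 20)⁻¹ * #(host E w (f u))) ≤
      4 * 3 ^ (2 * Δ) * (((b ^ 20)⁻¹) ^ (2 * Δ) * 3 ^ Δ) * (b ^ 14) ^ Δ := by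
  have adj (c : nbrs g u univ) : g u c := (mem_nbrs.1 c.2).2
  have hlink := h.isLink _ (hfn u)
  refine boxDensity_le_of_card_le (by positivity) ((card_filter_le_badWeight hlink.weight_nonneg
    ((Fintype.card_coe _).trans_le hout) (A := E (f u / w) (f u % w + 1) ∪ P (f u / w + 1))
    (fun c => h.host_subset_union (hfn u) (hfn c) (hf u c (adj c)).1 (hf u c (adj c)).2)
    (one_le_pow₀ hb) (fun c a ha => h.one_le_of_mem_host hb (hfn u) (hfn c) (hf u c (adj c)).1
      (hf u c (adj c)).2 ha) _).trans ?_)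
  gcongr
  exact hlink.isNest.badWeight_le _ (Nat.mod_lt _ hw)

theorem card_not_disjoint_host_le [Fintype V] (h : IsLinkChain R Δ w b N n L pos P μ E)
    (hfn : ∀ v, f v / w < n) (u : V) :
    #{v | ¬ Disjoint (host E w (f v)) (host E w (f u))} ≤ #{v | f v / w = f u / w} :=
  card_le_card <| monotone_filter_right _ fun v _ hv =>
    h.div_eq_div_of_not_disjoint (hfn v) (hfn u) hv

theorem mul_card_block_lt [Fintype V] (h : IsLinkChain R Δ w b N n L pos P μ E) (hb : 0 < b)
    (hfn : ∀ v, f v / w < n) (hL : ∀ k, b ^ 35 * #{v | f v / w = k} < L k) (u : V) :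
    b * #{v | f v / w = f u / w} < (b ^ 20)⁻¹ * #(host E w (f u)) := by
  rw [lt_inv_mul_iff₀ (by positivity)]
  refine lt_of_mul_lt_mul_left ?_ (by positivity : 0 ≤ b ^ 14)
  calc _ = b ^ 35 * (#{v | f v / w = f u / w} : ℝ) := by ring
    _ < L (f u / w) := hL _
    _ ≤ _ := h.le_card_host hb (hfn u)

theorem card_host_add_card_not_disjoint_lt [Fintype V] (h : IsLinkChain R Δ w b N n L pos P μ E)
    (hΔ : 1 ≤ Δ) (hb : 3 ≤ b) (hfn : ∀ v, f v / w < n)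
    (hL : ∀ k, b ^ 35 * #{v | f v / w = k} < L k) (u : V) :
    Δ * (#(host E w (f u)) / (2 * Δ * b ^ 20)) +
      #{v | ¬ Disjoint (host E w (f v)) (host E w (f u))} < (b ^ 20)⁻¹ * #(host E w (f u)) := by
  have half : Δ * (#(host E w (f u)) / (2 * Δ * b ^ 20)) =
      (b ^ 20)⁻¹ * #(host E w (f u)) / 2 := by
    have : (0 : ℝ) < Δ := mod_cast hΔ
    field_simp
  have hoverlap : (#{v | ¬ Disjoint (host E w (f v)) (host E w (f u))} : ℝ) ≤
      #{v | f v / w = f u / w} := mod_cast h.card_not_disjoint_host_le hfn u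
  have hblock := h.mul_card_block_lt (by linarith) hfn hL u
  have : 3 * (#{v | f v / w = f u / w} : ℝ) ≤ b * #{v | f v / w = f u / w} := by gcongr
  have : (0 : ℝ) ≤ #{v | f v / w = f u / w} := by positivity
  rw [half]
  linarith

theorem exists_embedding [Fintype V] (h : IsLinkChain R Δ w b N n L pos P μ E) (hΔ : 1 ≤ Δ)
    (hw : 1 ≤ w) (hb : b = 3 ^ (Δ * w)) (hf : ∀ u v, g u v → f u < f v ∧ f v ≤ f u + w)
    (hfn : ∀ v, f v / w < n) (hout : ∀ u, #(nbrs g u univ) ≤ Δ)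
    (hin : ∀ v, #(nbrs (flip g) v univ) ≤ Δ) (hL : ∀ k, b ^ 35 * #{v | f v / w = k} < L k) :
    ∃ φ : V → ℕ, (∀ v, φ v < N) ∧ Function.Injective φ ∧ ∀ u v, g u v → R (φ u) (φ v) := by
  classical
  have hb3 : 3 ≤ b := hb ▸ le_self_pow₀ (by norm_num) (Nat.mul_ne_zero (by lia) (by lia))
  have hb0 : 0 < b := by linarith
  have host_nonempty (u : V) : (host E w (f u)).Nonempty := by
    have hpos : 0 < (b ^ 20)⁻¹ * (#(host E w (f u)) : ℝ) :=
      lt_of_le_of_lt (by positivity) (h.mul_card_block_lt hb0 hfn hL u)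
    exact card_pos.1 (Nat.cast_pos.1 (pos_of_mul_pos_right hpos (by positivity)))
  obtain ⟨φ, hφ, hinj, hadj⟩ := OrientedRamsey.exists_embedding (R := R)
    (D := fun v => host E w (f v)) (θ := fun u => (b ^ 20)⁻¹ * #(host E w (f u)))
    (M := 2 * Δ * b ^ 20) (β := 4 * 3 ^ (2 * Δ) * (((b ^ 20)⁻¹) ^ (2 * Δ) * 3 ^ Δ) * (b ^ 14) ^ Δ)
    f (fun u v huv => (hf u v huv).1) hout hin host_nonempty
    (one_le_mul_of_one_le_of_one_le (by norm_cast; lia) (one_le_pow₀ (by linarith)))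
    (by positivity) (poor_mul_pow_lt_one hΔ hw hb)
    (fun u => h.boxDensity_host_le hw (by linarith) hfn hf (hout u))
    (h.card_host_add_card_not_disjoint_lt hΔ hb3 hfn hL)
  refine ⟨φ, fun v => ?_, hinj, hadj⟩
  have := mem_Ico.1 (h.host_subset_Ico (hfn v) (hφ v))
  have := h.add_le _ (hfn v).le
  lia

end IsLinkChain

end Host

section Smoothing

/-- A majorant of `c` that at most halves at each step and has average `O(1 + average of c)`. -/
def smoothing (c : ℕ → ℕ) : ℕ → ℕ
  | 0 => c 0 + 1
  | k + 1 => smoothing c k / 2 + (c (k + 1) + 1)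

theorem lt_smoothing (c : ℕ → ℕ) (k : ℕ) : c k < smoothing c k := by
  cases k <;> rw [smoothing] <;> lia

theorem smoothing_le_two_mul (c : ℕ → ℕ) (k : ℕ) : smoothing c k ≤ 2 * smoothing c (k + 1) := by
  rw [smoothing]
  lia

theorem sum_smoothing_add_le (c : ℕ → ℕ) (n : ℕ) :
    ∑ k ∈ range (n + 1), smoothing c k + smoothing c n ≤ 2 * ∑ k ∈ range (n + 1), (c k + 1) := by
  induction n with
  | zero => simp [smoothing, Nat.two_mul]
  | succ n ih =>
    rw [sum_range_succ, sum_range_succ _ (n + 1)]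
    have : smoothing c (n + 1) = smoothing c n / 2 + (c (n + 1) + 1) := rfl
    lia

end Smoothing

section Grading

variable {V : Type*} [Fintype V] {g : V → V → Prop} {w : ℕ}

theorem exists_grading_lt_card {f : V → ℕ} (hf : ∀ u v, g u v → f u < f v ∧ f v ≤ f u + w) :
    ∃ f' : V → ℕ, (∀ u v, g u v → f' u < f' v ∧ f' v ≤ f' u + w) ∧
      ∀ v, f' v < Fintype.card V := by
  have mem (v : V) : f v ∈ univ.image f := mem_image_of_mem f (mem_univ v)
  refine ⟨fun v => #{x ∈ univ.image f | x < f v}, fun u v huv => ⟨?_, ?_⟩, fun v => ?_⟩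
  · refine card_lt_card <| ssubset_iff_of_subset (monotone_filter_right _ fun x _ hx =>
      hx.trans (hf u v huv).1) |>.2 ⟨f u, mem_filter.2 ⟨mem u, (hf u v huv).1⟩, by simp⟩
  · have hsub : {x ∈ univ.image f | x < f v} ⊆
        {x ∈ univ.image f | x < f u} ∪ Ico (f u) (f v) := fun x hx => by
      obtain ⟨hxf, hxv⟩ := mem_filter.1 hx
      rw [mem_union, mem_filter, mem_Ico]
      exact (lt_or_ge x (f u)).imp (⟨hxf, ·⟩) (⟨·, hxv⟩)
    have hcard := (card_le_card hsub).trans (card_union_le _ _)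
    rw [Nat.card_Ico] at hcard
    have := (hf u v huv).2
    exact hcard.trans (by lia)
  · exact (card_lt_card (filter_ssubset (p := (· < f v)).2
      ⟨f v, mem v, lt_irrefl _⟩)).trans_le card_image_le

theorem sum_smoothing_card_div_le {n : ℕ} {f : V → ℕ} (hfn : ∀ v, f v ≤ n) (w : ℕ) :
    ∑ k ∈ range (n + 1), smoothing (fun k => #{v | f v / w = k}) k ≤
      2 * (Fintype.card V + (n + 1)) := by
  have sum_card : ∑ k ∈ range (n + 1), #{v | f v / w = k} = Fintype.card V :=
    (card_eq_sum_card_fiberwise fun v _ => mem_coe.2 <| mem_range_succ_iff.2 <|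
      (Nat.div_le_self _ _).trans (hfn v)).symm
  have hsum := sum_smoothing_add_le (fun k => #{v | f v / w = k}) n
  rw [sum_add_distrib, sum_card, sum_const, card_range, smul_eq_mul, mul_one] at hsum
  exact (Nat.le_add_right _ _).trans hsum

end Grading

section Tournament

variable {V : Type*} [Fintype V] {g : V → V → Prop} {Δ w : ℕ}

theorem IsMedianOrder.exists_embedding [Nonempty V] {R : ℕ → ℕ → Prop} {N : ℕ}
    (h : IsMedianOrder R N) (hΔ : 1 ≤ Δ) (hw : 1 ≤ w)
    (hN : 3 ^ (39 * (Δ * w)) * Fintype.card V ≤ N) {f : V → ℕ}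
    (hf : ∀ u v, g u v → f u < f v ∧ f v ≤ f u + w) (hout : ∀ u, #(nbrs g u univ) ≤ Δ)
    (hin : ∀ v, #(nbrs (flip g) v univ) ≤ Δ) :
    ∃ φ : V → ℕ, (∀ v, φ v < N) ∧ Function.Injective φ ∧ ∀ u v, g u v → R (φ u) (φ v) := by
  obtain ⟨f, hf, hfn⟩ := exists_grading_lt_card hf
  set c : ℕ → ℕ := fun k => #{v | f v / w = k}
  set L : ℕ → ℕ := fun k => 3 ^ (35 * (Δ * w)) * smoothing c k
  have one_le (k : ℕ) : 1 ≤ smoothing c k := (lt_smoothing c k).pos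
  have hsum : 6 * ∑ k ∈ range (Fintype.card V + 1), L k ≤ N := by
    calc 6 * ∑ k ∈ range (Fintype.card V + 1), L k
        ≤ 6 * (3 ^ (35 * (Δ * w)) * (6 * Fintype.card V)) := by
          rw [← mul_sum]
          gcongr
          have : 0 < Fintype.card V := Fintype.card_pos
          exact (sum_smoothing_card_div_le (fun v => (hfn v).le) w).trans (by lia)
      _ = 36 * 3 ^ (35 * (Δ * w)) * Fintype.card V := by ring
      _ ≤ 3 ^ (4 * (Δ * w)) * 3 ^ (35 * (Δ * w)) * Fintype.card V := by
          gcongr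
          calc 36 ≤ 3 ^ 4 := by norm_num
            _ ≤ 3 ^ (4 * (Δ * w)) := by gcongr; exacts [by norm_num, by nlinarith]
      _ = 3 ^ (39 * (Δ * w)) * Fintype.card V := by ring
      _ ≤ N := hN
  obtain ⟨pos, P, μ, E, hchain⟩ := h.exists_isLinkChain hΔ hw rfl (L := L)
    (fun k => by
      rw [← pow_mul]
      norm_cast
      exact (Nat.pow_le_pow_right (by norm_num) (by lia)).trans
        (Nat.le_mul_of_pos_right _ (one_le k)))
    (fun k => by
      have := Nat.mul_le_mul_left (3 ^ (35 * (Δ * w))) (smoothing_le_two_mul c k)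
      lia)
    hsum
  refine hchain.exists_embedding hΔ hw rfl hf
    (fun v => (Nat.div_le_self _ _).trans_lt (hfn v)) hout hin fun k => ?_
  rw [← pow_mul, Nat.mul_comm _ 35]
  exact_mod_cast Nat.mul_lt_mul_of_pos_left (lt_smoothing c k) (by positivity)

theorem exists_embedding_of_le_card {W : Type*} [Fintype W] {T : W → W → Prop}
    (hT : Pairwise fun x y => T x y ∨ T y x) (hΔ : 1 ≤ Δ) (hw : 1 ≤ w)
    (hcard : 3 ^ (39 * (Δ * w)) * Fintype.card V ≤ Fintype.card W) {f : V → ℕ}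
    (hf : ∀ u v, g u v → f u < f v ∧ f v ≤ f u + w) (hout : ∀ u, #(nbrs g u univ) ≤ Δ)
    (hin : ∀ v, #(nbrs (flip g) v univ) ≤ Δ) :
    ∃ φ : V → W, Function.Injective φ ∧ ∀ u v, g u v → T (φ u) (φ v) := by
  obtain hV | hV := isEmpty_or_nonempty V
  · exact ⟨isEmptyElim, Function.injective_of_subsingleton _, isEmptyElim⟩
  have : Nonempty W := Fintype.card_pos_iff.1 <| lt_of_lt_of_le
    (Nat.mul_pos (by positivity) Fintype.card_pos) hcard
  obtain ⟨e, he, horder⟩ := exists_isMedianOrder hT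
  obtain ⟨φ, hφ, hinj, hadj⟩ := horder.exists_embedding hΔ hw hcard hf hout hin
  exact ⟨e ∘ φ, fun u v huv => hinj (he (hφ u) (hφ v) huv), hadj⟩

end Tournament

end OrientedRamsey

open OrientedRamsey in
theorem graded_bandwidth_oriented_ramsey_general {V : Type*} [Fintype V] (G : Digraph V)
    (Δ w : ℕ) (hΔ : 1 ≤ Δ) (hw : 1 ≤ w) (hout : ∀ v, Nat.card {u | G.Adj v u} ≤ Δ)
    (hin : ∀ v, Nat.card {u | G.Adj u v} ≤ Δ) (hband : G.GradedBandwidthAtMost w) :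
    orientedRamsey G ≤ 3 ^ (39 * Δ * w) * Fintype.card V := by
  obtain ⟨f, hf⟩ := hband
  refine Nat.sInf_le fun T ⟨_, hT⟩ => ?_
  exact exists_embedding_of_le_card
    (fun x y hxy => or_iff_not_imp_right.2 (hT x y hxy).2) hΔ hw
    (by rw [Fintype.card_fin, Nat.mul_assoc 39]) hf
    (fun u => (card_nbrs_univ G.Adj u).trans_le (hout u))
    (fun v => (card_nbrs_univ (flip G.Adj) v).trans_le (hin v))

/-- If `G` has maximum degree at most `Δ ≥ 1` and graded bandwidth at most
`w ≥ 1`, then `r⃗(G) ≤ 3^(57Δw) · |V(G)|`. -/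
theorem graded_bandwidth_oriented_ramsey {V : Type} [Fintype V] (G : Digraph V)
    (Δ w : ℕ) (hΔ : 1 ≤ Δ) (hw : 1 ≤ w)
    (hdeg : ∀ v : V, G.degree v ≤ Δ)
    (hband : G.GradedBandwidthAtMost w) :
    orientedRamsey G ≤ 3 ^ (57 * Δ * w) * Fintype.card V :=
  (graded_bandwidth_oriented_ramsey_general G Δ w hΔ hw
    (fun v => (Nat.card_mono (Set.toFinite _) fun _ => Or.inl).trans (hdeg v))
    (fun v => (Nat.card_mono (Set.toFinite _) fun _ => Or.inr).trans (hdeg v)) hband).trans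
    (by gcongr <;> norm_num)
end

section
/- Let T be a tournament on N vertices with a median order v_1, …, v_N, and let j, k, a ≥ 1 be integers satisfying j − ka ≥ 1 and j + a + 1 ≤ N. Then for I = [j − ka, j) and any nonempty subset A ⊆ [j, j + a), the density of edges directed from I to A satisfies d(I, A) ≥ (k − 1)/(2k). -/
/-- The number of forward edges of `T` under the vertex ordering `v 0, v 1, …`. -/
noncomputable def forwardEdges {V : Type*} {N : ℕ} (T : Digraph V) (v : Fin N ≃ V) : ℕ :=
  Nat.card {p : Fin N × Fin N | p.1 < p.2 ∧ T.Adj (v p.1) (v p.2)}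

/-- `v` is a median order of `T`: it maximizes the number of forward edges over all
orderings of the vertices of `T`. -/
def IsMedianOrder {V : Type*} {N : ℕ} (T : Digraph V) (v : Fin N ≃ V) : Prop :=
  ∀ w : Fin N ≃ V, forwardEdges T w ≤ forwardEdges T v

/-- The interval `[lo, hi)` of a vertex ordering `v`, in the paper's 1-indexed notation:
the set `{v_lo, v_{lo+1}, …, v_{hi-1}}`. -/
def ordInterval {V : Type*} [DecidableEq V] {N : ℕ} (v : Fin N ≃ V) (lo hi : ℕ) :
    Finset V :=
  (Finset.univ.filter (fun p : Fin N => lo ≤ (p : ℕ) + 1 ∧ (p : ℕ) + 1 < hi)).image v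

/-- The number of edges directed from `S₁` to `S₂` in a digraph `T`. -/
def eCount {V : Type*} [DecidableEq V] (T : Digraph V) [DecidableRel T.Adj]
    (S₁ S₂ : Finset V) : ℕ :=
  ((S₁ ×ˢ S₂).filter (fun p => T.Adj p.1 p.2)).card

/-!
Reinserting `v_p` just before `v_l` inverts exactly the pairs `(v_q, v_p)` with `l ≤ q < p`, so in a
median order at least half of these pairs are forward edges. Take `l` to be the left end of `I` and
`v_p ∈ A`: fewer than `a` of the vertices `v_q` lie outside `I`, whence `v_p` has at least
`(|I| - a) / 2` in-neighbours in `I`. Averaging over `A` gives the density bound.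
-/

open Finset Equiv

/-- A semicomplete digraph: any two distinct vertices are joined by an edge in at least one
direction. Both directions may be present, and so may loops. -/
def IsSemicomplete {V : Type*} (T : Digraph V) : Prop :=
  Pairwise fun x y ↦ T.Adj x y ∨ T.Adj y x

/-- The inversions of a permutation `σ`, each listed once, in increasing order. Replacing a vertex
ordering `v` by `v ∘ σ⁻¹`, which moves the vertex at position `i` to position `σ i`, reverses
exactly the pairs of positions in `inversions σ`. -/
def inversions {α : Type*} [Fintype α] [LinearOrder α] (σ : Perm α) : Finset (α × α) :=
  {p | p.1 < p.2 ∧ σ p.2 < σ p.1}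

theorem val_cycleIcc {n : ℕ} {i j : Fin n} (hij : i ≤ j) (k : Fin n) :
    (Fin.cycleIcc i j k : ℕ) = if k = j then (i : ℕ) else if i ≤ k ∧ k < j then k + 1 else k := by
  have : NeZero n := ⟨by rintro rfl; exact i.elim0⟩
  rcases lt_or_ge k i with hki | hik
  · simp [Fin.cycleIcc_of_lt hki, hki.not_ge, (hki.trans_le hij).ne]
  rcases lt_trichotomy k j with hkj | rfl | hjk
  · simp [Fin.cycleIcc_of_ge_of_lt hik hkj, hik, hkj, hkj.ne, Fin.val_add_one_of_lt' (i := k)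
      (by lia)]
  · simp [Fin.cycleIcc_of_last hij]
  · simp [Fin.cycleIcc_of_gt hjk, hjk.ne', hjk.not_gt]

theorem inversions_cycleIcc {n : ℕ} {i j : Fin n} (hij : i ≤ j) :
    inversions (Fin.cycleIcc i j) = Ico i j ×ˢ {j} := by
  ext ⟨x, y⟩
  simp only [inversions, mem_filter_univ, mem_product, mem_Ico, mem_singleton, Fin.lt_def,
    Fin.le_def, Fin.ext_iff, val_cycleIcc hij] at hij ⊢
  grind

section MedianOrder

variable {V : Type*} {N : ℕ} (T : Digraph V) [DecidableRel T.Adj] (v : Fin N ≃ V)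

theorem forwardEdges_symm_trans (σ : Perm (Fin N)) :
    forwardEdges T (σ.symm.trans v) =
      #{p : Fin N × Fin N | σ p.1 < σ p.2 ∧ T.Adj (v p.1) (v p.2)} := by
  rw [forwardEdges, ← Fintype.card_subtype, ← Nat.card_eq_fintype_card]
  exact Nat.card_congr ((σ.symm.prodCongr σ.symm).subtypeEquiv (by simp))

theorem forwardEdges_eq_card_filter :
    forwardEdges T v = #{p : Fin N × Fin N | p.1 < p.2 ∧ T.Adj (v p.1) (v p.2)} :=
  forwardEdges_symm_trans T v (Equiv.refl _)

variable {T v}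

namespace IsMedianOrder

theorem card_backward_inversions_le_card_forward_inversions (hv : IsMedianOrder T v)
    (σ : Perm (Fin N)) :
    #{p ∈ inversions σ | T.Adj (v p.2) (v p.1)} ≤ #{p ∈ inversions σ | T.Adj (v p.1) (v p.2)} := by
  let F : Finset (Fin N × Fin N) := {p | p.1 < p.2 ∧ T.Adj (v p.1) (v p.2)}
  let F' : Finset (Fin N × Fin N) := {p | σ p.1 < σ p.2 ∧ T.Adj (v p.1) (v p.2)}
  have hmax : #F' ≤ #F := by
    rw [← forwardEdges_symm_trans, ← forwardEdges_eq_card_filter]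
    exact hv (σ.symm.trans v)
  calc
    #{p ∈ inversions σ | T.Adj (v p.2) (v p.1)} ≤ #(F' \ F) :=
      card_le_card_of_injOn Prod.swap (fun p hp ↦ by simp_all [inversions, F, F', le_of_lt])
        Prod.swap_injective.injOn
    _ ≤ #(F \ F') := card_sdiff_le_card_sdiff_iff.2 hmax
    _ ≤ #{p ∈ inversions σ | T.Adj (v p.1) (v p.2)} := card_le_card fun p hp ↦ by
      simp only [inversions, F, F', mem_sdiff, mem_filter, mem_univ, true_and] at hp ⊢
      have hne : σ p.2 ≠ σ p.1 := σ.injective.ne hp.1.1.ne'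
      grind

theorem card_inversions_le_two_mul (hv : IsMedianOrder T v) (hT : IsSemicomplete T)
    (σ : Perm (Fin N)) :
    #(inversions σ) ≤ 2 * #{p ∈ inversions σ | T.Adj (v p.1) (v p.2)} := by
  have hcover : inversions σ ⊆
      {p ∈ inversions σ | T.Adj (v p.1) (v p.2)} ∪ {p ∈ inversions σ | T.Adj (v p.2) (v p.1)} := by
    intro p hp
    rw [← filter_or, mem_filter]
    exact ⟨hp, hT (v.injective.ne (mem_filter.1 hp).2.1.ne)⟩
  have hcard := (card_le_card hcover).trans (card_union_le _ _)
  have hback := hv.card_backward_inversions_le_card_forward_inversions σ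
  lia

theorem card_Ico_le_two_mul_card_adj (hv : IsMedianOrder T v) (hT : IsSemicomplete T)
    (l p : Fin N) :
    #(Ico l p) ≤ 2 * #{q ∈ Ico l p | T.Adj (v q) (v p)} := by
  rcases le_or_gt l p with hlp | hpl
  · simpa [inversions_cycleIcc hlp, product_singleton, filter_map, Function.comp_def] using
      hv.card_inversions_le_two_mul hT (Fin.cycleIcc l p)
  · simp [Ico_eq_empty_of_le hpl.le]

end IsMedianOrder

variable [DecidableEq V]

theorem mem_ordInterval {lo hi : ℕ} {x : V} :
    x ∈ ordInterval v lo hi ↔ lo ≤ (v.symm x : ℕ) + 1 ∧ (v.symm x : ℕ) + 1 < hi := by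
  simp [ordInterval, ← Equiv.eq_symm_apply]

variable (v) in
theorem card_ordInterval_le (lo hi : ℕ) : #(ordInterval v lo hi) ≤ hi - lo := by
  rw [← Nat.card_Ico]
  refine card_le_card_of_injOn (fun x ↦ (v.symm x : ℕ) + 1) (fun x hx ↦ ?_) fun x _ y _ hxy ↦ ?_
  · simpa [mem_ordInterval] using hx
  · exact v.symm.injective (Fin.ext (Nat.succ_injective hxy))

variable (v) in
theorem card_ordInterval {lo hi : ℕ} (hlo : 1 ≤ lo) (hhi : hi ≤ N + 1) :
    #(ordInterval v lo hi) = hi - lo := by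
  refine (card_ordInterval_le v lo hi).antisymm ?_
  rw [← Nat.card_Ico]
  refine card_le_card_of_surjOn (fun x ↦ (v.symm x : ℕ) + 1) fun m hm ↦ ?_
  rw [mem_coe, mem_Ico] at hm
  have hm_sub : m - 1 + 1 = m := by lia
  exact ⟨v ⟨m - 1, by lia⟩, by simpa [mem_ordInterval, hm_sub] using hm, by simpa using hm_sub⟩

theorem ordInterval_union_ordInterval {lo mid hi : ℕ} (hlo : lo ≤ mid) (hhi : mid ≤ hi) :
    ordInterval v lo mid ∪ ordInterval v mid hi = ordInterval v lo hi := by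
  ext x
  simp only [mem_union, mem_ordInterval]
  lia

theorem disjoint_ordInterval {lo mid hi : ℕ} :
    Disjoint (ordInterval v lo mid) (ordInterval v mid hi) :=
  disjoint_left.2 fun x hx hx' ↦ by
    rw [mem_ordInterval] at hx hx'
    lia

theorem map_Ico_eq_ordInterval (l p : Fin N) :
    (Ico l p).map v.toEmbedding = ordInterval v (l + 1) (p + 1) := by
  ext x
  simp [mem_ordInterval, mem_map_equiv]

theorem eCount_eq_sum_card_adj (T : Digraph V) [DecidableRel T.Adj] (S A : Finset V) :
    eCount T S A = ∑ y ∈ A, #{x ∈ S | T.Adj x y} := by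
  simp only [eCount, card_filter, sum_product_right]

namespace IsMedianOrder

theorem card_ordInterval_le_two_mul_card_adj (hv : IsMedianOrder T v)
    (hT : IsSemicomplete T) (lo : ℕ) (y : V) :
    #(ordInterval v lo (v.symm y + 1)) ≤
      2 * #{x ∈ ordInterval v lo (v.symm y + 1) | T.Adj x y} := by
  rcases (ordInterval v lo (v.symm y + 1)).eq_empty_or_nonempty with hempty | ⟨x, hx⟩
  · simp [hempty]
  rw [mem_ordInterval] at hx
  let l : Fin N := ⟨lo - 1, by lia⟩
  have hmap : ordInterval v lo (v.symm y + 1) = (Ico l (v.symm y)).map v.toEmbedding := by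
    rw [map_Ico_eq_ordInterval]
    ext z
    simp only [mem_ordInterval, l]
    lia
  simpa [hmap, filter_map, Function.comp_def] using hv.card_Ico_le_two_mul_card_adj hT l (v.symm y)

theorem card_ordInterval_le_two_mul_card_adj_add (hv : IsMedianOrder T v)
    (hT : IsSemicomplete T) {i j a : ℕ} {y : V} (hy : y ∈ ordInterval v j (j + a)) :
    #(ordInterval v i j) ≤ 2 * #{x ∈ ordInterval v i j | T.Adj x y} + a := by
  rcases lt_or_ge j i with hji | hij
  · have hcard := card_ordInterval_le v i j
    lia
  rw [mem_ordInterval] at hy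
  have hhalf := hv.card_ordInterval_le_two_mul_card_adj hT i y
  rw [← ordInterval_union_ordInterval hij hy.1, filter_union,
    card_union_of_disjoint disjoint_ordInterval] at hhalf
  have hunion := card_union_le {x ∈ ordInterval v i j | T.Adj x y}
    {x ∈ ordInterval v j (v.symm y + 1) | T.Adj x y}
  have hfilter := card_filter_le (ordInterval v j (v.symm y + 1)) (T.Adj · y)
  have hshort := card_ordInterval_le v j (v.symm y + 1)
  lia

theorem card_mul_card_ordInterval_le (hv : IsMedianOrder T v)
    (hT : IsSemicomplete T) {i j a : ℕ} {A : Finset V} (hA : A ⊆ ordInterval v j (j + a)) :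
    #A * #(ordInterval v i j) ≤ 2 * eCount T (ordInterval v i j) A + #A * a := by
  calc
    #A * #(ordInterval v i j) = ∑ _y ∈ A, #(ordInterval v i j) := (sum_const_nat fun _ _ ↦ rfl).symm
    _ ≤ ∑ y ∈ A, (2 * #{x ∈ ordInterval v i j | T.Adj x y} + a) :=
      sum_le_sum fun y hy ↦ hv.card_ordInterval_le_two_mul_card_adj_add hT (hA hy)
    _ = 2 * eCount T (ordInterval v i j) A + #A * a := by
      rw [sum_add_distrib, ← mul_sum, ← eCount_eq_sum_card_adj, sum_const, smul_eq_mul]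

end IsMedianOrder

end MedianOrder

theorem median_order_density_general {V : Type*} [DecidableEq V] {N : ℕ}
    (T : Digraph V) [DecidableRel T.Adj] (hT : IsSemicomplete T)
    (v : Fin N ≃ V) (hmed : IsMedianOrder T v) {i j a : ℕ} (hI : (ordInterval v i j).Nonempty)
    (A : Finset V) (hA : A ⊆ ordInterval v j (j + a)) (hAne : A.Nonempty) :
    (1 - (a : ℝ) / #(ordInterval v i j)) / 2 ≤
      (eCount T (ordInterval v i j) A : ℝ) / ((#(ordInterval v i j) : ℝ) * (#A : ℝ)) := by
  have hI_pos : (0 : ℝ) < #(ordInterval v i j) := mod_cast hI.card_pos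
  have hA_pos : (0 : ℝ) < #A := mod_cast hAne.card_pos
  have hcount : (#A : ℝ) * #(ordInterval v i j) ≤
      2 * eCount T (ordInterval v i j) A + #A * a :=
    mod_cast hmed.card_mul_card_ordInterval_le hT hA
  rw [le_div_iff₀ (mul_pos hI_pos hA_pos)]
  calc
    (1 - (a : ℝ) / #(ordInterval v i j)) / 2 * (#(ordInterval v i j) * #A)
        = ((#A : ℝ) * #(ordInterval v i j) - #A * a) / 2 := by field_simp
    _ ≤ eCount T (ordInterval v i j) A := by linarith

/-- Let `T` be a tournament on `N` vertices with a median order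
`v_1, …, v_N`, and let `j, k, a ≥ 1` with `j − ka ≥ 1` and `j + a + 1 ≤ N`.  Then for
`I = [j − ka, j)` and any nonempty `A ⊆ [j, j + a)`, the density of edges from `I` to `A`
is at least `(k − 1)/(2k)`. -/
theorem median_order_density {V : Type} [Fintype V] [DecidableEq V] {N : ℕ}
    (T : Digraph V) [DecidableRel T.Adj] (hT : T.IsTournament)
    (v : Fin N ≃ V) (hmed : IsMedianOrder T v)
    (j k a : ℕ) (hj : 1 ≤ j) (hk : 1 ≤ k) (ha : 1 ≤ a)
    (h1 : k * a + 1 ≤ j) (h2 : j + a + 1 ≤ N)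
    (A : Finset V) (hA : A ⊆ ordInterval v j (j + a)) (hAne : A.Nonempty) :
    ((k : ℝ) - 1) / (2 * k) ≤
      (eCount T (ordInterval v (j - k * a) j) A : ℝ) /
        (((ordInterval v (j - k * a) j).card : ℝ) * (A.card : ℝ)) := by
  have hcard : #(ordInterval v (j - k * a) j) = k * a := by
    rw [card_ordInterval v (by lia) (by lia)]
    lia
  have hI : (ordInterval v (j - k * a) j).Nonempty := card_pos.1 (by rw [hcard]; positivity)
  have hsemi : IsSemicomplete T := fun x y hxy ↦ or_iff_not_imp_right.2 (hT.2 x y hxy).2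
  convert median_order_density_general T hsemi v hmed hI A hA hAne using 1
  rw [hcard]
  push_cast
  field_simp
end

section
/- Let Δ ≥ 1, w ≥ 1 and s ≥ 0 be integers and let T be a tournament. Let I, B ⊆ V(T) be nonempty disjoint sets with d(I, B) ≥ 1/3 and |B| ≥ 3·3^(6Δw). Then there exist a set A ⊆ I and nested sets B_0 ⊆ B_1 ⊆ ⋯ ⊆ B_w ⊆ B such that: (1) |A| ≥ 3^(−10Δw)·|I|; (2) for every j ∈ [w], 3^(−3Δw)·|B| ≥ |B_j| ≥ 3^(−6Δw)·|B|; and (3) for every j ∈ [w], the number of Δ-element subsets S ⊆ A ∪ B_{j−1} with |N⁺(S) ∩ B_j| ≤ s is at most (3^(8Δw)·s/|B|)^(2Δ)·C(|I ∪ B_{j−1}|, Δ). -/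
/-- The common out-neighborhood of a finite set `X` of vertices of a digraph. -/
def commonOutNbhd {V : Type*} [Fintype V] [DecidableEq V] (T : Digraph V)
    [DecidableRel T.Adj] (X : Finset V) : Finset V :=
  Finset.univ.filter (fun v => ∀ x ∈ X, T.Adj x v)

/-!
Put `x = Δ * w`. Dependent random choice is used in two ways. First, restricting `B` to the common
out-neighbourhood `B'` of a random tuple of `3 * x` vertices of `I` keeps a proportion
`3 ^ (-3 * x - 1)` of `B`, while a `2 * x`-tuple in `B` with fewer than `3 ^ (-10 * x) * |I|` common
in-neighbours in `I` survives with probability at most `3 ^ (-10 * x * 3 * x)`; so there are very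
few such sparse tuples in `B'`. Secondly, since every large `C ⊆ B` spans a dense digraph, a
proportion `3 ^ (-3 * Δ)` of the `2 * Δ`-tuples in `C` is good: the common in-neighbourhood of the
tuple in `C` is large, and only few `Δ`-sets with small common out-neighbourhood in `C` are joined
to the whole tuple.

Starting with a suitable `C ⊆ B'` and passing `w` times to the common in-neighbourhood of a good
tuple leaves so many choices for the `w` tuples that some sequence of choices is not sparse. The
successive neighbourhoods, in reverse order, are the sets `B_j`, and the common in-neighbourhood in
`I` of the whole sequence is `A`.
-/

open Finset

section Averaging

variable {Ω : Type*} {W : Finset Ω}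

lemma mul_card_filter_mul_lt_le {g : Ω → ℝ} {mu lam : ℝ} (hg : ∀ x ∈ W, 0 ≤ g x) (hmu : 0 ≤ mu)
    (hsum : ∑ x ∈ W, g x ≤ mu * #W) : lam * #{x ∈ W | lam * mu < g x} ≤ #W := by
  obtain hS | hS := (W.filter fun x => lam * mu < g x).eq_empty_or_nonempty
  · simp [hS]
  have hlt : mu * (lam * #{x ∈ W | lam * mu < g x}) < mu * #W :=
    calc mu * (lam * #{x ∈ W | lam * mu < g x})
        = ∑ x ∈ W with lam * mu < g x, lam * mu := by rw [sum_const, nsmul_eq_mul]; ring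
      _ < ∑ x ∈ W with lam * mu < g x, g x :=
          sum_lt_sum_of_nonempty hS fun x hx => (mem_filter.1 hx).2
      _ ≤ ∑ x ∈ W, g x :=
          sum_le_sum_of_subset_of_nonneg (filter_subset _ _) fun x hx _ => hg x hx
      _ ≤ mu * #W := hsum
  exact (lt_of_mul_lt_mul_left hlt hmu).le

lemma mul_card_le_mul_card_filter_le_mul {f : Ω → ℝ} {F a lam : ℝ} (hF : 0 < F) (hlam : 0 ≤ lam)
    (hf : ∀ x ∈ W, f x ≤ F) (hsum : (a + 1) * (F * #W) ≤ lam * ∑ x ∈ W, f x) :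
    a * #W ≤ lam * #{x ∈ W | F ≤ lam * f x} := by
  have hpoint : ∀ x ∈ W, lam * f x ≤ lam * F * (if F ≤ lam * f x then 1 else 0) + F := by
    intro x hx
    have := mul_le_mul_of_nonneg_left (hf x hx) hlam
    split_ifs <;> linarith
  have htotal := sum_le_sum hpoint
  rw [← mul_sum, sum_add_distrib, ← mul_sum, sum_boole, sum_const, nsmul_eq_mul] at htotal
  refine le_of_mul_le_mul_left ?_ hF
  linarith

lemma card_mul_pow_le_sum_pow {f : Ω → ℝ} {c : ℝ} (hf : ∀ x ∈ W, 0 ≤ f x) (hc : 0 ≤ c)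
    (hsum : #W * c ≤ ∑ x ∈ W, f x) (n : ℕ) : #W * c ^ n ≤ ∑ x ∈ W, f x ^ n := by
  obtain rfl | hW := W.eq_empty_or_nonempty
  · simp
  cases n with
  | zero => simp
  | succ n =>
    calc #W * c ^ (n + 1) = (#W * c) ^ (n + 1) / (#W : ℝ) ^ n := by
          rw [eq_div_iff (by positivity)]; ring
      _ ≤ (∑ x ∈ W, f x) ^ (n + 1) / (#W : ℝ) ^ n := by gcongr
      _ ≤ ∑ x ∈ W, f x ^ (n + 1) := pow_sum_div_card_le_sum_pow hf n

end Averaging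

lemma exists_subset_card_le_mul_card {α : Type*} {S : Finset α} {c y : ℝ} (hc : 2 ≤ c)
    (hy : 1 ≤ y) (hS : y ≤ c * #S) : ∃ C ⊆ S, #C ≤ y ∧ y ≤ c * #C := by
  obtain ⟨C, hCS, hC⟩ := exists_subset_card_eq (min_le_right ⌊y⌋₊ #S)
  have hfloor : (⌊y⌋₊ : ℝ) ≤ y := Nat.floor_le (by linarith)
  have hone : (1 : ℝ) ≤ ⌊y⌋₊ := by exact_mod_cast (Nat.one_le_floor_iff y).2 hy
  refine ⟨C, hCS, hC ▸ le_trans (by exact_mod_cast min_le_left _ _) hfloor, ?_⟩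
  rcases le_total ⌊y⌋₊ #S with h | h
  · rw [hC, min_eq_left h]
    nlinarith [Nat.lt_floor_add_one y]
  · rwa [hC, min_eq_right h]

lemma choose_le_pow_mul_choose {D K m n : ℕ} (hD : D ≤ m) (hn : n ≤ K * m) :
    n.choose D ≤ (K * D) ^ D * m.choose D := by
  obtain rfl | hpos := D.eq_zero_or_pos
  · simp
  have hm : m ≤ D * (m + 1 - D) := by
    obtain ⟨d, rfl⟩ := Nat.exists_eq_add_of_le hD
    rw [show D + d + 1 - D = d + 1 by omega]
    nlinarith
  refine Nat.le_of_mul_le_mul_left ?_ D.factorial_pos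
  calc D.factorial * n.choose D = n.descFactorial D :=
        (Nat.descFactorial_eq_factorial_mul_choose n D).symm
    _ ≤ n ^ D := Nat.descFactorial_le_pow n D
    _ ≤ (K * (D * (m + 1 - D))) ^ D := by gcongr; exact hn.trans (by gcongr)
    _ = (K * D) ^ D * (m + 1 - D) ^ D := by rw [← mul_assoc, mul_pow]
    _ ≤ (K * D) ^ D * m.descFactorial D := by gcongr; exact Nat.pow_sub_le_descFactorial m D
    _ = D.factorial * ((K * D) ^ D * m.choose D) := by
        rw [Nat.descFactorial_eq_factorial_mul_choose]; ring

section CommonNbrs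

variable {α β γ ι : Type*}

open scoped Classical in
/-- The elements of `X` that are `r`-related to every entry of the tuple `t`. For the adjacency
relation of a digraph this is the common in-neighbourhood of `t` inside `X`. -/
noncomputable def commonNbrs (r : α → β → Prop) (X : Finset α) (t : ι → β) : Finset α :=
  {x ∈ X | ∀ i, r x (t i)}

lemma mem_commonNbrs {r : α → β → Prop} {X : Finset α} {t : ι → β} {x : α} :
    x ∈ commonNbrs r X t ↔ x ∈ X ∧ ∀ i, r x (t i) := by
  simp [commonNbrs]

lemma commonNbrs_subset (r : α → β → Prop) (X : Finset α) (t : ι → β) : commonNbrs r X t ⊆ X :=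
  fun _ hx => (mem_commonNbrs.1 hx).1

lemma sum_card_commonNbrs (r : α → β → Prop) [∀ x, DecidablePred (r x)] (X : Finset α)
    (C : Finset β) (n : ℕ) :
    ∑ t ∈ Fintype.piFinset (fun _ : Fin n => C), #(commonNbrs r X t)
      = ∑ x ∈ X, #{v ∈ C | r x v} ^ n := by
  classical
  have htuples (x : α) : {t ∈ Fintype.piFinset fun _ : Fin n => C | ∀ i, r x (t i)}
      = Fintype.piFinset fun _ : Fin n => {v ∈ C | r x v} := by
    ext t; simp [Fintype.mem_piFinset, forall_and]
  calc ∑ t ∈ Fintype.piFinset (fun _ : Fin n => C), #(commonNbrs r X t)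
      = ∑ x ∈ X, #{t ∈ Fintype.piFinset fun _ : Fin n => C | ∀ i, r x (t i)} := by
        simp_rw [commonNbrs, card_filter]; convert sum_comm
    _ = ∑ x ∈ X, #{v ∈ C | r x v} ^ n := by
        simp [htuples, Fintype.card_piFinset]

lemma card_mul_pow_le_pow_mul_sum_card_commonNbrs {r : α → β → Prop} [∀ x, DecidablePred (r x)]
    {X : Finset α} {C : Finset β} {L : ℝ} (hL : 0 < L)
    (hr : (#X : ℝ) * #C ≤ L * ∑ x ∈ X, (#{v ∈ C | r x v} : ℝ)) (n : ℕ) :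
    (#X : ℝ) * #C ^ n ≤ L ^ n *
      ∑ t ∈ Fintype.piFinset (fun _ : Fin n => C), (#(commonNbrs r X t) : ℝ) := by
  have hsum : (#X : ℝ) * (#C / L) ≤ ∑ x ∈ X, (#{v ∈ C | r x v} : ℝ) := by
    rwa [← mul_div_assoc, div_le_iff₀' hL]
  have hpow := card_mul_pow_le_sum_pow (fun _ _ => by positivity) (by positivity) hsum n
  rw [div_pow, ← mul_div_assoc, div_le_iff₀' (by positivity)] at hpow
  have hcount := congrArg (Nat.cast (R := ℝ)) (sum_card_commonNbrs r X C n)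
  push_cast at hcount
  rwa [hcount]

lemma sum_card_commonNbrs_le {q : γ → β → Prop} [∀ z, DecidablePred (q z)] {Z : Finset γ}
    {C : Finset β} {ε : ℝ} (hq : ∀ z ∈ Z, #{v ∈ C | q z v} ≤ ε * #C) (n : ℕ) :
    ∑ t ∈ Fintype.piFinset (fun _ : Fin n => C), (#(commonNbrs q Z t) : ℝ)
      ≤ ε ^ n * #Z * #C ^ n := by
  calc ∑ t ∈ Fintype.piFinset (fun _ : Fin n => C), (#(commonNbrs q Z t) : ℝ)
      = ∑ z ∈ Z, (#{v ∈ C | q z v} : ℝ) ^ n := by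
        exact_mod_cast sum_card_commonNbrs q Z C n
    _ ≤ ∑ _z ∈ Z, (ε * #C) ^ n := by
        gcongr with z hz; exact hq z hz
    _ = ε ^ n * #Z * #C ^ n := by
        rw [sum_const, nsmul_eq_mul, mul_pow]; ring

/-- Dependent random choice, in counting form. -/
theorem card_pow_le_card_filter_commonNbrs {r : α → β → Prop} {q : γ → β → Prop}
    [∀ x, DecidablePred (r x)] [∀ z, DecidablePred (q z)] {X : Finset α} {Z : Finset γ}
    {C : Finset β} {L ε : ℝ} (hX : X.Nonempty) (hL : 0 < L) (hε : 0 ≤ ε)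
    (hr : (#X : ℝ) * #C ≤ L * ∑ x ∈ X, (#{v ∈ C | r x v} : ℝ))
    (hq : ∀ z ∈ Z, #{v ∈ C | q z v} ≤ ε * #C) (n : ℕ) :
    (#C : ℝ) ^ n ≤ 3 * L ^ n *
      #{t ∈ Fintype.piFinset fun _ : Fin n => C |
        #X ≤ 3 * L ^ n * #(commonNbrs r X t) ∧
        #(commonNbrs q Z t) ≤ 3 * L ^ n * (ε ^ n * #Z)} := by
  set W := Fintype.piFinset fun _ : Fin n => C
  have hW : (#W : ℝ) = (#C : ℝ) ^ n := by simp [W, Fintype.card_piFinset]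
  set lam := 3 * L ^ n with hlam
  have hlam_pos : 0 < lam := by positivity
  set P : (Fin n → β) → Prop := fun t => #X ≤ lam * #(commonNbrs r X t)
  set Q : (Fin n → β) → Prop := fun t => #(commonNbrs q Z t) ≤ lam * (ε ^ n * #Z)
  have hP : 2 * #W ≤ lam * #{t ∈ W | P t} := by
    refine mul_card_le_mul_card_filter_le_mul (by exact_mod_cast hX.card_pos) hlam_pos.le
      (fun t _ => by exact_mod_cast card_le_card (commonNbrs_subset r X t)) ?_
    rw [hW, hlam]
    linarith [card_mul_pow_le_pow_mul_sum_card_commonNbrs hL hr n]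
  have hQ : lam * #{t ∈ W | ¬ Q t} ≤ #W := by
    simp only [Q, not_le]
    refine mul_card_filter_mul_lt_le (fun _ _ => by positivity) (by positivity) ?_
    rw [hW]
    exact sum_card_commonNbrs_le hq n
  have hcover : (#{t ∈ W | P t} : ℝ) ≤ #{t ∈ W | P t ∧ Q t} + #{t ∈ W | ¬ Q t} := by
    classical
    have hsub : {t ∈ W | P t} ⊆ {t ∈ W | P t ∧ Q t} ∪ {t ∈ W | ¬ Q t} := by
      intro t; simp only [mem_union, mem_filter]; tauto
    exact_mod_cast (card_le_card hsub).trans (card_union_le _ _)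
  rw [← hW]
  nlinarith [mul_le_mul_of_nonneg_left hcover hlam_pos.le]

end CommonNbrs

section SparseTuples

variable {α β : Type*}

open scoped Classical in
/-- The tuples of elements of `B`, indexed by `κ`, whose common `r`-neighbourhood inside `I` has
density less than `1 / c`. -/
noncomputable def sparseTuples (r : α → β → Prop) (κ : Type*) [Fintype κ] (c : ℝ) (I : Finset α)
    (B : Finset β) : Finset (κ → β) :=
  {p ∈ Fintype.piFinset fun _ => B | c * #(commonNbrs r I p) < #I}

variable {κ : Type*} [Fintype κ]

lemma mem_sparseTuples {r : α → β → Prop} {c : ℝ} {I : Finset α} {B : Finset β} {p : κ → β} :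
    p ∈ sparseTuples r κ c I B ↔ (∀ k, p k ∈ B) ∧ c * #(commonNbrs r I p) < #I := by
  simp [sparseTuples, Fintype.mem_piFinset]

lemma card_sparseTuples_le (r : α → β → Prop) (c : ℝ) (I : Finset α) (B : Finset β) :
    #(sparseTuples r κ c I B) ≤ #B ^ Fintype.card κ := by
  classical
  exact (card_filter_le _ _).trans (by simp [Fintype.card_piFinset])

lemma sparseTuples_commonNbrs_flip_subset (r : α → β → Prop) (c : ℝ) (I : Finset α) (B : Finset β)
    {ι : Type*} (t : ι → α) :
    sparseTuples r κ c I (commonNbrs (flip r) B t)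
      ⊆ commonNbrs (fun p a => ∀ k, r a (p k)) (sparseTuples r κ c I B) t := by
  intro p hp
  simp only [mem_sparseTuples, mem_commonNbrs] at hp ⊢
  exact ⟨⟨fun k => (hp.1 k).1, hp.2⟩, fun i k => (hp.1 k).2 i⟩

lemma exists_subset_card_sparseTuples_le {r : α → β → Prop} [∀ a, DecidablePred (r a)]
    {I : Finset α} {B : Finset β} {L c : ℝ} (hI : I.Nonempty) (hB : B.Nonempty) (hL : 0 < L)
    (hc : 0 < c) (hr : (#I : ℝ) * #B ≤ L * ∑ b ∈ B, (#{a ∈ I | r a b} : ℝ)) (n : ℕ) :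
    ∃ B' ⊆ B, #B ≤ 3 * L ^ n * #B' ∧
      c ^ n * #(sparseTuples r κ c I B') ≤ 3 * L ^ n * #B ^ Fintype.card κ := by
  classical
  have hsparse : ∀ p ∈ sparseTuples r κ c I B, #{a ∈ I | ∀ k, r a (p k)} ≤ c⁻¹ * #I := by
    intro p hp
    rw [inv_mul_eq_div, le_div_iff₀' hc]
    have hfilter : {a ∈ I | ∀ k, r a (p k)} = commonNbrs r I p := by
      ext; simp [mem_commonNbrs]
    exact hfilter ▸ (mem_sparseTuples.1 hp).2.le
  have hdrc := card_pow_le_card_filter_commonNbrs (r := fun b a => r a b)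
    (Z := sparseTuples r κ c I B) hB hL (inv_nonneg.2 hc.le) (by rwa [mul_comm (#B : ℝ)]) hsparse n
  have hsamples : (0 : ℝ) < #I ^ n := by
    have := hI.card_pos
    positivity
  obtain ⟨t, ht⟩ := card_pos.1 <| Nat.cast_pos.1 <|
    pos_of_mul_pos_right (hsamples.trans_le hdrc) (by positivity)
  obtain ⟨-, hlarge, hfew⟩ := mem_filter.1 ht
  refine ⟨commonNbrs (flip r) B t, commonNbrs_subset _ _ _, hlarge, ?_⟩
  calc c ^ n * #(sparseTuples r κ c I (commonNbrs (flip r) B t))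
      ≤ c ^ n * (3 * L ^ n * (c⁻¹ ^ n * #(sparseTuples r κ c I B))) := by
        gcongr
        refine le_trans ?_ hfew
        exact_mod_cast card_le_card (sparseTuples_commonNbrs_flip_subset r c I B t)
    _ = 3 * L ^ n * #(sparseTuples r κ c I B) := by
        rw [inv_pow]; field_simp
    _ ≤ 3 * L ^ n * #B ^ Fintype.card κ := by
        gcongr
        exact_mod_cast card_sparseTuples_le r c I B

lemma sparseTuples_subset (r : α → β → Prop) (c : ℝ) (I : Finset α) {B B' : Finset β}
    (h : B ⊆ B') : sparseTuples r κ c I B ⊆ sparseTuples r κ c I B' := by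
  intro p hp
  rw [mem_sparseTuples] at hp ⊢
  exact ⟨fun k => h (hp.1 k), hp.2⟩

lemma exists_subset_card_le_card_sparseTuples_le {r : α → β → Prop} [∀ a, DecidablePred (r a)]
    {I : Finset α} {B : Finset β} {L c : ℝ} (hI : I.Nonempty) (hL : 0 < L) (hc : 0 < c)
    (hr : (#I : ℝ) * #B ≤ L * ∑ b ∈ B, (#{a ∈ I | r a b} : ℝ)) {n : ℕ} (hB : L ^ n ≤ #B) :
    ∃ C ⊆ B, #C ≤ #B / L ^ n ∧ #B / L ^ n ≤ 3 * #C ∧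
      c ^ n * #(sparseTuples r κ c I C) ≤ 3 * L ^ n * #B ^ Fintype.card κ := by
  have hLn : 0 < L ^ n := by positivity
  have hB_pos : B.Nonempty := card_pos.1 (Nat.cast_pos.1 (hLn.trans_le hB))
  obtain ⟨B', hB'B, hB', hsparse⟩ :=
    exists_subset_card_sparseTuples_le (κ := κ) hI hB_pos hL hc hr n
  obtain ⟨C, hCB', hC, hC'⟩ := exists_subset_card_le_mul_card (S := B') (c := 3)
    (y := #B / L ^ n) (by norm_num) ((one_le_div hLn).2 hB)
    ((div_le_iff₀ hLn).2 (hB'.trans_eq (mul_right_comm _ _ _)))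
  refine ⟨C, hCB'.trans hB'B, hC, hC', le_trans ?_ hsparse⟩
  gcongr
  exact sparseTuples_subset r c I hCB'

end SparseTuples

section Paths

variable {α β ι : Type*} {m : ℕ}

open scoped Classical in
/-- The elements of `C` that are `r`-related to all entries of the first `i` tuples of `f`. -/
noncomputable def survivors (r : α → β → Prop) (C : Finset α) (f : Fin m → ι → β) (i : ℕ) :
    Finset α :=
  {v ∈ C | ∀ j : Fin m, (j : ℕ) < i → ∀ l, r v (f j l)}

lemma mem_survivors {r : α → β → Prop} {C : Finset α} {f : Fin m → ι → β} {i : ℕ} {v : α} :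
    v ∈ survivors r C f i ↔ v ∈ C ∧ ∀ j : Fin m, (j : ℕ) < i → ∀ l, r v (f j l) := by
  simp [survivors]

lemma survivors_zero (r : α → β → Prop) (C : Finset α) (f : Fin m → ι → β) :
    survivors r C f 0 = C := by
  ext; simp [mem_survivors]

lemma survivors_subset (r : α → β → Prop) (C : Finset α) (f : Fin m → ι → β) (i : ℕ) :
    survivors r C f i ⊆ C :=
  fun _ hv => (mem_survivors.1 hv).1

lemma survivors_antitone (r : α → β → Prop) (C : Finset α) (f : Fin m → ι → β) :
    Antitone (survivors r C f) := by
  intro i i' hi v hv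
  rw [mem_survivors] at hv ⊢
  exact ⟨hv.1, fun j hj => hv.2 j (hj.trans_le hi)⟩

lemma survivors_succ (r : α → β → Prop) (C : Finset α) (f : Fin m → ι → β) (i : Fin m) :
    survivors r C f (i + 1) = commonNbrs r (survivors r C f i) (f i) := by
  ext v
  simp only [mem_survivors, mem_commonNbrs, and_assoc, Order.lt_add_one_iff,
    le_iff_lt_or_eq, or_imp, forall_and, Fin.val_inj, forall_eq]

lemma survivors_cons_succ (r : α → β → Prop) (C : Finset α) (t : ι → β) (g : Fin m → ι → β)
    (i : ℕ) : survivors r C (Fin.cons t g : Fin (m + 1) → ι → β) (i + 1)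
      = survivors r (commonNbrs r C t) g i := by
  ext v
  simp [mem_survivors, mem_commonNbrs, Fin.forall_fin_succ, and_assoc]

variable [Fintype ι] [Fintype β]

open scoped Classical in
/-- The sequences of `m` tuples each of which is selected by `G` from what the preceding tuples
leave of `C`. -/
noncomputable def goodPaths (r : α → β → Prop) (G : Finset α → Finset (ι → β)) (m : ℕ)
    (C : Finset α) : Finset (Fin m → ι → β) :=
  {f | ∀ i : Fin m, f i ∈ G (survivors r C f i)}

lemma mem_goodPaths {r : α → β → Prop} {G : Finset α → Finset (ι → β)} {C : Finset α}
    {f : Fin m → ι → β} :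
    f ∈ goodPaths r G m C ↔ ∀ i : Fin m, f i ∈ G (survivors r C f i) := by
  simp [goodPaths]

lemma cons_mem_goodPaths {r : α → β → Prop} {G : Finset α → Finset (ι → β)} {C : Finset α}
    {t : ι → β} {g : Fin m → ι → β} :
    (Fin.cons t g : Fin (m + 1) → ι → β) ∈ goodPaths r G (m + 1) C ↔
      t ∈ G C ∧ g ∈ goodPaths r G m (commonNbrs r C t) := by
  simp [mem_goodPaths, Fin.forall_fin_succ, survivors_zero, survivors_cons_succ]

lemma sum_card_goodPaths_le (r : α → β → Prop) (G : Finset α → Finset (ι → β)) (m : ℕ)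
    (C : Finset α) :
    ∑ t ∈ G C, #(goodPaths r G m (commonNbrs r C t)) ≤ #(goodPaths r G (m + 1) C) := by
  rw [← card_sigma]
  refine card_le_card_of_injOn (fun p => Fin.cons p.1 p.2) ?_ ?_
  · intro p hp
    exact cons_mem_goodPaths.2 (mem_sigma.1 hp)
  · rintro ⟨t, g⟩ - ⟨t', g'⟩ - h
    obtain ⟨rfl, rfl⟩ := Fin.cons_injective2 h
    rfl

variable {r : α → β → Prop} {G : Finset α → Finset (ι → β)} {K : ℝ}

lemma card_le_pow_mul_card_survivors {C : Finset α} {f : Fin m → ι → β} (hK : 0 ≤ K)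
    (hshrink : ∀ C, ∀ t ∈ G C, #C ≤ K * #(commonNbrs r C t)) (hf : f ∈ goodPaths r G m C)
    {i : ℕ} (hi : i ≤ m) : #C ≤ K ^ i * #(survivors r C f i) := by
  induction i with
  | zero => simp [survivors_zero]
  | succ i ih =>
    have hstep := hshrink _ _ (mem_goodPaths.1 hf ⟨i, hi⟩)
    rw [← survivors_succ] at hstep
    calc (#C : ℝ) ≤ K ^ i * #(survivors r C f i) := ih (by omega)
      _ ≤ K ^ i * (K * #(survivors r C f (i + 1))) := by gcongr
      _ = K ^ (i + 1) * #(survivors r C f (i + 1)) := by ring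

lemma pow_le_pow_mul_card_goodPaths {B C : Finset α} {b y : ℝ} (hK : 1 ≤ K) (hb : 0 ≤ b)
    (hy : 0 ≤ y) (hG : ∀ C ⊆ B, y ≤ #C → b ≤ K * #(G C))
    (hshrink : ∀ C, ∀ t ∈ G C, #C ≤ K * #(commonNbrs r C t)) (hCB : C ⊆ B)
    (hC : y * K ^ m ≤ K * #C) : b ^ m ≤ K ^ m * #(goodPaths r G m C) := by
  have hK_pos : 0 < K := by linarith
  induction m generalizing C with
  | zero => simp [goodPaths]
  | succ m ih =>
    have hC' : y * K ^ m ≤ #C := by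
      refine le_of_mul_le_mul_left ?_ hK_pos
      rwa [pow_succ', mul_left_comm] at hC
    have hyC : y ≤ #C := (le_mul_of_one_le_right hy (one_le_pow₀ hK)).trans hC'
    calc b ^ (m + 1) = b * b ^ m := pow_succ' b m
      _ ≤ K * #(G C) * b ^ m := by gcongr; exact hG C hCB hyC
      _ = K * ∑ _t ∈ G C, b ^ m := by rw [sum_const, nsmul_eq_mul, mul_assoc]
      _ ≤ K * ∑ t ∈ G C, K ^ m * (#(goodPaths r G m (commonNbrs r C t)) : ℝ) := by
          gcongr with t ht
          exact ih ((commonNbrs_subset r C t).trans hCB) (hC'.trans (hshrink C t ht))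
      _ = K ^ (m + 1) * ∑ t ∈ G C, (#(goodPaths r G m (commonNbrs r C t)) : ℝ) := by
          rw [← mul_sum, pow_succ', mul_assoc]
      _ ≤ K ^ (m + 1) * #(goodPaths r G (m + 1) C) := by
          gcongr
          exact_mod_cast sum_card_goodPaths_le r G m C

end Paths

section EdgeCount

variable {V : Type*} [DecidableEq V] (T : Digraph V) [DecidableRel T.Adj]

lemma eCount_eq_sum_left (S₁ S₂ : Finset V) :
    eCount T S₁ S₂ = ∑ u ∈ S₁, #{v ∈ S₂ | T.Adj u v} := by
  simp only [eCount, card_filter, sum_product]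

lemma eCount_eq_sum_right (S₁ S₂ : Finset V) :
    eCount T S₁ S₂ = ∑ v ∈ S₂, #{u ∈ S₁ | T.Adj u v} := by
  simp only [eCount, card_filter, sum_product_right]

variable {T}

lemma card_mul_card_le_three_mul_eCount {S₁ S₂ : Finset V} (h₁ : S₁.Nonempty) (h₂ : S₂.Nonempty)
    (h : (1 : ℝ) / 3 ≤ eCount T S₁ S₂ / (#S₁ * #S₂)) : #S₁ * #S₂ ≤ 3 * eCount T S₁ S₂ := by
  have := h₁.card_pos
  have := h₂.card_pos
  rw [div_le_div_iff₀ (by norm_num) (by positivity), one_mul, mul_comm _ 3] at h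
  exact_mod_cast h

lemma two_mul_eCount_self_add_card (hT : T.IsTournament) (C : Finset V) :
    2 * eCount T C C + #C = #C * #C := by
  have hpair (u v : V) :
      (if T.Adj u v then 1 else 0) + (if T.Adj v u then 1 else 0) + (if u = v then 1 else 0)
        = 1 := by
    by_cases huv : u = v
    · simp [huv, hT.1 v]
    · by_cases h : T.Adj u v <;> simp_all [hT.2 u v huv]
  have hrow (u : V) (hu : u ∈ C) : #{v ∈ C | T.Adj u v} + #{v ∈ C | T.Adj v u} + 1 = #C := by
    have := sum_congr rfl fun v (_ : v ∈ C) => hpair u v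
    simpa [sum_add_distrib, hu] using this
  have htotal := sum_congr rfl hrow
  simp only [sum_add_distrib, ← eCount_eq_sum_left, ← eCount_eq_sum_right, sum_const,
    smul_eq_mul, mul_one] at htotal
  omega

lemma card_mul_card_le_three_mul_eCount_self (hT : T.IsTournament) {C : Finset V} (hC : 3 ≤ #C) :
    #C * #C ≤ 3 * eCount T C C := by
  nlinarith [two_mul_eCount_self_add_card hT C]

end EdgeCount

section GoodTuples

variable {V : Type*} [Fintype V] [DecidableEq V] {T : Digraph V} [DecidableRel T.Adj]
  {D s : ℕ} {I A C X Y : Finset V}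

/-- The `D`-element subsets of `X` with at most `s` common out-neighbours in `C`. -/
def poorSets (T : Digraph V) [DecidableRel T.Adj] (D s : ℕ) (X C : Finset V) :
    Finset (Finset V) :=
  {S ∈ X.powersetCard D | #(commonOutNbhd T S ∩ C) ≤ s}

lemma card_poorSets_le_choose : #(poorSets T D s X C) ≤ (#X).choose D :=
  (card_filter_le _ _).trans (card_powersetCard D X).le

lemma poorSets_subset_commonNbrs {ι : Type*} {t : ι → V} (hXY : X ⊆ Y)
    (ht : ∀ x ∈ X, ∀ l, T.Adj x (t l)) :
    poorSets T D s X C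
      ⊆ commonNbrs (fun S v => v ∈ commonOutNbhd T S) (poorSets T D s Y C) t := by
  intro S hS
  simp only [poorSets, mem_filter, mem_powersetCard] at hS
  rw [mem_commonNbrs, poorSets, mem_filter, mem_powersetCard]
  simp only [commonOutNbhd, mem_filter_univ]
  exact ⟨⟨⟨hS.1.1.trans hXY, hS.1.2⟩, hS.2⟩, fun l x hx => ht x (hS.1.1 hx) l⟩

open scoped Classical in
/-- The `2 * D`-tuples in `C` which have many common in-neighbours in `C` and lie in the common
out-neighbourhood of only few poor subsets of `I ∪ C`. -/
noncomputable def goodTuples (T : Digraph V) [DecidableRel T.Adj] (D s : ℕ) (I C : Finset V) :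
    Finset (Fin (2 * D) → V) :=
  {t ∈ Fintype.piFinset fun _ => C | #C ≤ (3 : ℝ) ^ (3 * D) * #(commonNbrs T.Adj C t) ∧
    #(commonNbrs (fun S v => v ∈ commonOutNbhd T S) (poorSets T D s (I ∪ C) C) t)
      ≤ (3 : ℝ) ^ (3 * D) * ((s / #C) ^ (2 * D) * (#(I ∪ C)).choose D)}

lemma mem_goodTuples {t : Fin (2 * D) → V} :
    t ∈ goodTuples T D s I C ↔
      (∀ l, t l ∈ C) ∧ #C ≤ (3 : ℝ) ^ (3 * D) * #(commonNbrs T.Adj C t) ∧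
        #(commonNbrs (fun S v => v ∈ commonOutNbhd T S) (poorSets T D s (I ∪ C) C) t)
          ≤ (3 : ℝ) ^ (3 * D) * ((s / #C) ^ (2 * D) * (#(I ∪ C)).choose D) := by
  simp only [goodTuples, mem_filter, Fintype.mem_piFinset]

lemma card_pow_le_card_goodTuples (hD : 1 ≤ D) (I : Finset V) (hC : C.Nonempty)
    (hdense : #C * #C ≤ 3 * eCount T C C) :
    (#C : ℝ) ^ (2 * D) ≤ 3 ^ (3 * D) * #(goodTuples T D s I C) := by
  classical
  have hC_pos : (0 : ℝ) < #C := by exact_mod_cast hC.card_pos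
  have hpoor : ∀ S ∈ poorSets T D s (I ∪ C) C,
      (#{v ∈ C | v ∈ commonOutNbhd T S} : ℝ) ≤ s / #C * #C := by
    intro S hS
    rw [div_mul_cancel₀ _ hC_pos.ne', filter_mem_eq_inter, inter_comm]
    exact_mod_cast (mem_filter.1 hS).2
  have hpow : 3 * (3 : ℝ) ^ (2 * D) ≤ 3 ^ (3 * D) := by
    rw [← pow_succ']
    exact pow_le_pow_right₀ (by norm_num) (by omega)
  have hdrc := card_pow_le_card_filter_commonNbrs (r := T.Adj) (L := 3) hC (by norm_num)
    (by positivity) (by rw [eCount_eq_sum_left] at hdense; exact_mod_cast hdense) hpoor (2 * D)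
  refine hdrc.trans ?_
  refine mul_le_mul hpow (Nat.cast_le.2 (card_le_card ?_)) (by positivity) (by positivity)
  intro t
  rw [mem_goodTuples, mem_filter, Fintype.mem_piFinset]
  rintro ⟨htC, hlarge, hfew⟩
  refine ⟨htC, hlarge.trans (by gcongr), hfew.trans ?_⟩
  gcongr
  exact card_poorSets_le_choose

lemma pow_mul_pow_le_pow_pow (hD : 1 ≤ D) :
    3 ^ (3 * D) * ((3 ^ (3 * D) + 1) * D) ^ D ≤ (3 ^ (4 * D)) ^ (2 * D) := by
  have hDpow : D ≤ 3 ^ D := (Nat.lt_pow_self (by norm_num)).le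
  have hbase : 27 * (3 ^ (3 * D) + 1) ≤ 3 ^ (7 * D) := by
    calc 27 * (3 ^ (3 * D) + 1) ≤ 3 ^ (3 * D + 4) := by
          have := Nat.one_le_pow (3 * D) 3 (by norm_num)
          rw [pow_add]
          omega
      _ ≤ 3 ^ (7 * D) := Nat.pow_le_pow_right (by norm_num) (by omega)
  calc 3 ^ (3 * D) * ((3 ^ (3 * D) + 1) * D) ^ D = (27 * (3 ^ (3 * D) + 1) * D) ^ D := by
        rw [pow_mul, ← mul_pow]; ring
    _ ≤ (3 ^ (7 * D) * 3 ^ D) ^ D := by gcongr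
    _ = (3 ^ (4 * D)) ^ (2 * D) := by ring

lemma pow_mul_choose_card_union_le {α : Type*} [DecidableEq α] {I C C' : Finset α} (hD : 1 ≤ D)
    (hD' : D ≤ #(I ∪ C')) (hC : #C ≤ 3 ^ (3 * D) * #C') :
    3 ^ (3 * D) * (#(I ∪ C)).choose D ≤ (3 ^ (4 * D)) ^ (2 * D) * (#(I ∪ C')).choose D := by
  have hcard : #(I ∪ C) ≤ (3 ^ (3 * D) + 1) * #(I ∪ C') :=
    calc #(I ∪ C) ≤ #I + #C := card_union_le I C
      _ ≤ #(I ∪ C') + 3 ^ (3 * D) * #(I ∪ C') := by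
          gcongr
          · exact subset_union_left
          · exact hC.trans (by gcongr; exact subset_union_right)
      _ = (3 ^ (3 * D) + 1) * #(I ∪ C') := by ring
  calc 3 ^ (3 * D) * (#(I ∪ C)).choose D
      ≤ 3 ^ (3 * D) * (((3 ^ (3 * D) + 1) * D) ^ D * (#(I ∪ C')).choose D) := by
        gcongr; exact choose_le_pow_mul_choose hD' hcard
    _ ≤ (3 ^ (4 * D)) ^ (2 * D) * (#(I ∪ C')).choose D := by
        rw [← mul_assoc]; gcongr; exact pow_mul_pow_le_pow_pow hD

lemma card_poorSets_le_of_mem_goodTuples (hD : 1 ≤ D) {t : Fin (2 * D) → V}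
    (ht : t ∈ goodTuples T D s I C) (hA : A ⊆ commonNbrs T.Adj I t) :
    (#(poorSets T D s (A ∪ commonNbrs T.Adj C t) C) : ℝ)
      ≤ (3 ^ (4 * D) * s / #C) ^ (2 * D) * (#(I ∪ commonNbrs T.Adj C t)).choose D := by
  set C' := commonNbrs T.Adj C t
  obtain ⟨-, hlarge, hfew⟩ := mem_goodTuples.1 ht
  have hAI : A ⊆ I := hA.trans (commonNbrs_subset _ _ _)
  obtain hsmall | hD' := lt_or_ge #(I ∪ C') D
  · have : poorSets T D s (A ∪ C') C = ∅ := by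
      rw [poorSets, powersetCard_eq_empty.2, filter_empty]
      exact (card_le_card (union_subset_union_left hAI)).trans_lt hsmall
    rw [this, card_empty, Nat.cast_zero]
    positivity
  have hadj : ∀ x ∈ A ∪ C', ∀ l, T.Adj x (t l) := by
    intro x hx
    obtain hx | hx := mem_union.1 hx
    · exact (mem_commonNbrs.1 (hA hx)).2
    · exact (mem_commonNbrs.1 hx).2
  have hchoose := pow_mul_choose_card_union_le hD hD' (by exact_mod_cast hlarge)
  calc (#(poorSets T D s (A ∪ C') C) : ℝ)
      ≤ #(commonNbrs (fun S v => v ∈ commonOutNbhd T S) (poorSets T D s (I ∪ C) C) t) := by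
        exact_mod_cast card_le_card (poorSets_subset_commonNbrs
          (union_subset_union hAI (commonNbrs_subset _ _ _)) hadj)
    _ ≤ (s / #C) ^ (2 * D) * (3 ^ (3 * D) * (#(I ∪ C)).choose D : ℕ) := by
        refine hfew.trans_eq ?_
        push_cast; ring
    _ ≤ (s / #C) ^ (2 * D) * ((3 ^ (4 * D)) ^ (2 * D) * (#(I ∪ C')).choose D : ℕ) := by
        gcongr
    _ = (3 ^ (4 * D) * s / #C) ^ (2 * D) * (#(I ∪ C')).choose D := by
        push_cast; rw [mul_div_assoc, mul_pow]; ring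

end GoodTuples

section BackwardStep

variable {V : Type*} [Fintype V] [DecidableEq V] {T : Digraph V} [DecidableRel T.Adj]
  {Δ w s : ℕ} {I B C : Finset V}

lemma lt_of_pow_mul_le_pow {x : ℕ} (hx : 1 ≤ x) {p g b y : ℝ} (hb : 0 ≤ b) (hy : 0 < y)
    (hby : b ≤ 3 ^ (6 * x) * y) (hp : (3 ^ (10 * x)) ^ (3 * x) * p ≤ 3 * 3 ^ (3 * x) * b ^ (2 * x))
    (hg : y ^ (2 * x) ≤ 3 ^ (3 * x) * g) : p < g := by
  have hg_pos : 0 < g := pos_of_mul_pos_right ((pow_pos hy _).trans_le hg) (by positivity)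
  have hexp : 1 + 3 * x + 6 * x * (2 * x) + 3 * x < 10 * x * (3 * x) := by nlinarith
  refine lt_of_mul_lt_mul_left (a := (3 : ℝ) ^ (10 * x * (3 * x))) ?_ (by positivity)
  calc (3 : ℝ) ^ (10 * x * (3 * x)) * p ≤ 3 * 3 ^ (3 * x) * b ^ (2 * x) := by rwa [pow_mul]
    _ ≤ 3 * 3 ^ (3 * x) * (3 ^ (6 * x) * y) ^ (2 * x) := by gcongr
    _ = 3 * 3 ^ (3 * x) * 3 ^ (6 * x * (2 * x)) * y ^ (2 * x) := by
        rw [mul_pow, ← pow_mul, ← mul_assoc]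
    _ ≤ 3 * 3 ^ (3 * x) * 3 ^ (6 * x * (2 * x)) * (3 ^ (3 * x) * g) := by gcongr
    _ = 3 ^ (1 + 3 * x + 6 * x * (2 * x) + 3 * x) * g := by ring
    _ < 3 ^ (10 * x * (3 * x)) * g := by
        gcongr
        norm_num

lemma pow_le_pow_mul_card_goodPaths_goodTuples (hΔ : 1 ≤ Δ) (I : Finset V)
    (hdense : ∀ C ⊆ B, 3 ≤ #C → #C * #C ≤ 3 * eCount T C C) {y : ℝ} (hy : 3 ≤ y) (hCB : C ⊆ B)
    (hC : y * (3 ^ (3 * Δ)) ^ w ≤ 3 ^ (3 * Δ) * #C) :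
    y ^ (2 * (Δ * w)) ≤ 3 ^ (3 * (Δ * w)) * #(goodPaths T.Adj (goodTuples T Δ s I) w C) := by
  have hG : ∀ C ⊆ B, y ≤ #C → y ^ (2 * Δ) ≤ 3 ^ (3 * Δ) * #(goodTuples T Δ s I C) := by
    intro C hCB hyC
    have hC3 : 3 ≤ #C := by exact_mod_cast hy.trans hyC
    calc y ^ (2 * Δ) ≤ (#C : ℝ) ^ (2 * Δ) := by gcongr
      _ ≤ 3 ^ (3 * Δ) * #(goodTuples T Δ s I C) :=
          card_pow_le_card_goodTuples hΔ I (card_pos.1 (by omega)) (hdense C hCB hC3)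
  rw [← mul_assoc 2, ← mul_assoc 3, pow_mul y, pow_mul 3 (3 * Δ)]
  exact pow_le_pow_mul_card_goodPaths (one_le_pow₀ (by norm_num)) (by positivity) (by positivity)
    hG (fun C t ht => (mem_goodTuples.1 ht).2.1) hCB hC

lemma apply_mem_of_mem_goodPaths {f : Fin w → Fin (2 * Δ) → V}
    (hf : f ∈ goodPaths T.Adj (goodTuples T Δ s I) w C) (i : Fin w) (l : Fin (2 * Δ)) :
    f i l ∈ C :=
  survivors_subset _ _ _ _ ((mem_goodTuples.1 (mem_goodPaths.1 hf i)).1 l)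

lemma exists_mem_goodPaths_uncurry_notMem_sparseTuples {c : ℝ}
    (h : #(sparseTuples T.Adj (Fin w × Fin (2 * Δ)) c I C)
      < #(goodPaths T.Adj (goodTuples T Δ s I) w C)) :
    ∃ f ∈ goodPaths T.Adj (goodTuples T Δ s I) w C,
      #I ≤ c * #(commonNbrs T.Adj I (Function.uncurry f)) := by
  classical
  obtain ⟨p, hp, hsparse⟩ := exists_mem_notMem_of_card_lt_card <|
    h.trans_eq (card_image_of_injective _ Function.uncurry_injective).symm
  obtain ⟨f, hf, rfl⟩ := mem_image.1 hp
  refine ⟨f, hf, le_of_not_gt fun hlt => hsparse (mem_sparseTuples.2 ⟨?_, hlt⟩)⟩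
  exact fun _ => apply_mem_of_mem_goodPaths hf _ _

lemma card_sparseTuples_lt_card_goodPaths (hΔ : 1 ≤ Δ) (hw : 1 ≤ w) (s : ℕ)
    (hdense : ∀ C ⊆ B, 3 ≤ #C → #C * #C ≤ 3 * eCount T C C)
    (hB : (3 : ℝ) ^ (6 * (Δ * w)) ≤ #B) (hCB : C ⊆ B)
    (hC : (#B : ℝ) / 3 ^ (3 * (Δ * w)) ≤ 3 * #C)
    (hsparse : ((3 : ℝ) ^ (10 * (Δ * w))) ^ (3 * (Δ * w)) *
        #(sparseTuples T.Adj (Fin w × Fin (2 * Δ)) (3 ^ (10 * (Δ * w))) I C)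
      ≤ 3 * 3 ^ (3 * (Δ * w)) * #B ^ (2 * (Δ * w))) :
    #(sparseTuples T.Adj (Fin w × Fin (2 * Δ)) (3 ^ (10 * (Δ * w))) I C)
      < #(goodPaths T.Adj (goodTuples T Δ s I) w C) := by
  set x := Δ * w with hx
  set z : ℝ := #B / 3 ^ (6 * x) with hz
  set y : ℝ := 3 ^ (3 * Δ) * (z / 3) with hy
  have hz1 : 1 ≤ z := (one_le_div (by positivity)).2 hB
  have hBz : #B = 3 ^ (6 * x) * z := by rw [hz]; field_simp
  have hK : (3 : ℝ) ^ 2 ≤ 3 ^ (3 * Δ) := pow_le_pow_right₀ (by norm_num) (by omega)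
  have hzy : 3 * z ≤ y := by nlinarith
  have hyC : y * (3 ^ (3 * Δ)) ^ w ≤ 3 ^ (3 * Δ) * #C := by
    have hC' : 3 ^ (3 * x) * z ≤ 3 * #C := by
      refine le_trans (le_of_eq ?_) hC
      rw [hBz]; field_simp; ring
    calc y * (3 ^ (3 * Δ)) ^ w = 3 ^ (3 * Δ) * (3 ^ (3 * x) * z / 3) := by
          rw [hy, hx, ← mul_assoc 3 Δ w, pow_mul 3 (3 * Δ) w]; ring
      _ ≤ 3 ^ (3 * Δ) * #C := by gcongr; linarith
  have hBy : #B ≤ 3 ^ (6 * x) * y := by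
    rw [hBz]; gcongr; linarith
  exact Nat.cast_lt.1 <| lt_of_pow_mul_le_pow (Nat.mul_pos hΔ hw) (Nat.cast_nonneg _)
    (by linarith) hBy hsparse <|
    pow_le_pow_mul_card_goodPaths_goodTuples hΔ I hdense (by linarith) hCB hyC

lemma exists_mem_goodPaths (hΔ : 1 ≤ Δ) (hw : 1 ≤ w) (s : ℕ) (hI : I.Nonempty)
    (hdense : ∀ C ⊆ B, 3 ≤ #C → #C * #C ≤ 3 * eCount T C C)
    (hIB : #I * #B ≤ 3 * eCount T I B) (hB : 3 ^ (6 * (Δ * w)) ≤ #B) :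
    ∃ C ⊆ B, #C ≤ (#B : ℝ) / 3 ^ (3 * (Δ * w)) ∧ (#B : ℝ) / 3 ^ (3 * (Δ * w)) ≤ 3 * #C ∧
      ∃ f ∈ goodPaths T.Adj (goodTuples T Δ s I) w C,
        #I ≤ (3 : ℝ) ^ (10 * (Δ * w)) * #(commonNbrs T.Adj I (Function.uncurry f)) := by
  have hB' : (3 : ℝ) ^ (6 * (Δ * w)) ≤ #B := by exact_mod_cast hB
  obtain ⟨C, hCB, hC, hC', hsparse⟩ := exists_subset_card_le_card_sparseTuples_le
    (κ := Fin w × Fin (2 * Δ)) (r := T.Adj) (L := 3) (c := 3 ^ (10 * (Δ * w))) (n := 3 * (Δ * w))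
    hI (by norm_num) (by positivity) (by rw [eCount_eq_sum_right] at hIB; exact_mod_cast hIB)
    ((pow_le_pow_right₀ (by norm_num) (by omega)).trans hB')
  rw [Fintype.card_prod, Fintype.card_fin, Fintype.card_fin,
    show w * (2 * Δ) = 2 * (Δ * w) by ring] at hsparse
  exact ⟨C, hCB, hC, hC', exists_mem_goodPaths_uncurry_notMem_sparseTuples
    (card_sparseTuples_lt_card_goodPaths hΔ hw s hdense hB' hCB hC' hsparse)⟩

lemma card_poorSets_le_of_mem_goodPaths (hΔ : 1 ≤ Δ) {f : Fin w → Fin (2 * Δ) → V}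
    (hf : f ∈ goodPaths T.Adj (goodTuples T Δ s I) w C) (i : Fin w) :
    (#(poorSets T Δ s (commonNbrs T.Adj I (Function.uncurry f) ∪ survivors T.Adj C f (i + 1))
        (survivors T.Adj C f i)) : ℝ)
      ≤ (3 ^ (4 * Δ) * s / #(survivors T.Adj C f i)) ^ (2 * Δ) *
        (#(I ∪ survivors T.Adj C f (i + 1))).choose Δ := by
  rw [survivors_succ]
  refine card_poorSets_le_of_mem_goodTuples hΔ (mem_goodPaths.1 hf i) fun a ha => ?_
  rw [mem_commonNbrs] at ha ⊢
  exact ⟨ha.1, fun l => ha.2 (i, l)⟩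

lemma pow_mul_card_le_pow_mul_card_survivors (hΔ : 1 ≤ Δ) {f : Fin w → Fin (2 * Δ) → V}
    (hf : f ∈ goodPaths T.Adj (goodTuples T Δ s I) w C)
    (hC : (#B : ℝ) / 3 ^ (3 * (Δ * w)) ≤ 3 * #C) {i : ℕ} (hi : i < w) :
    (3 : ℝ) ^ (2 * Δ) * #B ≤ 3 ^ (6 * (Δ * w)) * #(survivors T.Adj C f i) := by
  have hsurv := card_le_pow_mul_card_survivors (G := goodTuples T Δ s I)
    (K := 3 ^ (3 * Δ)) (by positivity) (fun C t ht => (mem_goodTuples.1 ht).2.1) hf hi.le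
  rw [div_le_iff₀ (by positivity)] at hC
  have hexp : 2 * Δ + (1 + 3 * (Δ * w) + 3 * Δ * i) ≤ 6 * (Δ * w) := by
    have := Nat.mul_le_mul_left Δ hi
    rw [Nat.mul_succ] at this
    linarith
  calc (3 : ℝ) ^ (2 * Δ) * #B ≤ 3 ^ (2 * Δ) * (3 * #C * 3 ^ (3 * (Δ * w))) := by gcongr
    _ ≤ 3 ^ (2 * Δ) * (3 * ((3 ^ (3 * Δ)) ^ i * #(survivors T.Adj C f i)) * 3 ^ (3 * (Δ * w))) := by
        gcongr
    _ = 3 ^ (2 * Δ + (1 + 3 * (Δ * w) + 3 * Δ * i)) * #(survivors T.Adj C f i) := by ring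
    _ ≤ 3 ^ (6 * (Δ * w)) * #(survivors T.Adj C f i) := by
        gcongr
        norm_num

lemma div_le_div_of_pow_mul_le {D x : ℕ} (hDx : D ≤ x) {b c : ℝ} (hb : 0 < b)
    (h : 3 ^ (2 * D) * b ≤ 3 ^ (6 * x) * c) (s : ℕ) :
    3 ^ (4 * D) * s / c ≤ 3 ^ (8 * x) * s / b := by
  have hc : 0 < c := pos_of_mul_pos_right ((by positivity : 0 < 3 ^ (2 * D) * b).trans_le h)
    (by positivity)
  rw [div_le_div_iff₀ hc hb]
  calc 3 ^ (4 * D) * s * b = 3 ^ (2 * D) * s * (3 ^ (2 * D) * b) := by ring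
    _ ≤ 3 ^ (2 * x) * s * (3 ^ (6 * x) * c) := by
        gcongr
        norm_num
    _ = 3 ^ (8 * x) * s * c := by ring

theorem backward_step_general (hΔ : 1 ≤ Δ) (hw : 1 ≤ w) (s : ℕ) (hI : I.Nonempty)
    (hdense : ∀ C ⊆ B, 3 ≤ #C → #C * #C ≤ 3 * eCount T C C)
    (hIB : #I * #B ≤ 3 * eCount T I B) (hB : 3 ^ (6 * Δ * w) ≤ #B) :
    ∃ (A : Finset V) (BB : ℕ → Finset V),
      A ⊆ I ∧
      (∀ j : ℕ, 1 ≤ j → j ≤ w → BB (j - 1) ⊆ BB j) ∧ BB w ⊆ B ∧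
      ((#I : ℝ) / 3 ^ (10 * Δ * w) ≤ #A) ∧
      (∀ j : ℕ, 1 ≤ j → j ≤ w →
        (#(BB j) : ℝ) ≤ #B / 3 ^ (3 * Δ * w) ∧ #B / 3 ^ (6 * Δ * w) ≤ (#(BB j) : ℝ)) ∧
      (∀ j : ℕ, 1 ≤ j → j ≤ w →
        (#(poorSets T Δ s (A ∪ BB (j - 1)) (BB j)) : ℝ) ≤
          (3 ^ (8 * Δ * w) * s / #B) ^ (2 * Δ) * (#(I ∪ BB (j - 1))).choose Δ) := by
  simp only [mul_assoc _ Δ w] at hB ⊢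
  have hB_pos : (0 : ℝ) < #B := by exact_mod_cast (by positivity : 0 < _).trans_le hB
  obtain ⟨C, hCB, hC, hC', f, hf, hA⟩ := exists_mem_goodPaths hΔ hw s hI hdense hIB hB
  have hsize {j : ℕ} (hj : 1 ≤ j) (hjw : j ≤ w) :=
    pow_mul_card_le_pow_mul_card_survivors hΔ hf hC' (show w - j < w by omega)
  refine ⟨commonNbrs T.Adj I (Function.uncurry f), fun j => survivors T.Adj C f (w - j),
    commonNbrs_subset _ _ _, fun j _ _ => survivors_antitone _ _ _ (by omega),
    (survivors_subset _ _ _ _).trans hCB, (div_le_iff₀' (by positivity)).2 hA,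
    fun j hj hjw => ⟨?_, ?_⟩, fun j hj hjw => ?_⟩
  · exact le_trans (by exact_mod_cast card_le_card (survivors_subset _ _ _ _)) hC
  · rw [div_le_iff₀' (by positivity)]
    exact (le_mul_of_one_le_left hB_pos.le (one_le_pow₀ (by norm_num))).trans (hsize hj hjw)
  · have hpoor := card_poorSets_le_of_mem_goodPaths hΔ hf ⟨w - j, by omega⟩
    rw [show w - j + 1 = w - (j - 1) by omega] at hpoor
    refine hpoor.trans ?_
    gcongr ?_ ^ (2 * Δ) * _
    exact div_le_div_of_pow_mul_le (Nat.le_mul_of_pos_right Δ hw) hB_pos (hsize hj hjw) s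

end BackwardStep

/-- (Backward step.) -/
theorem backward_step {V : Type} [Fintype V] [DecidableEq V]
    (T : Digraph V) [DecidableRel T.Adj] (hT : T.IsTournament)
    (Δ w s : ℕ) (hΔ : 1 ≤ Δ) (hw : 1 ≤ w)
    (I B : Finset V) (hI : I.Nonempty) (hB : B.Nonempty) (hdisj : Disjoint I B)
    (hd : (1 : ℝ) / 3 ≤ (eCount T I B : ℝ) / ((I.card : ℝ) * (B.card : ℝ)))
    (hBcard : 3 * 3 ^ (6 * Δ * w) ≤ B.card) :
    ∃ (A : Finset V) (BB : ℕ → Finset V),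
      A ⊆ I ∧
      (∀ j : ℕ, 1 ≤ j → j ≤ w → BB (j - 1) ⊆ BB j) ∧ BB w ⊆ B ∧
      ((I.card : ℝ) / (3 : ℝ) ^ (10 * Δ * w) ≤ (A.card : ℝ)) ∧
      (∀ j : ℕ, 1 ≤ j → j ≤ w →
        ((BB j).card : ℝ) ≤ (B.card : ℝ) / (3 : ℝ) ^ (3 * Δ * w) ∧
        (B.card : ℝ) / (3 : ℝ) ^ (6 * Δ * w) ≤ ((BB j).card : ℝ)) ∧
      (∀ j : ℕ, 1 ≤ j → j ≤ w →
        ((((A ∪ BB (j - 1)).powersetCard Δ).filter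
            (fun S => (commonOutNbhd T S ∩ BB j).card ≤ s)).card : ℝ) ≤
          ((3 : ℝ) ^ (8 * Δ * w) * (s : ℝ) / (B.card : ℝ)) ^ (2 * Δ) *
            ((I ∪ BB (j - 1)).card.choose Δ : ℕ)) := by
  exact backward_step_general hΔ hw s hI
    (fun C _ => card_mul_card_le_three_mul_eCount_self hT)
    (card_mul_card_le_three_mul_eCount hI hB hd) (by omega)
end

section
/- Let D be a bipartite graph with vertex classes W₁ and W₂, and let Δ⁺, Δ⁻ ≥ 1 be integers such that every vertex in W₁ has degree at most Δ⁺ and every vertex in W₂ has degree at most Δ⁻. Let a, b be positive integers with a ≥ b ≥ 32·|W₁|, and let A be a set of size |A| = a. For each v ∈ W₂, let F_v be a family of subsets of A such that the number of |N_D(v)|-element members of F_v is at most (1/(4Δ⁺Δ⁻))·(2^(−1/2)·b/a)^{|N_D(v)|}·C(a, |N_D(v)|). Let f : W₁ → 2^A be a function with |f(u)| ≥ b for each u ∈ W₁. Then there exists an injective function φ : W₁ → A such that φ(u) ∈ f(u) for every u ∈ W₁, and for every v ∈ W₂ the image set φ(N_D(v)) is not a member of F_v. -/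
/-- The neighborhood in `W₁` of a vertex `v ∈ W₂` of a bipartite graph given by the
adjacency relation `Adj : W₁ → W₂ → Prop`. -/
def leftNbhd {W₁ W₂ : Type*} [Fintype W₁] (Adj : W₁ → W₂ → Prop)
    [∀ u v, Decidable (Adj u v)] (v : W₂) : Finset W₁ :=
  Finset.univ.filter (fun u => Adj u v)

/-- The neighborhood in `W₂` of a vertex `u ∈ W₁` of a bipartite graph given by the
adjacency relation `Adj : W₁ → W₂ → Prop`. -/
def rightNbhd {W₁ W₂ : Type*} [Fintype W₂] (Adj : W₁ → W₂ → Prop)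
    [∀ u v, Decidable (Adj u v)] (u : W₁) : Finset W₂ :=
  Finset.univ.filter (fun v => Adj u v)

/-!
The proof is Rosenfeld's counting argument rather than the local lemma. Let `g U` be the number of
admissible maps on `U ⊆ W₁`: injective choices from the lists `f u` violating no constraint whose
neighborhood lies inside `U`. Each such map has `#(f u)` extensions to a new vertex `u`. An
extension that fails either repeats one of the at most `#U` old values or violates some constraint
`v` with `u ∈ N v`, and in the second case it is determined by an admissible map on `U \ N v`
together with one of at most `(#(N v))! * #(𝓕 v)` orderings of a forbidden set. By induction `g`
grows by a factor of at least `β` with each vertex added, so `g (U \ N v) ≤ β ^ (1 - #(N v)) * g U`.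
The failures are thus few compared with `g U`, and `g` grows by the factor `β` once more.
-/

namespace ForwardStep

open Finset

section Recurrence

variable {W ι : Type*} [DecidableEq W] {g : Finset W → ℝ} {β : ℝ}

lemma pow_card_sdiff_mul_le (hβ : 0 ≤ β) {S T : Finset W} (hST : S ⊆ T)
    (hg : ∀ V ⊂ T, ∀ u ∉ V, β * g V ≤ g (insert u V)) : β ^ #(T \ S) * g S ≤ g T := by
  induction T using Finset.strongInduction with
  | H T ih =>
    obtain rfl | hne := eq_or_ne S T
    · simp
    obtain ⟨u, huT, huS⟩ := exists_of_ssubset (hST.ssubset_of_ne hne)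
    have herase : T.erase u ⊂ T := erase_ssubset huT
    have hih : β ^ #(T.erase u \ S) * g S ≤ g (T.erase u) :=
      ih _ herase (subset_erase.2 ⟨hST, huS⟩) fun V hV => hg V (hV.trans herase)
    have hcard : #(T \ S) = #(T.erase u \ S) + 1 := by
      rw [erase_sdiff_comm, card_erase_add_one (mem_sdiff.2 ⟨huT, huS⟩)]
    calc β ^ #(T \ S) * g S = β * (β ^ #(T.erase u \ S) * g S) := by rw [hcard]; ring
      _ ≤ β * g (T.erase u) := by gcongr
      _ ≤ g (insert u (T.erase u)) := hg _ herase u (notMem_erase u T)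
      _ = g T := by rw [insert_erase huT]

lemma mul_le_insert_of_recurrence (hβ : 0 < β) (hg : ∀ U, 0 ≤ g U) {N : ι → Finset W}
    {R : W → Finset ι} (hR : ∀ u, ∀ v ∈ R u, u ∈ N v) {t : ι → ℝ} (ht : ∀ v, 0 ≤ t v) {m : W → ℝ}
    (hm : ∀ u, β * (1 + ∑ v ∈ R u, t v / β ^ #(N v)) ≤ m u)
    (hrec : ∀ U, ∀ u ∉ U,
      m u * g U ≤ g (insert u U) + ∑ v ∈ R u with N v ⊆ insert u U, t v * g (U \ N v))
    {U : Finset W} {u : W} (hu : u ∉ U) : β * g U ≤ g (insert u U) := by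
  induction U using Finset.strongInduction generalizing u with
  | H U ih =>
    have hterm : ∀ v ∈ R u, N v ⊆ insert u U →
        t v * g (U \ N v) ≤ β * g U * (t v / β ^ #(N v)) := fun v hv hNv => by
      have hcard : #(N v) = #(U \ (U \ N v)) + 1 := by
        rw [sdiff_sdiff_right_self, inf_eq_inter, ← erase_insert hu, erase_inter,
          inter_eq_right.2 hNv, card_erase_add_one (hR u v hv)]
      have hpow := pow_card_sdiff_mul_le hβ.le (sdiff_subset (s := U) (t := N v))
        fun V hV w hw => ih V hV hw
      calc t v * g (U \ N v)
          = β * (β ^ #(U \ (U \ N v)) * g (U \ N v)) * (t v / β ^ #(N v)) := by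
            rw [hcard, pow_succ]; field_simp
        _ ≤ β * g U * (t v / β ^ #(N v)) := by
            have := ht v
            gcongr
    have hsum : ∑ v ∈ R u with N v ⊆ insert u U, t v * g (U \ N v) ≤
        β * g U * ∑ v ∈ R u, t v / β ^ #(N v) := by
      rw [mul_sum]
      refine (sum_le_sum fun v hv => hterm v (mem_filter.1 hv).1 (mem_filter.1 hv).2).trans
        (sum_le_sum_of_subset_of_nonneg (filter_subset _ _) fun v _ _ => ?_)
      have := ht v
      have := hg U
      positivity
    have hgrow := mul_le_mul_of_nonneg_right (hm u) (hg U)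
    linarith [hrec U u hu]

end Recurrence

lemma card_le_factorial_mul_card_of_image_mem {W α : Type*} [DecidableEq α] {d : W → α}
    {K : Finset W} {𝒮 : Finset (Finset α)} {T : Finset (W → α)} (hd : ∀ φ ∈ T, ∀ u ∉ K, φ u = d u)
    (hinj : ∀ φ ∈ T, Set.InjOn φ K) (hmem : ∀ φ ∈ T, K.image φ ∈ 𝒮) :
    #T ≤ (#K).factorial * #𝒮 := by
  classical
  refine card_le_mul_card_image_of_maps_to hmem _ fun S _ => ?_
  obtain hempty | ⟨φ₀, hφ₀⟩ := {φ ∈ T | K.image φ = S}.eq_empty_or_nonempty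
  · simp [hempty]
  have hcard : #S = #K := by
    rw [mem_filter] at hφ₀
    rw [← hφ₀.2, card_image_of_injOn (hinj φ₀ hφ₀.1)]
  have hcover : {φ ∈ T | K.image φ = S} ⊆
      (univ : Finset (K ↪ S)).image fun e u => if h : u ∈ K then (e ⟨u, h⟩ : α) else d u := by
    intro φ hφ
    obtain ⟨hφT, rfl⟩ := mem_filter.1 hφ
    refine mem_image.2 ⟨⟨fun u => ⟨φ u, mem_image_of_mem φ u.2⟩, fun x y hxy =>
      Subtype.ext (hinj φ hφT x.2 y.2 (congrArg Subtype.val hxy))⟩, mem_univ _, ?_⟩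
    ext u
    by_cases hu : u ∈ K
    · exact dif_pos hu
    · exact (dif_neg hu).trans (hd φ hφT u hu).symm
  calc #{φ ∈ T | K.image φ = S} ≤ #(univ : Finset (K ↪ S)) :=
        (card_le_card hcover).trans card_image_le
    _ = (#K).factorial := by
        rw [card_univ, Fintype.card_embedding_eq, Fintype.card_coe, Fintype.card_coe, hcard,
          Nat.descFactorial_self]

section PartialMaps

variable {W α : Type*} [Fintype W] [DecidableEq W] {f : W → Finset α} {d φ ψ : W → α}
  {U V : Finset W}

/-- The maps `U → α` choosing `φ u ∈ f u`, encoded as total maps that agree with the dummy map `d`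
outside `U`. -/
def partialMaps (f : W → Finset α) (d : W → α) (U : Finset W) : Finset (W → α) :=
  Fintype.piFinset (U.piecewise f fun u => {d u})

lemma mem_partialMaps :
    φ ∈ partialMaps f d U ↔ (∀ u ∈ U, φ u ∈ f u) ∧ ∀ u ∉ U, φ u = d u := by
  simp only [partialMaps, Fintype.mem_piFinset, ← forall_and]
  refine forall_congr' fun u => ?_
  by_cases hu : u ∈ U <;> simp [hu]

lemma piecewise_mem_partialMaps (hφ : φ ∈ partialMaps f d V) (hUV : U ⊆ V) :
    U.piecewise φ d ∈ partialMaps f d U := by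
  rw [mem_partialMaps] at hφ ⊢
  refine ⟨fun u hu => ?_, fun u hu => piecewise_eq_of_notMem _ _ _ hu⟩
  rw [piecewise_eq_of_mem _ _ _ hu]
  exact hφ.1 u (hUV hu)

lemma eq_of_piecewise_eq {K : Finset W} (hφ : φ ∈ partialMaps f d V) (hψ : ψ ∈ partialMaps f d V)
    (hV : V ⊆ U ∪ K) (hU : U.piecewise φ d = U.piecewise ψ d)
    (hK : K.piecewise φ d = K.piecewise ψ d) : φ = ψ := by
  ext w
  by_cases hwU : w ∈ U
  · simpa [hwU] using congrFun hU w
  by_cases hwK : w ∈ K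
  · simpa [hwK] using congrFun hK w
  have hwV : w ∉ V := fun hw => (mem_union.1 (hV hw)).elim hwU hwK
  rw [(mem_partialMaps.1 hφ).2 w hwV, (mem_partialMaps.1 hψ).2 w hwV]

lemma update_mem_partialMaps {u : W} {x : α} (hφ : φ ∈ partialMaps f d U) (hx : x ∈ f u) :
    Function.update φ u x ∈ partialMaps f d (insert u U) := by
  rw [mem_partialMaps] at hφ ⊢
  refine ⟨fun w hw => ?_, fun w hw => ?_⟩
  · obtain rfl | hwu := eq_or_ne w u
    · simpa only [Function.update_self] using hx
    · simpa only [Function.update_of_ne hwu] using hφ.1 w (mem_of_mem_insert_of_ne hw hwu)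
  · rw [mem_insert, not_or] at hw
    simpa only [Function.update_of_ne hw.1] using hφ.2 w hw.2

end PartialMaps

section Admissible

variable {W ι α : Type*} [DecidableEq α]

/-- The map `φ` is injective on `U` and, for every constraint `v` whose vertex set `N v` lies inside
`U`, the image of `N v` is not one of the forbidden sets `𝓕 v`. -/
structure IsAdmissibleOn (N : ι → Finset W) (𝓕 : ι → Finset (Finset α)) (U : Finset W)
    (φ : W → α) : Prop where
  injOn : Set.InjOn φ U
  image_notMem : ∀ v, N v ⊆ U → (N v).image φ ∉ 𝓕 v

variable {N : ι → Finset W} {𝓕 : ι → Finset (Finset α)} {U V : Finset W} {φ ψ : W → α}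

lemma IsAdmissibleOn.mono (h : IsAdmissibleOn N 𝓕 V φ) (hUV : U ⊆ V) : IsAdmissibleOn N 𝓕 U φ :=
  ⟨h.injOn.mono (coe_subset.2 hUV), fun v hv => h.image_notMem v (hv.trans hUV)⟩

lemma IsAdmissibleOn.congr (h : IsAdmissibleOn N 𝓕 U φ) (hφψ : Set.EqOn φ ψ U) :
    IsAdmissibleOn N 𝓕 U ψ := by
  refine ⟨h.injOn.congr hφψ, fun v hv => ?_⟩
  rw [← image_congr (hφψ.mono (coe_subset.2 hv))]
  exact h.image_notMem v hv

variable [DecidableEq W] {f : W → Finset α} {d : W → α} {u : W} {v : ι}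

lemma IsAdmissibleOn.injOn_insert (h : IsAdmissibleOn N 𝓕 U φ) (hu : u ∉ U)
    (hφu : φ u ∉ U.image φ) : Set.InjOn φ (insert u U : Finset W) := by
  rw [coe_insert, Set.injOn_insert (mem_coe.not.2 hu), ← coe_image, mem_coe]
  exact ⟨h.injOn, hφu⟩

lemma IsAdmissibleOn.insert (h : IsAdmissibleOn N 𝓕 U φ) (hu : u ∉ U) (hφu : φ u ∉ U.image φ)
    (hφ : ∀ v, u ∈ N v → N v ⊆ insert u U → (N v).image φ ∉ 𝓕 v) :
    IsAdmissibleOn N 𝓕 (insert u U) φ := by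
  refine ⟨h.injOn_insert hu hφu, fun v hv => ?_⟩
  by_cases huv : u ∈ N v
  · exact hφ v huv hv
  · exact h.image_notMem v ((subset_insert_iff_of_notMem huv).1 hv)

variable [Fintype W]

open scoped Classical in
/-- The admissible maps on `U` with values in the lists `f`; their number is the quantity whose
growth in `U` is estimated. -/
noncomputable def admissibleMaps (N : ι → Finset W) (𝓕 : ι → Finset (Finset α)) (f : W → Finset α)
    (d : W → α) (U : Finset W) : Finset (W → α) :=
  {φ ∈ partialMaps f d U | IsAdmissibleOn N 𝓕 U φ}

open scoped Classical in
/-- The extensions of admissible maps on `U` by an arbitrary value in `f u` at the further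
vertex `u`. -/
noncomputable def extensions (N : ι → Finset W) (𝓕 : ι → Finset (Finset α)) (f : W → Finset α)
    (d : W → α) (U : Finset W) (u : W) : Finset (W → α) :=
  {φ ∈ partialMaps f d (insert u U) | IsAdmissibleOn N 𝓕 U φ}

lemma mem_admissibleMaps :
    φ ∈ admissibleMaps N 𝓕 f d U ↔ φ ∈ partialMaps f d U ∧ IsAdmissibleOn N 𝓕 U φ := by
  classical exact mem_filter

lemma mem_extensions : φ ∈ extensions N 𝓕 f d U u ↔
    φ ∈ partialMaps f d (insert u U) ∧ IsAdmissibleOn N 𝓕 U φ := by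
  classical exact mem_filter

lemma mem_admissibleMaps_empty (h : ∀ v, N v = ∅ → ∅ ∉ 𝓕 v) : d ∈ admissibleMaps N 𝓕 f d ∅ := by
  refine mem_admissibleMaps.2 ⟨mem_partialMaps.2 (by simp), by simp, fun v hv => ?_⟩
  have hNv := subset_empty.1 hv
  simpa only [hNv, image_empty] using h v hNv

lemma piecewise_mem_admissibleMaps (hφ : φ ∈ extensions N 𝓕 f d U u) (hVU : V ⊆ U) :
    V.piecewise φ d ∈ admissibleMaps N 𝓕 f d V := by
  rw [mem_extensions] at hφ
  refine mem_admissibleMaps.2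
    ⟨piecewise_mem_partialMaps hφ.1 (hVU.trans (subset_insert u U)), (hφ.2.mono hVU).congr ?_⟩
  exact fun w hw => (piecewise_eq_of_mem _ _ _ hw).symm

lemma card_admissibleMaps_mul_le_card_extensions (hu : u ∉ U) :
    #(admissibleMaps N 𝓕 f d U) * #(f u) ≤ #(extensions N 𝓕 f d U u) := by
  rw [← card_product]
  refine card_le_card_of_injOn (fun p => Function.update p.1 u p.2) ?_ ?_
  · rintro ⟨φ, x⟩ hp
    obtain ⟨hφ, hx⟩ := mem_product.1 hp
    rw [mem_admissibleMaps] at hφ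
    refine mem_extensions.2 ⟨update_mem_partialMaps hφ.1 hx, hφ.2.congr fun w hw => ?_⟩
    exact (Function.update_of_ne (ne_of_mem_of_not_mem hw hu) _ _).symm
  · rintro ⟨φ, x⟩ hp ⟨ψ, y⟩ hq h
    have hφu := (mem_partialMaps.1 (mem_admissibleMaps.1 (mem_product.1 hp).1).1).2 u hu
    have hψu := (mem_partialMaps.1 (mem_admissibleMaps.1 (mem_product.1 hq).1).1).2 u hu
    obtain ⟨hxy, hoff⟩ := Function.update_eq_iff.1 h
    refine Prod.ext (funext fun w => ?_) (by simpa only [Function.update_self] using hxy)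
    obtain rfl | hwu := eq_or_ne w u
    · exact hφu.trans hψu.symm
    · simpa only [Function.update_of_ne hwu] using hoff w hwu

lemma card_extensions_mem_image_le :
    #{φ ∈ extensions N 𝓕 f d U u | φ u ∈ U.image φ} ≤ #(admissibleMaps N 𝓕 f d U) * #U := by
  rw [← card_product]
  refine (card_le_card fun φ hφ => ?_).trans
    (card_image_le (f := fun p : (W → α) × W => Function.update p.1 u (p.1 p.2)))
  obtain ⟨hφ, w, hw, hwu⟩ := by simpa only [mem_filter, mem_image] using hφ
  refine mem_image.2 ⟨(U.piecewise φ d, w),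
    mem_product.2 ⟨piecewise_mem_admissibleMaps hφ subset_rfl, hw⟩,
    Function.update_eq_iff.2 ⟨by simp [hw, hwu], fun z hz => ?_⟩⟩
  by_cases hzU : z ∈ U
  · simp [hzU]
  · have hzd := (mem_partialMaps.1 (mem_extensions.1 hφ).1).2 z (by simp [hz, hzU])
    simp [hzU, hzd]

lemma card_extensions_image_mem_le (hu : u ∉ U) (hNv : N v ⊆ insert u U) (huv : u ∈ N v) :
    #{φ ∈ extensions N 𝓕 f d U u | φ u ∉ U.image φ ∧ (N v).image φ ∈ 𝓕 v} ≤
      #(admissibleMaps N 𝓕 f d (U \ N v)) * ((#(N v)).factorial * #(𝓕 v)) := by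
  classical
  let E := {φ ∈ extensions N 𝓕 f d U u | φ u ∉ U.image φ ∧ (N v).image φ ∈ 𝓕 v}
  let T := E.image fun φ => (N v).piecewise φ d
  have heqOn : ∀ φ : W → α, Set.EqOn φ ((N v).piecewise φ d) (N v) :=
    fun φ w hw => (piecewise_eq_of_mem _ _ _ hw).symm
  have hT : #T ≤ (#(N v)).factorial * #(𝓕 v) := by
    refine card_le_factorial_mul_card_of_image_mem (K := N v) (d := d) ?_ ?_ ?_ <;>
      refine forall_mem_image.2 fun φ hφ => ?_
    · exact fun w hw => piecewise_eq_of_notMem _ _ _ hw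
    · obtain ⟨hφ, hφu, -⟩ := mem_filter.1 hφ
      have hinj := (mem_extensions.1 hφ).2.injOn_insert hu hφu
      exact (hinj.mono (coe_subset.2 hNv)).congr (heqOn φ)
    · rw [← image_congr (heqOn φ)]
      exact (mem_filter.1 hφ).2.2
  refine le_trans ?_ (Nat.mul_le_mul_left _ hT)
  rw [← card_product]
  refine card_le_card_of_injOn (fun φ => ((U \ N v).piecewise φ d, (N v).piecewise φ d)) ?_ ?_
  · intro φ hφ
    exact mem_product.2 ⟨piecewise_mem_admissibleMaps (mem_filter.1 hφ).1 sdiff_subset,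
      mem_image_of_mem _ hφ⟩
  · intro φ hφ ψ hψ h
    obtain ⟨hsdiff, hN⟩ := Prod.ext_iff.1 h
    have hcover : insert u U ⊆ U \ N v ∪ N v := by
      rw [sdiff_union_self_eq_union]
      exact insert_subset (mem_union_right _ huv) subset_union_left
    exact eq_of_piecewise_eq (mem_extensions.1 (mem_filter.1 hφ).1).1
      (mem_extensions.1 (mem_filter.1 hψ).1).1 hcover hsdiff hN

lemma card_admissibleMaps_mul_le {R : W → Finset ι} (hR : ∀ u v, v ∈ R u ↔ u ∈ N v)
    (hu : u ∉ U) :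
    #(admissibleMaps N 𝓕 f d U) * #(f u) ≤
      #(admissibleMaps N 𝓕 f d (insert u U)) + #(admissibleMaps N 𝓕 f d U) * #U +
        ∑ v ∈ R u with N v ⊆ insert u U,
          #(admissibleMaps N 𝓕 f d (U \ N v)) * ((#(N v)).factorial * #(𝓕 v)) := by
  classical
  let E := extensions N 𝓕 f d U u
  let repeating := {φ ∈ E | φ u ∈ U.image φ}
  let violating : ι → Finset (W → α) := fun v =>
    {φ ∈ E | φ u ∉ U.image φ ∧ (N v).image φ ∈ 𝓕 v}
  have hcover : E ⊆ admissibleMaps N 𝓕 f d (insert u U) ∪ repeating ∪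
      {v ∈ R u | N v ⊆ insert u U}.biUnion violating := by
    intro φ hφ
    by_cases hφu : φ u ∈ U.image φ
    · exact mem_union_left _ (mem_union_right _ (mem_filter.2 ⟨hφ, hφu⟩))
    by_cases hviol : ∃ v, u ∈ N v ∧ N v ⊆ insert u U ∧ (N v).image φ ∈ 𝓕 v
    · obtain ⟨v, huv, hNv, hφv⟩ := hviol
      exact mem_union_right _ (mem_biUnion.2
        ⟨v, mem_filter.2 ⟨(hR u v).2 huv, hNv⟩, mem_filter.2 ⟨hφ, hφu, hφv⟩⟩)
    · push Not at hviol
      obtain ⟨hφE, hφU⟩ := mem_extensions.1 hφ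
      exact mem_union_left _ (mem_union_left _
        (mem_admissibleMaps.2 ⟨hφE, hφU.insert hu hφu hviol⟩))
  calc #(admissibleMaps N 𝓕 f d U) * #(f u) ≤ #E := card_admissibleMaps_mul_le_card_extensions hu
    _ ≤ #(admissibleMaps N 𝓕 f d (insert u U)) + #repeating +
          ∑ v ∈ R u with N v ⊆ insert u U, #(violating v) :=
        (card_le_card hcover).trans <| (card_union_le _ _).trans <|
          add_le_add (card_union_le _ _) card_biUnion_le
    _ ≤ _ := by
        refine add_le_add (Nat.add_le_add_left card_extensions_mem_image_le _)
          (sum_le_sum fun v hv => ?_)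
        obtain ⟨hvR, hNv⟩ := mem_filter.1 hv
        exact card_extensions_image_mem_le hu hNv ((hR u v).1 hvR)

end Admissible

section Existence

variable {W ι α : Type*} [Fintype W] [DecidableEq α] {N : ι → Finset W}
  {𝓕 : ι → Finset (Finset α)} {f : W → Finset α}

theorem exists_injective_forall_image_notMem {R : W → Finset ι} (hR : ∀ u v, v ∈ R u ↔ u ∈ N v)
    {β : ℝ} (hβ : 0 < β)
    (hf : ∀ u,
      Fintype.card W + β * (1 + ∑ v ∈ R u, (#(N v)).factorial * #(𝓕 v) / β ^ #(N v)) ≤ #(f u))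
    (hempty : ∀ v, N v = ∅ → ∅ ∉ 𝓕 v) :
    ∃ φ : W → α, Function.Injective φ ∧ (∀ u, φ u ∈ f u) ∧ ∀ v, (N v).image φ ∉ 𝓕 v := by
  classical
  have hne : ∀ u, (f u).Nonempty := fun u => by
    rw [← card_pos, ← Nat.cast_pos (α := ℝ)]
    exact lt_of_lt_of_le (by positivity) (hf u)
  choose d _ using hne
  set g : Finset W → ℝ := fun U => #(admissibleMaps N 𝓕 f d U) with hg
  have hrec : ∀ U, ∀ u ∉ U, (#(f u) - Fintype.card W : ℝ) * g U ≤ g (insert u U) +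
      ∑ v ∈ R u with N v ⊆ insert u U, ((#(N v)).factorial * #(𝓕 v) : ℝ) * g (U \ N v) := by
    intro U u hu
    have hcount : g U * #(f u) ≤ g (insert u U) + g U * #U +
        ∑ v ∈ R u with N v ⊆ insert u U, g (U \ N v) * ((#(N v)).factorial * #(𝓕 v)) := by
      simp only [hg]
      exact_mod_cast card_admissibleMaps_mul_le hR hu
    have hU : g U * #U ≤ g U * Fintype.card W := by gcongr; exact card_le_univ U
    simp only [mul_comm _ (g (_ \ _))]
    linarith
  have hgrow : ∀ U, ∀ u ∉ U, β * g U ≤ g (insert u U) := fun U u hu =>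
    mul_le_insert_of_recurrence hβ (fun _ => by positivity) (fun u v => (hR u v).1)
      (fun _ => by positivity) (fun u => by linarith [hf u]) hrec hu
  have hstart : 0 < g ∅ := Nat.cast_pos.2 (card_pos.2 ⟨d, mem_admissibleMaps_empty hempty⟩)
  have hpos : 0 < g univ :=
    (mul_pos (pow_pos hβ _) hstart).trans_le
      (pow_card_sdiff_mul_le hβ.le (empty_subset univ) fun V _ => hgrow V)
  obtain ⟨φ, hφ⟩ := card_pos.1 (Nat.cast_pos.1 hpos)
  obtain ⟨hφf, hφadm⟩ := mem_admissibleMaps.1 hφ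
  refine ⟨φ, Set.injOn_univ.1 (by simpa using hφadm.injOn), fun u => ?_,
    fun v => hφadm.image_notMem v (subset_univ _)⟩
  exact (mem_partialMaps.1 hφf).1 u (mem_univ u)

theorem exists_injective_of_degree_le {R : W → Finset ι} (hR : ∀ u v, v ∈ R u ↔ u ∈ N v)
    {Δ : ℕ} (hΔ : 1 ≤ Δ) (hRcard : ∀ u, #(R u) ≤ Δ) {β : ℝ} (hβ : 0 < β)
    (h𝓕 : ∀ v, (#(N v)).factorial * #(𝓕 v) / β ^ #(N v) ≤ 1 / (4 * Δ))
    (hf : ∀ u, Fintype.card W + β * (5 / 4) ≤ #(f u)) :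
    ∃ φ : W → α, Function.Injective φ ∧ (∀ u, φ u ∈ f u) ∧ ∀ v, (N v).image φ ∉ 𝓕 v := by
  have hΔ' : (1 : ℝ) ≤ Δ := mod_cast hΔ
  refine exists_injective_forall_image_notMem hR hβ (fun u => le_trans ?_ (hf u)) ?_
  · have hsum : ∑ v ∈ R u, (#(N v)).factorial * #(𝓕 v) / β ^ #(N v) ≤ 1 / 4 :=
      calc ∑ v ∈ R u, (#(N v)).factorial * #(𝓕 v) / β ^ #(N v) ≤ #(R u) • (1 / (4 * Δ) : ℝ) :=
            sum_le_card_nsmul _ _ _ fun v _ => h𝓕 v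
        _ ≤ Δ * (1 / (4 * Δ)) := by rw [nsmul_eq_mul]; gcongr; exact hRcard u
        _ = 1 / 4 := by field_simp
    gcongr
    linarith
  · intro v hNv hmem
    have hone : (1 : ℝ) ≤ #(𝓕 v) := mod_cast card_pos.2 ⟨∅, hmem⟩
    have hlt : 1 / (4 * (Δ : ℝ)) < 1 := by
      rw [div_lt_one (by positivity)]
      linarith
    have hle : (#(𝓕 v) : ℝ) ≤ 1 / (4 * Δ) := by simpa [hNv] using h𝓕 v
    linarith

end Existence

lemma factorial_mul_choose_mul_div_pow_le (a k : ℕ) {x : ℝ} (hx : 0 ≤ x) :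
    (k.factorial : ℝ) * ((x / a) ^ k * a.choose k) ≤ x ^ k := by
  calc (k.factorial : ℝ) * ((x / a) ^ k * a.choose k) = (x / a) ^ k * a.descFactorial k := by
        rw [Nat.descFactorial_eq_factorial_mul_choose]; push_cast; ring
    _ ≤ (x / a) ^ k * (a : ℝ) ^ k := by gcongr; exact mod_cast Nat.descFactorial_le_pow a k
    _ = (x / a * a) ^ k := (mul_pow _ _ _).symm
    _ ≤ x ^ k := by
        rw [div_mul_comm]
        gcongr
        exact mul_le_of_le_one_left hx (div_self_le_one _)

lemma factorial_mul_div_pow_le {a k m : ℕ} {x ε : ℝ} (hx : 0 < x) (hε : 0 ≤ ε)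
    (hm : m ≤ ε * (x / a) ^ k * a.choose k) : k.factorial * m / x ^ k ≤ ε := by
  rw [div_le_iff₀ (by positivity)]
  calc (k.factorial * m : ℝ) ≤ k.factorial * (ε * (x / a) ^ k * a.choose k) := by gcongr
    _ = ε * (k.factorial * ((x / a) ^ k * a.choose k)) := by ring
    _ ≤ ε * x ^ k := by gcongr; exact factorial_mul_choose_mul_div_pow_le a k hx.le

open scoped Classical in
lemma ncard_sep_card_eq {α : Type*} {A : Finset α} {F : Set (Finset α)} (hF : ∀ S ∈ F, S ⊆ A)
    (k : ℕ) : {S ∈ F | #S = k}.ncard = #{S ∈ A.powersetCard k | S ∈ F} := by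
  rw [← Set.ncard_coe_finset]
  congr 1
  ext S
  simp only [Set.mem_ofPred_eq, coe_filter, mem_powersetCard]
  exact ⟨fun h => ⟨⟨hF S h.1, h.2⟩, h.1⟩, fun h => ⟨h.2, h.1.2⟩⟩

lemma two_rpow_neg_half_le : (2 : ℝ) ^ (-(1 : ℝ) / 2) ≤ 31 / 40 := by
  have hpos : 0 < (2 : ℝ) ^ (-(1 : ℝ) / 2) := by positivity
  have hsq : (2 : ℝ) ^ (-(1 : ℝ) / 2) * (2 : ℝ) ^ (-(1 : ℝ) / 2) = 1 / 2 := by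
    rw [← Real.rpow_add two_pos]
    norm_num
  nlinarith

lemma encard_setOf_adj {W₁ W₂ : Type*} [Fintype W₂] (Adj : W₁ → W₂ → Prop)
    [∀ u v, Decidable (Adj u v)] (u : W₁) : {v | Adj u v}.encard = #(rightNbhd Adj u) := by
  rw [← Set.encard_coe_eq_coe_finsetCard, rightNbhd, coe_filter_univ]

end ForwardStep

open Finset ForwardStep in
theorem forward_step_general {W₁ W₂ α : Type*} [Fintype W₁] [DecidableEq α]
    (Adj : W₁ → W₂ → Prop) [∀ u v, Decidable (Adj u v)]
    (Δ : ℕ) (hΔ : 1 ≤ Δ) (hdeg : ∀ u, {v | Adj u v}.encard ≤ Δ)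
    (b : ℕ) (hb : 0 < b) (hbW : 32 * Fintype.card W₁ ≤ b)
    (A : Finset α) (F : W₂ → Set (Finset α)) (hFsub : ∀ v, ∀ S ∈ F v, S ⊆ A)
    (hFdens : ∀ v, (Set.ncard {S ∈ F v | #S = #(leftNbhd Adj v)} : ℝ) ≤
      1 / (4 * Δ) * ((2 : ℝ) ^ (-(1 : ℝ) / 2) * b / #A) ^ #(leftNbhd Adj v) *
        ((#A).choose #(leftNbhd Adj v) : ℕ))
    (f : W₁ → Finset α) (hfcard : ∀ u, b ≤ #(f u)) :
    ∃ φ : W₁ → α, Function.Injective φ ∧ (∀ u, φ u ∈ f u) ∧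
      ∀ v, (leftNbhd Adj v).image φ ∉ F v := by
  classical
  set 𝓕 : W₂ → Finset (Finset α) := fun v => {S ∈ A.powersetCard #(leftNbhd Adj v) | S ∈ F v}
  have hfin : ∀ u, {v | Adj u v}.Finite := fun u => Set.finite_of_encard_le_coe (hdeg u)
  have hβ : 0 < (2 : ℝ) ^ (-(1 : ℝ) / 2) * b := by positivity
  have hf : ∀ u, Fintype.card W₁ + (2 : ℝ) ^ (-(1 : ℝ) / 2) * b * (5 / 4) ≤ #(f u) := fun u => by
    have hβb := mul_le_mul_of_nonneg_right two_rpow_neg_half_le b.cast_nonneg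
    have hW : (32 * Fintype.card W₁ : ℝ) ≤ b := mod_cast hbW
    have hfu : (b : ℝ) ≤ #(f u) := mod_cast hfcard u
    linarith
  obtain ⟨φ, hinj, hφf, hφ⟩ := exists_injective_of_degree_le (N := leftNbhd Adj) (𝓕 := 𝓕)
    (R := fun u => (hfin u).toFinset) (by simp [leftNbhd]) hΔ
    (fun u => by simpa only [(hfin u).encard_eq_coe_toFinset_card, Nat.cast_le] using hdeg u) hβ
    (fun v => factorial_mul_div_pow_le hβ (by positivity)
      (by simpa only [ncard_sep_card_eq (hFsub v)] using hFdens v)) hf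
  refine ⟨φ, hinj, hφf, fun v hv => hφ v (mem_filter.2 ⟨mem_powersetCard.2 ⟨?_, ?_⟩, hv⟩)⟩
  · exact hFsub v _ hv
  · exact card_image_of_injective _ hinj

/-- (Embedding step via the local lemma.) -/
theorem forward_step {W₁ W₂ α : Type} [Fintype W₁] [Fintype W₂] [DecidableEq W₁]
    [DecidableEq α]
    (Adj : W₁ → W₂ → Prop) [∀ u v, Decidable (Adj u v)]
    (Δp Δm : ℕ) (hΔp : 1 ≤ Δp) (hΔm : 1 ≤ Δm)
    (hdeg₁ : ∀ u : W₁, (rightNbhd Adj u).card ≤ Δp)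
    (hdeg₂ : ∀ v : W₂, (leftNbhd Adj v).card ≤ Δm)
    (a b : ℕ) (hb : 0 < b) (hba : b ≤ a) (hbW : 32 * Fintype.card W₁ ≤ b)
    (A : Finset α) (hA : A.card = a)
    (F : W₂ → Set (Finset α)) (hFsub : ∀ v : W₂, ∀ S ∈ F v, S ⊆ A)
    (hFdens : ∀ v : W₂,
      (Set.ncard {S ∈ F v | S.card = (leftNbhd Adj v).card} : ℝ) ≤
        1 / (4 * Δp * Δm) * ((2 : ℝ) ^ (-(1 : ℝ) / 2) * b / a) ^ (leftNbhd Adj v).card *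
          (a.choose (leftNbhd Adj v).card : ℕ))
    (f : W₁ → Finset α) (hfsub : ∀ u : W₁, f u ⊆ A) (hfcard : ∀ u : W₁, b ≤ (f u).card) :
    ∃ φ : W₁ → α, Function.Injective φ ∧ (∀ u : W₁, φ u ∈ f u) ∧
      ∀ v : W₂, (leftNbhd Adj v).image φ ∉ F v := by
  subst hA
  refine forward_step_general Adj Δp hΔp (fun u => ?_) b hb hbW A F hFsub
    (fun v => (hFdens v).trans ?_) f hfcard
  · rw [ForwardStep.encard_setOf_adj]
    exact_mod_cast hdeg₁ u
  · have hΔ : 1 / (4 * Δp * Δm : ℝ) ≤ 1 / (4 * Δp) :=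
      one_div_le_one_div_of_le (by positivity)
        (le_mul_of_one_le_right (by positivity) (mod_cast hΔm))
    gcongr
end
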